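/- Fix a positive integer m, an integer s with gcd(s, m) = 1, and B > 0. There exist constants C > 0 and C' > 0 such that for all real x ≥ 2, all positive integers q ≤ (log x)^B, and all integers r with gcd(r, q) = 1, writing d = gcd(q, m) and q₀ = q/d: |ϑ_s(x; q, r) − δ·x/φ(q₀m)| ≤ C'·x·exp(−C·(log x)^{1/2}), where δ = 1 if r ≡ s (mod d) and δ = 0 otherwise. -/

import Mathlib

/-- `ϑ_s(x; q, r) = ∑_{p ≤ x, p prime, p ≡ r (mod q), p ≡ s (mod m)} log p`. -/
noncomputable def thetaSum (m : ℕ) (s : ℤ) (x : ℝ) (q : ℕ) (r : ℤ) : ℝ :=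
  ∑ p ∈ (Finset.range (⌊x⌋₊ + 1)).filter
      (fun p => Nat.Prime p ∧ (p : ℤ) ≡ r [ZMOD (q : ℤ)] ∧ (p : ℤ) ≡ s [ZMOD (m : ℤ)]),
    Real.log p

namespace SW
open Complex Metric Set

/-- logarithmic derivative bound on a zero-free disc -/
lemma logDeriv_bound {f : ℂ → ℂ} (hf : Differentiable ℂ f) {c : ℂ} {R A : ℝ} (hR : 0 < R)
    (hA : ∀ z ∈ ball c R, ‖f z‖ ≤ A) (hne : ∀ z ∈ ball c R, f z ≠ 0)
    (z : ℂ) (hz : ‖z - c‖ ≤ 3 / 4 * R) :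
    ‖deriv f z / f z‖ ≤ 126 * Real.log (A / ‖f c‖) / R := by
  have hc : c ∈ ball c R := mem_ball_self hR
  have hfc := hne c hc
  have hfc' : 0 < ‖f c‖ := norm_pos_iff.mpr hfc
  have hdf : Differentiable ℂ (deriv f) := hf.deriv
  obtain ⟨F, hF0, hF⟩ := (DifferentiableOn.isExactOn_ball (f := fun z => deriv f z / f z)
    (c := c) (r := R) (fun z hz => ((hdf z).div (hf z) (hne z hz)).differentiableWithinAt)).with_val_at c 0
  have hexp : ∀ z ∈ ball c R, f z = f c * Complex.exp (F z) := by
    have hd : ∀ z ∈ ball c R, HasDerivAt (fun z => f z * Complex.exp (-F z)) 0 z := by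
      intro z hz
      have h1 := (hf z).hasDerivAt.mul ((hF z hz).neg.cexp)
      have := hne z hz
      have h2 : deriv f z * cexp ((-F) z) + f z * (cexp ((-F) z) * -(deriv f z / f z)) = 0 := by
        generalize cexp ((-F) z) = w
        field_simp
        ring
      rw [h2] at h1
      exact h1
    have hconst : ∀ z ∈ ball c R, f z * Complex.exp (-F z) = f c * Complex.exp (-F c) := by
      intro z hz
      exact (convex_ball c R).is_const_of_fderivWithin_eq_zero (𝕜 := ℂ)
        (fun w hw => (hd w hw).differentiableAt.differentiableWithinAt)
        (fun w hw => by
          rw [fderivWithin_of_isOpen isOpen_ball hw]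
          ext; simp [(hd w hw).deriv]) hz hc
    intro z hz
    have := hconst z hz
    rw [hF0, neg_zero, Complex.exp_zero, mul_one] at this
    rw [← this, mul_assoc, ← Complex.exp_add]; simp
  have hmain : ∀ M : ℝ, Real.log (A / ‖f c‖) < M → ‖deriv f z / f z‖ ≤ 126 * M / R := by
    intro M hM
    have hAc : ‖f c‖ ≤ A := hA c hc
    have hM0 : 0 < M := lt_of_le_of_lt (Real.log_nonneg (by rw [le_div_iff₀ hfc']; linarith)) hM
    have hre : ∀ w ∈ ball c R, (F w).re ≤ M := by
      intro w hw
      have h1 := hA w hw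
      rw [hexp w hw, norm_mul, Complex.norm_exp] at h1
      have h2 : Real.exp (F w).re ≤ A / ‖f c‖ := by rw [le_div_iff₀ hfc']; linarith
      have h3 := Real.log_le_log (Real.exp_pos _) h2
      rw [Real.log_exp] at h3; linarith
    have hbd : ∀ w ∈ ball c (7 / 8 * R), ‖F w‖ ≤ 14 * M := by
      intro w hw
      have hw' : ‖w - c‖ < 7 / 8 * R := by simpa [dist_eq_norm] using hw
      have := borelCaratheodory_zero (f := fun u => F (c + u)) (M := M) (R := R) (z := w - c) hM0
        (fun u hu => by
          have hmem : c + u ∈ ball c R := by simpa [dist_eq_norm] using hu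
          exact ((hF _ hmem).differentiableAt.comp u (by fun_prop)).differentiableWithinAt)
        (fun u hu => by
          have hmem : c + u ∈ ball c R := by simpa [dist_eq_norm] using hu
          exact hre _ hmem) hR (by simp; linarith) (by simpa using hF0)
      simp only [add_sub_cancel] at this
      refine this.trans ?_
      rw [div_le_iff₀ (by linarith)]
      nlinarith
    have hsub : closedBall z (R / 9) ⊆ ball c (7 / 8 * R) := by
      intro w hw
      simp only [mem_closedBall, mem_ball, dist_eq_norm] at *
      calc ‖w - c‖ = ‖(w - z) + (z - c)‖ := by ring_nf
        _ ≤ _ := norm_add_le _ _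
        _ < _ := by linarith
    have hzc : z ∈ ball c R := by simp [dist_eq_norm]; linarith
    have hcau := Complex.norm_deriv_le_of_forall_mem_sphere_norm_le (c := z) (R := R / 9) (C := 14 * M)
      (f := F) (by positivity) (by
        refine DifferentiableOn.diffContOnCl ?_
        rw [closure_ball _ (by positivity)]
        intro w hw
        have : w ∈ ball c R := ball_subset_ball (by linarith) (hsub hw)
        exact (hF w this).differentiableAt.differentiableWithinAt)
      (fun w hw => hbd w (hsub (sphere_subset_closedBall hw)))
    rw [(hF z hzc).deriv] at hcau
    refine hcau.trans (le_of_eq ?_)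
    field_simp
    norm_num
  by_contra hcon
  push Not at hcon
  rw [div_lt_iff₀ hR] at hcon
  have h1 : Real.log (A / ‖f c‖) < ‖deriv f z / f z‖ * R / 126 := by linarith
  obtain ⟨M, hM1, hM2⟩ := exists_between h1
  have := hmain M hM1
  rw [le_div_iff₀ hR] at this
  linarith

/-- dividing out a zero by a Blaschke factor -/
lemma blaschke_step {f : ℂ → ℂ} (hf : Differentiable ℂ f) {R A : ℝ} (hR : 0 < R)
    (hA : ∀ z ∈ closedBall (0 : ℂ) R, ‖f z‖ ≤ A) (h0 : f 0 ≠ 0)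
    {ρ : ℂ} (hρ : ‖ρ‖ ≤ R / 2) (hfρ : f ρ = 0) :
    ∃ g : ℂ → ℂ, Differentiable ℂ g ∧ (∀ z ∈ closedBall (0 : ℂ) R, ‖g z‖ ≤ A) ∧ 2 * ‖f 0‖ ≤ ‖g 0‖ ∧
      (∀ z ∈ ball (0 : ℂ) R, g z = 0 → f z = 0) ∧ (∀ z, z ≠ ρ → f z = 0 → g z = 0) ∧
      (deriv f 0 / f 0).re = (deriv g 0 / g 0).re + (-ρ.re) / ‖ρ‖ ^ 2 * (1 - ‖ρ‖ ^ 2 / R ^ 2) := by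
  have hρ0 : ρ ≠ 0 := by rintro rfl; exact h0 hfρ
  have hρ0' : 0 < ‖ρ‖ := norm_pos_iff.mpr hρ0
  have hRC : (R : ℂ) ≠ 0 := by exact_mod_cast hR.ne'
  set d := dslope f ρ with hd
  have hdd : Differentiable ℂ d := by
    rw [← differentiableOn_univ]
    exact (Complex.differentiableOn_dslope Filter.univ_mem).mpr hf.differentiableOn
  have hfd : ∀ z, f z = (z - ρ) * d z := by
    intro z
    have := sub_smul_dslope f ρ z
    rw [hfρ, sub_zero, smul_eq_mul] at this
    exact this.symm
  set b : ℂ → ℂ := fun z => (R ^ 2 - (starRingEnd ℂ) ρ * z) / R with hb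
  have hbd : Differentiable ℂ b := by rw [hb]; fun_prop
  have hgd : Differentiable ℂ (fun z => d z * b z) := hdd.mul hbd
  have hsph : ∀ z ∈ sphere (0 : ℂ) R, ‖d z * b z‖ ≤ A := by
    intro z hz
    have hz' : ‖z‖ = R := by simpa using hz
    have hbz : ‖b z‖ = ‖z - ρ‖ := by
      have h1 : (R : ℂ) ^ 2 = (starRingEnd ℂ) z * z := by
        rw [← Complex.normSq_eq_conj_mul_self, Complex.normSq_eq_norm_sq, hz']; push_cast; rfl
      simp only [hb]
      rw [h1, ← sub_mul, norm_div, norm_mul, ← map_sub, Complex.norm_conj, hz', Complex.norm_real,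
        Real.norm_eq_abs, abs_of_pos hR]
      field_simp
    rw [norm_mul, hbz, mul_comm, ← norm_mul, ← hfd]
    exact hA z (sphere_subset_closedBall hz)
  refine ⟨fun z => d z * b z, hgd, ?_, ?_, ?_, ?_, ?_⟩
  · intro z hz
    refine Complex.norm_le_of_forall_mem_frontier_norm_le (U := ball (0 : ℂ) R) isBounded_ball
      hgd.diffContOnCl ?_ ?_
    · rw [frontier_ball _ hR.ne']; exact hsph
    · rw [closure_ball _ hR.ne']; exact hz
  · rw [hfd 0, norm_mul, norm_mul]
    have : ‖b 0‖ = R := by simp [hb, pow_two, abs_of_pos hR]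
    rw [this, zero_sub, norm_neg]
    nlinarith [norm_nonneg (d 0)]
  · intro z hz h
    rcases mul_eq_zero.mp h with h | h
    · rw [hfd, h, mul_zero]
    · exfalso
      simp only [hb, div_eq_zero_iff, hRC, or_false, sub_eq_zero] at h
      have h2 := congrArg norm h
      rw [norm_mul, Complex.norm_conj, norm_pow, Complex.norm_real, Real.norm_eq_abs, abs_of_pos hR] at h2
      have : ‖z‖ < R := by simpa using hz
      nlinarith [norm_nonneg z]
  · intro z hz h
    rw [hfd] at h
    rcases mul_eq_zero.mp h with h | h
    · exact absurd (sub_eq_zero.mp h) hz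
    · simp [h]
  · have hd0 : d 0 ≠ 0 := by intro h; apply h0; rw [hfd, h, mul_zero]
    have hb0 : b 0 = R := by simp [hb]; field_simp
    have e1 : deriv f 0 = d 0 + (0 - ρ) * deriv d 0 := by
      have : f = fun z => (z - ρ) * d z := funext hfd
      rw [this]
      have h := ((hasDerivAt_id (0:ℂ)).sub_const ρ).mul (hdd 0).hasDerivAt
      rw [one_mul] at h
      exact h.deriv
    have e2 : deriv (fun z => d z * b z) 0 = deriv d 0 * R + d 0 * (-(starRingEnd ℂ) ρ / R) := by
      have hb' : HasDerivAt b (-(starRingEnd ℂ) ρ / R) 0 := by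
        have := (((hasDerivAt_id (0:ℂ)).const_mul ((starRingEnd ℂ) ρ)).const_sub ((R:ℂ) ^ 2)).div_const (R : ℂ)
        simpa using this
      have h := (hdd 0).hasDerivAt.mul hb'
      rw [hb0] at h
      exact h.deriv
    have e3 : deriv f 0 / f 0 = deriv (fun z => d z * b z) 0 / (d 0 * b 0)
        + (-(1 / ρ) + (starRingEnd ℂ) ρ / R ^ 2) := by
      rw [e1, e2, hb0, hfd 0]
      field_simp
      ring
    rw [e3, Complex.add_re]
    congr 1
    rw [Complex.add_re, Complex.neg_re, one_div, Complex.inv_re, Complex.normSq_eq_norm_sq]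
    have : ((starRingEnd ℂ) ρ / (R : ℂ) ^ 2).re = ρ.re / R ^ 2 := by
      rw [← Complex.ofReal_pow, Complex.div_ofReal_re, Complex.conj_re]
    rw [this]
    field_simp
    ring

/-- one-sided bound -/
lemma re_logDeriv_ge {R A : ℝ} (hR : 0 < R) (n : ℕ) : ∀ {f : ℂ → ℂ}, Differentiable ℂ f →
    (∀ z ∈ closedBall (0 : ℂ) R, ‖f z‖ ≤ A) → f 0 ≠ 0 →
    (∀ z ∈ ball (0 : ℂ) R, f z = 0 → z.re ≤ 0) → A < 2 ^ n * ‖f 0‖ →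
    -(252 * Real.log (A / ‖f 0‖) / R) ≤ (deriv f 0 / f 0).re := by
  induction n with
  | zero =>
    intro f hf hA h0 hre h
    have := hA 0 (by simp [hR.le])
    simp at h; linarith
  | succ n ih =>
    intro f hf hA h0 hre h
    have hf0 : 0 < ‖f 0‖ := norm_pos_iff.mpr h0
    have hA0 := hA 0 (by simp [hR.le])
    by_cases hz : ∃ ρ : ℂ, ‖ρ‖ ≤ R / 2 ∧ f ρ = 0
    · obtain ⟨ρ, hρ, hfρ⟩ := hz
      obtain ⟨g, hg1, hg2, hg3, hg4, -, hg6⟩ := blaschke_step hf hR hA h0 hρ hfρ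
      have hg0 : 0 < ‖g 0‖ := by linarith
      have := ih hg1 hg2 (norm_pos_iff.mp hg0) (fun z hz h => hre z hz (hg4 z hz h))
        (by rw [pow_succ] at h; nlinarith [pow_pos (two_pos : (0:ℝ) < 2) n])
      rw [hg6]
      have hρre := hre ρ (by simp; linarith) hfρ
      have h1 : 0 ≤ (-ρ.re) / ‖ρ‖ ^ 2 * (1 - ‖ρ‖ ^ 2 / R ^ 2) := by
        apply mul_nonneg (div_nonneg (by linarith) (by positivity))
        rw [sub_nonneg, div_le_one (by positivity)]
        gcongr; linarith
      have h2 : Real.log (A / ‖g 0‖) ≤ Real.log (A / ‖f 0‖) := by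
        apply Real.log_le_log (div_pos (by linarith) hg0)
        gcongr
        · linarith
        · linarith
      have h3 : 252 * Real.log (A / ‖g 0‖) / R ≤ 252 * Real.log (A / ‖f 0‖) / R := by gcongr
      linarith
    · push Not at hz
      have := logDeriv_bound hf (c := 0) (R := R / 2) (A := A) (by positivity)
        (fun z hz => hA z (by simp at hz ⊢; linarith))
        (fun z hz' => hz z (by simp at hz'; linarith)) 0 (by simp; positivity)
      have h2 := (abs_le.mp ((Complex.abs_re_le_norm _).trans this)).1
      have h3 : 126 * Real.log (A / ‖f 0‖) / (R / 2) = 252 * Real.log (A / ‖f 0‖) / R := by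
        field_simp; ring
      linarith

/-- contribution of a zero -/
noncomputable def zc (R : ℝ) (c ρ : ℂ) : ℝ :=
  (c.re - ρ.re) / ‖ρ - c‖ ^ 2 * (1 - ‖ρ - c‖ ^ 2 / R ^ 2)

lemma re_logDeriv_ge' {R A : ℝ} (hR : 0 < R) {f : ℂ → ℂ} (hf : Differentiable ℂ f)
    (hA : ∀ z ∈ closedBall (0 : ℂ) R, ‖f z‖ ≤ A) (h0 : f 0 ≠ 0)
    (hre : ∀ z ∈ ball (0 : ℂ) R, f z = 0 → z.re ≤ 0) :
    -(252 * Real.log (A / ‖f 0‖) / R) ≤ (deriv f 0 / f 0).re := by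
  have hf0 : 0 < ‖f 0‖ := norm_pos_iff.mpr h0
  obtain ⟨n, hn⟩ := pow_unbounded_of_one_lt (A / ‖f 0‖) (one_lt_two)
  exact re_logDeriv_ge hR n hf hA h0 hre (by rwa [div_lt_iff₀ hf0] at hn)

lemma re_logDeriv_ge_zeros {R A : ℝ} (hR : 0 < R) (S : Finset ℂ) :
    ∀ {f : ℂ → ℂ}, Differentiable ℂ f →
    (∀ z ∈ closedBall (0 : ℂ) R, ‖f z‖ ≤ A) → f 0 ≠ 0 →
    (∀ z ∈ ball (0 : ℂ) R, f z = 0 → z.re ≤ 0) →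
    (∀ ρ ∈ S, ‖ρ‖ ≤ R / 2 ∧ f ρ = 0) →
    -(252 * Real.log (A / ‖f 0‖) / R) + ∑ ρ ∈ S, zc R 0 ρ ≤ (deriv f 0 / f 0).re := by
  induction S using Finset.induction_on with
  | empty => intro f hf hA h0 hre _; simpa using re_logDeriv_ge' hR hf hA h0 hre
  | insert ρ S hρS ih =>
    intro f hf hA h0 hre hS
    have hf0 : 0 < ‖f 0‖ := norm_pos_iff.mpr h0
    have hA0 := hA 0 (by simp [hR.le])
    obtain ⟨hρ, hfρ⟩ := hS ρ (by simp)
    obtain ⟨g, hg1, hg2, hg3, hg4, hg5, hg6⟩ := blaschke_step hf hR hA h0 hρ hfρ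
    have hg0 : 0 < ‖g 0‖ := by linarith
    have := ih hg1 hg2 (norm_pos_iff.mp hg0) (fun z hz h => hre z hz (hg4 z hz h))
      (fun ρ' hρ' => ⟨(hS ρ' (by simp [hρ'])).1, hg5 ρ' (by rintro rfl; exact hρS hρ')
        (hS ρ' (by simp [hρ'])).2⟩)
    rw [Finset.sum_insert hρS]
    have e : zc R 0 ρ = (-ρ.re) / ‖ρ‖ ^ 2 * (1 - ‖ρ‖ ^ 2 / R ^ 2) := by simp [zc]
    rw [hg6, e]
    have h2 : Real.log (A / ‖g 0‖) ≤ Real.log (A / ‖f 0‖) := by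
      apply Real.log_le_log (div_pos (by linarith) hg0)
      gcongr
      · linarith
      · linarith
    have h3 : 252 * Real.log (A / ‖g 0‖) / R ≤ 252 * Real.log (A / ‖f 0‖) / R := by gcongr
    linarith

lemma re_logDeriv_ge_center {R A : ℝ} (hR : 0 < R) (S : Finset ℂ) (c : ℂ)
    {f : ℂ → ℂ} (hf : Differentiable ℂ f)
    (hA : ∀ z ∈ closedBall c R, ‖f z‖ ≤ A) (h0 : f c ≠ 0)
    (hre : ∀ z ∈ ball c R, f z = 0 → z.re ≤ c.re)
    (hS : ∀ ρ ∈ S, ‖ρ - c‖ ≤ R / 2 ∧ f ρ = 0) :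
    -(252 * Real.log (A / ‖f c‖) / R) + ∑ ρ ∈ S, zc R c ρ ≤ (deriv f c / f c).re := by
  classical
  have h := re_logDeriv_ge_zeros (A := A) hR (S.image (fun ρ => ρ - c)) (f := fun z => f (z + c))
    (hf.comp (by fun_prop)) (fun z hz => hA _ (by simpa [dist_eq_norm] using hz)) (by simpa using h0)
    (fun z hz h => by
      have := hre (z + c) (by simpa [dist_eq_norm] using hz) h
      simpa using this)
    (by
      intro ρ hρ
      obtain ⟨ρ', h1, rfl⟩ := Finset.mem_image.mp hρ
      simpa using hS ρ' h1)
  rw [Finset.sum_image (by intro a _ b _ h; simpa using h)] at h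
  have e : ∀ ρ, zc R 0 (ρ - c) = zc R c ρ := by intro ρ; simp [zc]
  simpa [e, deriv_comp_add_const] using h

end SW

namespace SW
open Complex Metric Set MeasureTheory Filter Topology DirichletCharacter

/-- the Mellin-type integral -/
noncomputable def MI (E : ℝ → ℂ) (s : ℂ) : ℂ := ∫ t in Ioi (1 : ℝ), E t * (t : ℂ) ^ (-(s + 1))

lemma norm_MI_integrand {E : ℝ → ℂ} {K : ℝ} (hK : ∀ t, 1 < t → ‖E t‖ ≤ K) (s : ℂ) {t : ℝ}
    (ht : t ∈ Ioi (1 : ℝ)) : ‖E t * (t : ℂ) ^ (-(s + 1))‖ ≤ K * t ^ (-s.re - 1) := by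
  have ht0 : (0 : ℝ) < t := zero_lt_one.trans ht
  rw [norm_mul, Complex.norm_cpow_eq_rpow_re_of_pos ht0]
  simp only [neg_add_rev, add_re, neg_re, one_re]
  rw [show (-1 : ℝ) + -s.re = -s.re - 1 by ring]
  exact mul_le_mul_of_nonneg_right (hK t ht) (by positivity)

lemma norm_MI_le {E : ℝ → ℂ} {K : ℝ} (hK : ∀ t, 1 < t → ‖E t‖ ≤ K) {s : ℂ} (hs : 0 < s.re) :
    ‖MI E s‖ ≤ K / s.re := by
  have h1 : IntegrableOn (fun t : ℝ => K * t ^ (-s.re - 1)) (Ioi 1) :=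
    (integrableOn_Ioi_rpow_of_lt (by linarith) one_pos).const_mul K
  have h2 := MeasureTheory.norm_integral_le_of_norm_le h1
    ((ae_restrict_iff' measurableSet_Ioi).mpr (ae_of_all _ fun t ht => norm_MI_integrand hK s ht))
  refine h2.trans (le_of_eq ?_)
  rw [integral_const_mul, integral_Ioi_rpow_of_lt (by linarith) one_pos]
  simp
  ring_nf

lemma integrableOn_MI {E : ℝ → ℂ} {K : ℝ} (hE : Measurable E) (hK : ∀ t, 1 < t → ‖E t‖ ≤ K)
    {s : ℂ} (hs : 0 < s.re) :
    IntegrableOn (fun t : ℝ => E t * (t : ℂ) ^ (-(s + 1))) (Ioi 1) := by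
  have h1 : IntegrableOn (fun t : ℝ => K * t ^ (-s.re - 1)) (Ioi 1) :=
    (integrableOn_Ioi_rpow_of_lt (by linarith) one_pos).const_mul K
  refine Integrable.mono' h1 ?_
    ((ae_restrict_iff' measurableSet_Ioi).mpr (ae_of_all _ fun t ht => norm_MI_integrand hK s ht))
  exact (hE.mul (by fun_prop)).aestronglyMeasurable

lemma differentiableAt_MI {E : ℝ → ℂ} {K : ℝ} (hE : Measurable E) (hK : ∀ t, 1 < t → ‖E t‖ ≤ K)
    {s : ℂ} (hs : 0 < s.re) : DifferentiableAt ℂ (MI E) s := by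
  set f : ℝ → ℂ := (Ioi (1 : ℝ)).indicator E with hf
  have hK0 : 0 ≤ K := (norm_nonneg _).trans (hK 2 (by norm_num))
  have hfb : ∀ t, ‖f t‖ ≤ K := by
    intro t
    by_cases ht : t ∈ Ioi (1 : ℝ)
    · rw [hf, indicator_of_mem ht]; exact hK t ht
    · rw [hf, indicator_of_notMem ht]; simpa
  have hfm : Measurable f := hE.indicator measurableSet_Ioi
  have heq : MI E = fun s => mellin f (-s) := by
    ext s
    rw [MI, mellin, ← integral_indicator measurableSet_Ioi, ← integral_indicator measurableSet_Ioi]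
    congr 1
    ext t
    by_cases ht : t ∈ Ioi (1 : ℝ)
    · have ht0 : t ∈ Ioi (0 : ℝ) := by
        simp only [mem_Ioi] at ht ⊢; linarith
      rw [indicator_of_mem ht, indicator_of_mem ht0, hf, indicator_of_mem ht, smul_eq_mul, mul_comm,
        neg_add']
    · rw [indicator_of_notMem ht]
      by_cases ht0 : t ∈ Ioi (0 : ℝ)
      · rw [indicator_of_mem ht0, hf, indicator_of_notMem ht, smul_zero]
      · rw [indicator_of_notMem ht0]
  rw [heq]
  have hm : DifferentiableAt ℂ (mellin f) (-s) := by
    refine mellin_differentiableAt_of_isBigO_rpow (a := 0) (b := -s.re - 1) ?_ ?_ (by simpa) ?_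
      (by simp)
    · apply LocallyIntegrable.locallyIntegrableOn
      intro x
      refine ⟨Icc (x - 1) (x + 1), Icc_mem_nhds (by linarith) (by linarith), ?_⟩
      exact Measure.integrableOn_of_bounded (M := K) (by simp) hfm.aestronglyMeasurable
        (ae_of_all _ hfb)
    · refine Asymptotics.IsBigO.of_bound K (Eventually.of_forall fun t => ?_)
      simpa using hfb t
    · have : f =ᶠ[𝓝[>] 0] fun _ => 0 := by
        filter_upwards [mem_nhdsWithin_of_mem_nhds (Iio_mem_nhds one_pos)] with t ht
        rw [hf, indicator_of_notMem]
        simpa using ht.le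
      exact this.trans_isBigO (Asymptotics.isBigO_zero _ _)
  exact hm.comp s differentiableAt_id.neg

/-- identity theorem on the half plane -/
lemma eq_of_eq_half {f g : ℂ → ℂ} (hf : ∀ s : ℂ, 0 < s.re → DifferentiableAt ℂ f s)
    (hg : ∀ s : ℂ, 0 < s.re → DifferentiableAt ℂ g s) (h : ∀ s : ℂ, 1 < s.re → f s = g s)
    {s : ℂ} (hs : 0 < s.re) : f s = g s := by
  have hU : IsOpen {s : ℂ | 0 < s.re} := isOpen_lt continuous_const continuous_re
  have hfa : AnalyticOnNhd ℂ f {s : ℂ | 0 < s.re} :=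
    DifferentiableOn.analyticOnNhd (fun z hz => (hf z hz).differentiableWithinAt) hU
  have hga : AnalyticOnNhd ℂ g {s : ℂ | 0 < s.re} :=
    DifferentiableOn.analyticOnNhd (fun z hz => (hg z hz).differentiableWithinAt) hU
  refine hfa.eqOn_of_preconnected_of_eventuallyEq hga (convex_halfSpace_re_gt 0).isPreconnected
    (z₀ := 2) (by simp) ?_ hs
  filter_upwards [(isOpen_lt continuous_const continuous_re).mem_nhds
    (show (2 : ℂ) ∈ {s : ℂ | 1 < s.re} by simp)] with z hz
  exact h z hz

/-- partial sums -/
noncomputable def PS (a : ℕ → ℂ) (t : ℝ) : ℂ := ∑ k ∈ Finset.Icc 1 ⌊t⌋₊, a k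

lemma measurable_PS (a : ℕ → ℂ) : Measurable (PS a) :=
  (measurable_from_nat (f := fun n => ∑ k ∈ Finset.Icc 1 n, a k)).comp Nat.measurable_floor

variable {q : ℕ} [NeZero q]

lemma sum_range_char {χ : DirichletCharacter ℂ q} (hχ : χ ≠ 1) (n : ℕ) :
    ‖∑ k ∈ Finset.range n, χ (k : ZMod q)‖ ≤ q := by
  induction n using Nat.strong_induction_on with
  | _ n ih =>
    by_cases hn : n ≤ q
    · calc _ ≤ ∑ k ∈ Finset.range n, ‖χ (k : ZMod q)‖ := norm_sum_le _ _
        _ ≤ ∑ k ∈ Finset.range n, (1 : ℝ) := Finset.sum_le_sum fun k _ => χ.norm_le_one _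
        _ = n := by simp
        _ ≤ q := by exact_mod_cast hn
    · push Not at hn
      obtain ⟨m, rfl⟩ := Nat.exists_eq_add_of_le hn.le
      rw [Finset.sum_range_add]
      have h0 : ∑ k ∈ Finset.range q, χ (k : ZMod q) = 0 := by
        rw [← χ.sum_eq_zero_of_ne_one hχ]
        refine Finset.sum_bij (fun k _ => (k : ZMod q)) (fun _ _ => Finset.mem_univ _) ?_ ?_ ?_
        · intro a ha b hb h
          rw [ZMod.natCast_eq_natCast_iff', Nat.mod_eq_of_lt (Finset.mem_range.mp ha),
            Nat.mod_eq_of_lt (Finset.mem_range.mp hb)] at h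
          exact h
        · intro b _
          exact ⟨b.val, Finset.mem_range.mpr (ZMod.val_lt b), by simp⟩
        · intro a ha; rfl
      rw [h0, zero_add]
      simp only [Nat.cast_add, ZMod.natCast_self, zero_add]
      exact ih m (by have := NeZero.pos q; omega)

lemma norm_PS_char_le {χ : DirichletCharacter ℂ q} (hχ : χ ≠ 1) (t : ℝ) :
    ‖PS (fun n => χ n) t‖ ≤ q := by
  have h := sum_range_char hχ (⌊t⌋₊ + 1)
  have hz : χ ((0 : ℕ) : ZMod q) = 0 := by
    have h1 : q ≠ 1 := by rintro rfl; exact hχ (Subsingleton.elim _ _)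
    have : Nontrivial (ZMod q) := ZMod.nontrivial_iff.mpr h1
    rw [Nat.cast_zero]; exact χ.map_nonunit not_isUnit_zero
  rwa [Finset.range_eq_Ico, Finset.sum_eq_sum_Ico_succ_bot (by omega), hz, zero_add] at h

lemma norm_PS_char_le' (χ : DirichletCharacter ℂ q) {t : ℝ} (ht : 0 ≤ t) :
    ‖PS (fun n => χ n) t‖ ≤ t := by
  calc _ ≤ ∑ k ∈ Finset.Icc 1 ⌊t⌋₊, ‖χ (k : ZMod q)‖ := norm_sum_le _ _
    _ ≤ ∑ k ∈ Finset.Icc 1 ⌊t⌋₊, (1 : ℝ) := Finset.sum_le_sum fun k _ => χ.norm_le_one _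
    _ = ⌊t⌋₊ := by simp
    _ ≤ t := Nat.floor_le ht

lemma LFunction_eq_MI {χ : DirichletCharacter ℂ q} (hχ : χ ≠ 1) {s : ℂ} (hs : 0 < s.re) :
    LFunction χ s = s * MI (PS (fun n => χ n)) s := by
  refine eq_of_eq_half (g := fun s => s * MI (PS (fun n => χ n)) s)
    (fun s _ => differentiable_LFunction hχ s)
    (fun s hs => differentiableAt_id.mul
      (differentiableAt_MI (measurable_PS _) (fun t _ => norm_PS_char_le hχ t) hs)) ?_ hs
  intro s hs
  rw [LFunction_eq_LSeries χ hs]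
  refine LSeries_eq_mul_integral _ zero_le_one hs (LSeriesSummable_of_one_lt_re χ hs) ?_
  refine Asymptotics.IsBigO.of_bound 1 (Eventually.of_forall fun n => ?_)
  have := norm_PS_char_le' χ (t := n) (by positivity)
  simpa [PS] using this

lemma norm_LFunction_le {χ : DirichletCharacter ℂ q} (hχ : χ ≠ 1) {s : ℂ} (hs : 0 < s.re) :
    ‖LFunction χ s‖ ≤ q * ‖s‖ / s.re := by
  rw [LFunction_eq_MI hχ hs, norm_mul, mul_comm (q : ℝ), mul_div_assoc]
  gcongr
  exact norm_MI_le (fun t _ => norm_PS_char_le hχ t) hs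

/-- `⌊t⌋ - t` -/
noncomputable def EZ (t : ℝ) : ℂ := PS (fun _ => 1) t - t

lemma EZ_eq (t : ℝ) : EZ t = ((⌊t⌋₊ - t : ℝ) : ℂ) := by simp [EZ, PS]

lemma norm_EZ (t : ℝ) (ht : 1 < t) : ‖EZ t‖ ≤ 1 := by
  rw [EZ_eq, Complex.norm_real, Real.norm_eq_abs, abs_le]
  have h1 := Nat.floor_le (show 0 ≤ t by linarith)
  have h2 := Nat.lt_floor_add_one t
  constructor <;> linarith

lemma measurable_EZ : Measurable EZ := (measurable_PS _).sub (by fun_prop)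

lemma zeta_eq_aux {s : ℂ} (hs : 1 < s.re) : riemannZeta s = s / (s - 1) + s * MI EZ s := by
  have hs1 : s - 1 ≠ 0 := by
    intro h
    have := congrArg Complex.re h
    simp at this; linarith
  have h1 : riemannZeta s = s * ∫ t in Ioi (1 : ℝ), PS (fun _ => 1) t * (t : ℂ) ^ (-(s + 1)) := by
    have h := LSeries_eq_mul_integral (fun _ => 1) zero_le_one hs ?_ ?_
    · rw [← LSeries_one_eq_riemannZeta hs]; exact h
    · exact LSeriesSummable_one_iff.mpr hs
    · refine Asymptotics.IsBigO.of_bound 1 (Eventually.of_forall fun n => ?_)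
      simp
  have h2 : ∫ t in Ioi (1 : ℝ), (t : ℂ) * (t : ℂ) ^ (-(s + 1)) = 1 / (s - 1) := by
    have : ∫ t in Ioi (1 : ℝ), (t : ℂ) * (t : ℂ) ^ (-(s + 1)) = ∫ t in Ioi (1 : ℝ), (t : ℂ) ^ (-s) := by
      refine setIntegral_congr_fun measurableSet_Ioi fun t ht => ?_
      have ht0 : (t : ℂ) ≠ 0 := by
        have : (0 : ℝ) < t := zero_lt_one.trans ht
        exact_mod_cast this.ne'
      rw [show -s = 1 + -(s + 1) by ring, Complex.cpow_add _ _ ht0, Complex.cpow_one]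
    rw [this, integral_Ioi_cpow_of_lt (by simpa using hs) one_pos]
    simp
    rw [← neg_sub, show -(1 - s) = s - 1 by ring, show (-s + 1) = -(s - 1) by ring, neg_div, div_neg, neg_neg, one_div]
  have hi2 : IntegrableOn (fun t : ℝ => (t : ℂ) * (t : ℂ) ^ (-(s + 1))) (Ioi 1) := by
    have := integrableOn_Ioi_cpow_of_lt (a := -s) (c := 1) (by simpa using hs) one_pos
    refine this.congr_fun (fun t ht => ?_) measurableSet_Ioi
    have ht0 : (t : ℂ) ≠ 0 := by
      have : (0 : ℝ) < t := zero_lt_one.trans ht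
      exact_mod_cast this.ne'
    show (t : ℂ) ^ (-s) = _
    rw [show -s = 1 + -(s + 1) by ring, Complex.cpow_add _ _ ht0, Complex.cpow_one]
  have h3 : ∫ t in Ioi (1 : ℝ), PS (fun _ => 1) t * (t : ℂ) ^ (-(s + 1))
      = 1 / (s - 1) + MI EZ s := by
    rw [← h2, MI, ← integral_add hi2 (integrableOn_MI measurable_EZ norm_EZ (by linarith))]
    congr 1
    ext t
    rw [EZ]; ring
  rw [h1, h3]; ring

lemma Z1_eq {s : ℂ} (hs : 0 < s.re) :
    LFunctionTrivChar₁ 1 s = s + (s - 1) * s * MI EZ s := by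
  refine eq_of_eq_half (g := fun s => s + (s - 1) * s * MI EZ s)
    (fun s _ => differentiable_LFunctionTrivChar₁ 1 s)
    (fun s hs => by
      have := differentiableAt_MI measurable_EZ norm_EZ hs
      fun_prop) ?_ hs
  intro s hs
  have hs1 : s ≠ 1 := by rintro rfl; simp at hs
  rw [LFunctionTrivChar₁, Function.update_of_ne hs1, LFunctionTrivChar, LFunction_modOne_eq,
    zeta_eq_aux hs]
  have := sub_ne_zero.mpr hs1
  field_simp

lemma zeta_eq {s : ℂ} (hs : 0 < s.re) (hs1 : s ≠ 1) :
    riemannZeta s = s / (s - 1) + s * MI EZ s := by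
  have h := Z1_eq hs
  rw [LFunctionTrivChar₁, Function.update_of_ne hs1, LFunctionTrivChar, LFunction_modOne_eq] at h
  have := sub_ne_zero.mpr hs1
  field_simp
  linear_combination h

end SW

namespace SW
open Complex Metric Set MeasureTheory Filter Topology DirichletCharacter

open ArithmeticFunction in
/-- the twisted von Mangoldt series -/
noncomputable def DL {q : ℕ} (χ : DirichletCharacter ℂ q) (s : ℂ) : ℂ :=
  LSeries (fun n => χ n * (vonMangoldt n : ℂ)) s

variable {q : ℕ} [NeZero q]

open Classical in
/-- The entire function attached to a character: `(s-1) L(s,1)` for the trivial one. -/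
noncomputable def G (χ : DirichletCharacter ℂ q) : ℂ → ℂ :=
  if χ = 1 then LFunctionTrivChar₁ q else LFunction χ

lemma G_one : G (1 : DirichletCharacter ℂ q) = LFunctionTrivChar₁ q := if_pos rfl

lemma G_of_ne {χ : DirichletCharacter ℂ q} (h : χ ≠ 1) : G χ = LFunction χ := if_neg h

lemma G_diff (χ : DirichletCharacter ℂ q) : Differentiable ℂ (G χ) := by
  by_cases h : χ = 1
  · rw [h, G_one]; exact differentiable_LFunctionTrivChar₁ q
  · rw [G_of_ne h]; exact differentiable_LFunction h

lemma G_one_eq (s : ℂ) : G (1 : DirichletCharacter ℂ q) s =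
    (∏ p ∈ q.primeFactors, (1 - (p : ℂ) ^ (-s))) * LFunctionTrivChar₁ 1 s := by
  rw [G_one]
  by_cases hs : s = 1
  · subst hs
    simp only [LFunctionTrivChar₁, Function.update_self]
    simp [Complex.cpow_neg_one]
  · rw [LFunctionTrivChar₁, LFunctionTrivChar₁, Function.update_of_ne hs, Function.update_of_ne hs,
      LFunctionTrivChar_eq_mul_riemannZeta hs, LFunctionTrivChar_eq_mul_riemannZeta hs]
    simp; ring

lemma norm_euler_le {s : ℂ} (hs : 0 ≤ s.re) :
    ‖∏ p ∈ q.primeFactors, (1 - (p : ℂ) ^ (-s))‖ ≤ q := by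
  rw [norm_prod]
  calc _ ≤ ∏ p ∈ q.primeFactors, (p : ℝ) := by
        refine Finset.prod_le_prod (fun _ _ => norm_nonneg _) fun p hp => ?_
        have hp2 := (Nat.prime_of_mem_primeFactors hp).two_le
        have h1 : ‖(p : ℂ) ^ (-s)‖ ≤ 1 := by
          rw [Complex.norm_natCast_cpow_of_pos (by omega)]
          exact Real.rpow_le_one_of_one_le_of_nonpos (by exact_mod_cast (by omega : 1 ≤ p))
            (by simpa)
        calc _ ≤ ‖(1 : ℂ)‖ + ‖(p : ℂ) ^ (-s)‖ := norm_sub_le _ _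
          _ ≤ 2 := by rw [norm_one]; linarith
          _ ≤ p := by exact_mod_cast hp2
    _ = ((∏ p ∈ q.primeFactors, p : ℕ) : ℝ) := by push_cast; rfl
    _ ≤ q := by exact_mod_cast Nat.le_of_dvd (NeZero.pos q) (Nat.prod_primeFactors_dvd q)

lemma euler_ne_zero {s : ℂ} (hs : 0 < s.re) :
    ∏ p ∈ q.primeFactors, (1 - (p : ℂ) ^ (-s)) ≠ 0 := by
  refine Finset.prod_ne_zero_iff.mpr fun p hp h => ?_
  have hp2 := (Nat.prime_of_mem_primeFactors hp).two_le
  have h1 : ‖(p : ℂ) ^ (-s)‖ < 1 := by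
    rw [Complex.norm_natCast_cpow_of_pos (by omega)]
    exact Real.rpow_lt_one_of_one_lt_of_neg (by exact_mod_cast (by omega : 1 < p)) (by simpa)
  rw [← sub_eq_zero.mp h] at h1
  simp at h1

lemma norm_G_le (χ : DirichletCharacter ℂ q) {s : ℂ} (hs : 1 / 2 ≤ s.re) :
    ‖G χ s‖ ≤ 4 * q * (‖s‖ + 1) ^ 2 := by
  have hq : (1 : ℝ) ≤ q := by exact_mod_cast NeZero.pos q
  have hn := norm_nonneg s
  by_cases h : χ = 1
  · rw [h, G_one_eq, norm_mul, Z1_eq (by linarith)]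
    have h1 : ‖MI EZ s‖ ≤ 2 := by
      refine (norm_MI_le norm_EZ (by linarith)).trans ?_
      rw [div_le_iff₀ (by linarith)]; linarith
    have h2 : ‖s + (s - 1) * s * MI EZ s‖ ≤ ‖s‖ + (‖s‖ + 1) * ‖s‖ * 2 := by
      refine (norm_add_le _ _).trans ?_
      rw [norm_mul, norm_mul]
      have := norm_sub_le s 1
      rw [norm_one] at this
      gcongr
    calc _ ≤ q * (‖s‖ + (‖s‖ + 1) * ‖s‖ * 2) := by
          gcongr; exact norm_euler_le (by linarith)
      _ ≤ q * (4 * (‖s‖ + 1) ^ 2) := by gcongr; nlinarith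
      _ = _ := by ring
  · rw [G_of_ne h]
    refine (norm_LFunction_le h (by linarith)).trans ?_
    rw [div_le_iff₀ (by linarith)]
    calc (q : ℝ) * ‖s‖ ≤ q * (2 * (‖s‖ + 1) ^ 2) := by gcongr; nlinarith
      _ = 4 * q * (‖s‖ + 1) ^ 2 * (1 / 2) := by ring
      _ ≤ _ := by gcongr

lemma G_ne_zero (χ : DirichletCharacter ℂ q) {s : ℂ} (hs : 1 ≤ s.re) : G χ s ≠ 0 := by
  by_cases h : χ = 1
  · rw [h, G_one]
    by_cases h1 : s = 1
    · rw [h1]; exact LFunctionTrivChar₁_apply_one_ne_zero q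
    · rw [LFunctionTrivChar₁, Function.update_of_ne h1]
      exact mul_ne_zero (sub_ne_zero.mpr h1) (LFunction_ne_zero_of_one_le_re _ (Or.inr h1) hs)
  · rw [G_of_ne h]; exact LFunction_ne_zero_of_one_le_re _ (Or.inl h) hs

/-- sum of `n^{-σ}` -/
lemma tsum_rpow_le {σ : ℝ} (h1 : 1 < σ) (h2 : σ ≤ 2) :
    ∑' n : ℕ, 1 / (n : ℝ) ^ σ ≤ 3 / (σ - 1) := by
  have h := zeta_eq_tsum_one_div_nat_cpow (s := (σ : ℂ)) (by simpa)
  have h3 : riemannZeta σ = ((∑' n : ℕ, 1 / (n : ℝ) ^ σ : ℝ) : ℂ) := by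
    rw [h]; push_cast
    congr 1; ext n
    rw [Complex.ofReal_cpow (by positivity)]; simp
  have h4 : ‖riemannZeta σ‖ = ∑' n : ℕ, 1 / (n : ℝ) ^ σ := by
    rw [h3, Complex.norm_real, Real.norm_of_nonneg (tsum_nonneg fun n => by positivity)]
  rw [← h4, zeta_eq (by simp; linarith) (by
    intro h; have := congrArg Complex.re h; simp at this; linarith)]
  have h5 := norm_MI_le (s := (σ : ℂ)) norm_EZ (by simp; linarith)
  have h6 : ‖(σ : ℂ)‖ = σ := by simp; linarith
  have h7 : ‖(σ : ℂ) - 1‖ = σ - 1 := by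
    rw [← Complex.ofReal_one, ← Complex.ofReal_sub, Complex.norm_real,
      Real.norm_of_nonneg (by linarith)]
  simp only [ofReal_re] at h5
  calc _ ≤ ‖(σ : ℂ) / (σ - 1)‖ + ‖(σ : ℂ) * MI EZ σ‖ := norm_add_le _ _
    _ ≤ σ / (σ - 1) + σ * (1 / σ) := by
        rw [norm_div, norm_mul, h6, h7]; gcongr
    _ = (2 * σ - 1) / (σ - 1) := by
        have : σ - 1 ≠ 0 := by linarith
        have : σ ≠ 0 := by linarith
        field_simp; ring
    _ ≤ _ := by
        gcongr
        linarith

lemma norm_LSeries_le {f : ℕ → ℂ} (hf : ∀ n, ‖f n‖ ≤ 1) {s : ℂ} (h1 : 1 < s.re) (h2 : s.re ≤ 2) :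
    ‖LSeries f s‖ ≤ 3 / (s.re - 1) := by
  have hsum : Summable fun n : ℕ => 1 / (n : ℝ) ^ s.re := Real.summable_one_div_nat_rpow.mpr h1
  refine (tsum_of_norm_bounded hsum.hasSum fun n => ?_).trans (tsum_rpow_le h1 h2)
  rw [LSeries.norm_term_eq]
  split_ifs with hn
  · positivity
  · gcongr; exact hf n

lemma norm_LFunction_ge (χ : DirichletCharacter ℂ q) {s : ℂ} (h1 : 1 < s.re) (h2 : s.re ≤ 2) :
    (s.re - 1) / 3 ≤ ‖LFunction χ s‖ := by
  have h := LSeries.mul_mu_eq_one χ h1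
  rw [← LFunction_eq_LSeries χ h1] at h
  have hb := norm_LSeries_le (f := (fun n : ℕ => χ n) * fun n : ℕ => ((ArithmeticFunction.moebius n : ℤ) : ℂ))
    (s := s) (fun n => by
      simp only [Pi.mul_apply, norm_mul]
      have h1 := χ.norm_le_one (n : ZMod q)
      have h2 : ‖((ArithmeticFunction.moebius n : ℤ) : ℂ)‖ ≤ 1 := by
        rw [Complex.norm_intCast]
        exact_mod_cast ArithmeticFunction.abs_moebius_le_one
      calc _ ≤ (1 : ℝ) * 1 := by gcongr
        _ = 1 := by simp) h1 h2
  have hn := congrArg norm h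
  rw [norm_mul, norm_one] at hn
  have h3 : 0 < s.re - 1 := by linarith
  have : 1 ≤ ‖LFunction χ s‖ * (3 / (s.re - 1)) := by
    calc (1 : ℝ) = _ := hn.symm
      _ ≤ _ := by gcongr
  rw [← mul_div_assoc, le_div_iff₀ h3] at this
  linarith

lemma norm_G_ge (χ : DirichletCharacter ℂ q) {s : ℂ} (h1 : 1 < s.re) (h2 : s.re ≤ 2) :
    (s.re - 1) ^ 2 / 3 ≤ ‖G χ s‖ := by
  have h := norm_LFunction_ge χ h1 h2
  by_cases hc : χ = 1
  · have hs : s ≠ 1 := by rintro rfl; simp at h1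
    rw [hc, G_one, LFunctionTrivChar₁, Function.update_of_ne hs, norm_mul]
    rw [hc] at h
    have h3 : s.re - 1 ≤ ‖s - 1‖ := by simpa using Complex.re_le_norm (s - 1)
    calc _ = (s.re - 1) * ((s.re - 1) / 3) := by ring
      _ ≤ _ := by gcongr
  · rw [G_of_ne hc]
    refine le_trans ?_ h
    nlinarith

open Classical in
lemma DL_eq (χ : DirichletCharacter ℂ q) {s : ℂ} (hs : 1 < s.re) :
    DL χ s = -(deriv (G χ) s / G χ s) + if χ = 1 then 1 / (s - 1) else 0 := by
  have h := LSeries_twist_vonMangoldt_eq χ hs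
  have hd : DL χ s = -(deriv (LFunction χ) s / LFunction χ s) := by
    rw [deriv_LFunction_eq_deriv_LSeries χ hs, LFunction_eq_LSeries χ hs, ← neg_div, ← h]; rfl
  rw [hd]
  have h0 : LFunction χ s ≠ 0 := LFunction_ne_zero_of_one_le_re χ
    (Or.inr (by rintro rfl; simp at hs)) hs.le
  split_ifs with hc
  · subst hc
    have hs1 : s ≠ 1 := by rintro rfl; simp at hs
    have := sub_ne_zero.mpr hs1
    rw [G_one, deriv_LFunctionTrivChar₁_apply_of_ne_one q hs1, LFunctionTrivChar₁,
      Function.update_of_ne hs1, LFunctionTrivChar]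
    field_simp
    ring
  · rw [G_of_ne hc, add_zero]

end SW

namespace SW
open Complex Metric Set MeasureTheory Filter Topology DirichletCharacter

variable {q : ℕ} [NeZero q]

omit [NeZero q] in
lemma DL_hasSum (χ : DirichletCharacter ℂ q) {s : ℂ} (hs : 1 < s.re) :
    HasSum (fun n => (LSeries.term (fun n => χ n * (ArithmeticFunction.vonMangoldt n : ℂ)) s n).re)
      (DL χ s).re :=
  Complex.reCLM.hasSum (LSeriesSummable_twist_vonMangoldt χ hs).LSeriesHasSum

omit [NeZero q] in
lemma term_re_eq (χ : DirichletCharacter ℂ q) (σ t : ℝ) {n : ℕ} (hn : n ≠ 0) :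
    (LSeries.term (fun n => χ n * (ArithmeticFunction.vonMangoldt n : ℂ)) (σ + t * I) n).re =
    (χ n * (n : ℂ) ^ (-(t * I))).re * (ArithmeticFunction.vonMangoldt n / (n : ℝ) ^ σ) := by
  rw [LSeries.term_of_ne_zero hn]
  have hn0 : (n : ℂ) ≠ 0 := by exact_mod_cast hn
  have : χ n * (ArithmeticFunction.vonMangoldt n : ℂ) / (n : ℂ) ^ ((σ : ℂ) + t * I)
      = (χ n * (n : ℂ) ^ (-(t * I))) * ((ArithmeticFunction.vonMangoldt n / (n : ℝ) ^ σ : ℝ) : ℂ) := by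
    rw [Complex.cpow_add _ _ hn0, Complex.cpow_neg]
    push_cast
    rw [Complex.ofReal_cpow (by positivity)]
    push_cast
    have h1 : (n : ℂ) ^ (σ : ℂ) ≠ 0 := by simp [Complex.cpow_eq_zero_iff, hn0]
    have h2 : (n : ℂ) ^ ((t : ℂ) * I) ≠ 0 := by simp [Complex.cpow_eq_zero_iff, hn0]
    field_simp
  rw [this, Complex.re_mul_ofReal]

omit [NeZero q] in
lemma three_four_one (χ : DirichletCharacter ℂ q) {σ : ℝ} (hσ : 1 < σ) (t : ℝ) :
    0 ≤ 3 * (DL (1 : DirichletCharacter ℂ q) (σ + (0 : ℝ) * I)).re + 4 * (DL χ (σ + t * I)).re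
      + (DL (χ ^ 2) (σ + (2 * t : ℝ) * I)).re := by
  refine HasSum.nonneg (fun n => ?_)
    ((((DL_hasSum 1 ?_).mul_left 3).add ((DL_hasSum χ ?_).mul_left 4)).add
      (DL_hasSum (χ ^ 2) ?_))
  · by_cases hn : n = 0
    · simp [hn]
    · rw [term_re_eq _ _ _ hn, term_re_eq _ _ _ hn, term_re_eq _ _ _ hn]
      have hn0 : (n : ℂ) ≠ 0 := by exact_mod_cast hn
      have hv : 0 ≤ ArithmeticFunction.vonMangoldt n / (n : ℝ) ^ σ :=
        div_nonneg ArithmeticFunction.vonMangoldt_nonneg (by positivity)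
      rw [← mul_assoc, ← mul_assoc, ← add_mul, ← add_mul]
      refine mul_nonneg ?_ hv
      by_cases hu : IsUnit (n : ZMod q)
      · set u : ℂ := χ n * (n : ℂ) ^ (-(t * I)) with hu'
        have hu1 : ‖u‖ = 1 := by
          have h1 : ‖χ (n : ZMod q)‖ = 1 := by simpa using χ.unit_norm_eq_one hu.unit
          rw [hu', norm_mul, h1,
            Complex.norm_natCast_cpow_of_pos (Nat.pos_of_ne_zero hn)]
          simp
        have h2 : (χ ^ 2) n * (n : ℂ) ^ (-(((2 * t : ℝ) : ℂ) * I)) = u * u := by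
          rw [hu', pow_two, MulChar.mul_apply]
          have : (n : ℂ) ^ (-(((2 * t : ℝ) : ℂ) * I)) = (n : ℂ) ^ (-(t * I)) * (n : ℂ) ^ (-(t * I)) := by
            rw [← Complex.cpow_add _ _ hn0]; congr 1; push_cast; ring
          rw [this]; ring
        rw [h2, MulChar.one_apply hu]
        have h3 : u.re * u.re + u.im * u.im = 1 := by
          have := Complex.normSq_eq_norm_sq u
          rw [hu1, Complex.normSq_apply] at this; simpa using this
        simp only [Complex.mul_re]
        simp
        nlinarith [sq_nonneg (1 + u.re)]
      · rw [MulChar.map_nonunit _ hu, MulChar.map_nonunit _ hu, MulChar.map_nonunit _ hu]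
        simp
  all_goals simp [hσ]

omit [NeZero q] in
lemma one_one (χ : DirichletCharacter ℂ q) {σ : ℝ} (hσ : 1 < σ) (t : ℝ) :
    0 ≤ (DL (1 : DirichletCharacter ℂ q) (σ + (0 : ℝ) * I)).re + (DL χ (σ + t * I)).re := by
  refine HasSum.nonneg (fun n => ?_) ((DL_hasSum 1 ?_).add (DL_hasSum χ ?_))
  · by_cases hn : n = 0
    · simp [hn]
    · rw [term_re_eq _ _ _ hn, term_re_eq _ _ _ hn]
      have hv : 0 ≤ ArithmeticFunction.vonMangoldt n / (n : ℝ) ^ σ :=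
        div_nonneg ArithmeticFunction.vonMangoldt_nonneg (by positivity)
      rw [← add_mul]
      refine mul_nonneg ?_ hv
      by_cases hu : IsUnit (n : ZMod q)
      · set u : ℂ := χ n * (n : ℂ) ^ (-(t * I)) with hu'
        have hu1 : ‖u‖ = 1 := by
          have h1 : ‖χ (n : ZMod q)‖ = 1 := by simpa using χ.unit_norm_eq_one hu.unit
          rw [hu', norm_mul, h1,
            Complex.norm_natCast_cpow_of_pos (Nat.pos_of_ne_zero hn)]
          simp
        rw [MulChar.one_apply hu]
        have := (abs_le.mp (Complex.abs_re_le_norm u)).1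
        simp
        linarith
      · rw [MulChar.map_nonunit _ hu, MulChar.map_nonunit _ hu]
        simp
  all_goals simp [hσ]

/-- conductor-type quantity -/
noncomputable def LL (q : ℕ) (t : ℝ) : ℝ := Real.log (q * (|t| + 3))

lemma one_le_LL (t : ℝ) : 1 ≤ LL q t := by
  have hq : (1 : ℝ) ≤ q := by exact_mod_cast NeZero.pos q
  rw [LL, Real.le_log_iff_exp_le (by positivity)]
  have := Real.exp_one_lt_d9
  nlinarith [abs_nonneg t]

lemma LL_two (t : ℝ) : LL q (2 * t) ≤ 2 * LL q t := by
  have hq : (1 : ℝ) ≤ q := by exact_mod_cast NeZero.pos q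
  rw [LL, LL, show (2 : ℝ) * Real.log (q * (|t| + 3)) = Real.log ((q * (|t| + 3)) ^ 2) by simp]
  apply Real.log_le_log (by positivity)
  rw [abs_mul, abs_two]
  have ht := abs_nonneg t
  have h1 : (q : ℝ) ≤ q ^ 2 := by nlinarith
  calc (q : ℝ) * (2 * |t| + 3) ≤ q ^ 2 * ((|t| + 3) ^ 2) := by gcongr; nlinarith
    _ = _ := by ring

lemma LL_zero (t : ℝ) : LL q 0 ≤ LL q t := by
  have hq : (1 : ℝ) ≤ q := by exact_mod_cast NeZero.pos q
  apply Real.log_le_log (by positivity)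
  simp; gcongr; linarith [abs_nonneg t]

lemma log_inv_le {η : ℝ} (h : 0 < η) : Real.log (1 / η) ≤ 2 / √η := by
  have h1 : Real.log (1 / η) = 2 * Real.log (1 / √η) := by
    rw [one_div, one_div, Real.log_inv, Real.log_inv, Real.log_sqrt h.le]; ring
  rw [h1, div_eq_mul_one_div 2 √η]
  gcongr
  exact (Real.log_le_sub_one_of_pos (by positivity)).trans (by linarith)

/-- size bound around a point right of the 1-line -/
lemma log_ratio_le (χ : DirichletCharacter ℂ q) {η : ℝ} (h0 : 0 < η) (h1 : η ≤ 1 / 4) (t : ℝ) :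
    Real.log (4 * q * (|t| + 3) ^ 2 / ‖G χ ((1 + η : ℝ) + t * I)‖) ≤
      5 * LL q t + 2 * Real.log (1 / η) := by
  have hq : (1 : ℝ) ≤ q := by exact_mod_cast NeZero.pos q
  have ht := abs_nonneg t
  have hg := norm_G_ge χ (s := (1 + η : ℝ) + t * I) (by simp; linarith) (by simp; linarith)
  have e1 : (((1 + η : ℝ) : ℂ) + t * I).re - 1 = η := by simp
  rw [e1] at hg
  have hpos : 0 < ‖G χ ((1 + η : ℝ) + t * I)‖ := lt_of_lt_of_le (by positivity) hg
  have hY : 3 ≤ q * (|t| + 3) := by nlinarith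
  have : 5 * LL q t + 2 * Real.log (1 / η) = Real.log ((q * (|t| + 3)) ^ 5 * (1 / η) ^ 2) := by
    rw [Real.log_mul (by positivity) (by positivity), Real.log_pow, Real.log_pow, LL]; norm_num
  rw [this]
  apply Real.log_le_log (by positivity)
  rw [div_le_iff₀ hpos]
  calc 4 * q * (|t| + 3) ^ 2 ≤ (q * (|t| + 3)) ^ 2 * 3 ^ 3 * (1 / 3) := by
        have : (q : ℝ) ≤ q ^ 2 := by nlinarith
        nlinarith [sq_nonneg (|t| + 3), mul_nonneg (sub_nonneg.mpr this) (sq_nonneg (|t| + 3))]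
    _ ≤ (q * (|t| + 3)) ^ 2 * (q * (|t| + 3)) ^ 3 * (1 / 3) := by gcongr
    _ = (q * (|t| + 3)) ^ 5 * (1 / η) ^ 2 * (η ^ 2 / 3) := by field_simp
    _ ≤ _ := by gcongr

open Classical in
lemma re_DL_le (χ : DirichletCharacter ℂ q) {η : ℝ} (h0 : 0 < η) {t : ℝ}
    (h1 : η * LL q t ≤ 1 / 10 ^ 12) (S : Finset ℂ)
    (hS : ∀ ρ ∈ S, ‖ρ - ((1 + η : ℝ) + t * I)‖ ≤ 1 / 4 ∧ G χ ρ = 0) :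
    (DL χ ((1 + η : ℝ) + t * I)).re ≤ (if χ = 1 then (1 / ((η : ℂ) + t * I)).re else 0)
      + 1 / 100 / η - ∑ ρ ∈ S, zc (1 / 2) ((1 + η : ℝ) + t * I) ρ := by
  have hL := one_le_LL (q := q) t
  have hη : η ≤ 1 / 10 ^ 12 := by nlinarith
  have hη4 : η ≤ 1 / 4 := hη.trans (by norm_num)
  set s : ℂ := (1 + η : ℝ) + t * I with hs
  have hsre : s.re = 1 + η := by simp [hs]
  have hre : 1 < s.re := by rw [hsre]; linarith
  have hsn : ‖s‖ ≤ |t| + 5 / 4 := by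
    have := Complex.norm_le_abs_re_add_abs_im s
    have e : s.im = t := by simp [hs]
    rw [hsre, e, abs_of_pos (by linarith)] at this
    linarith
  have key := re_logDeriv_ge_center (R := 1 / 2) (A := 4 * q * (|t| + 3) ^ 2) (by norm_num) S s
    (G_diff χ) (fun z hz => by
      rw [mem_closedBall, dist_eq_norm] at hz
      have hz1 := (abs_le.mp ((Complex.abs_re_le_norm (z - s)).trans hz)).1
      rw [Complex.sub_re] at hz1
      have hz2 : ‖z‖ ≤ ‖s‖ + 1 / 2 := by
        have := norm_add_le s (z - s)
        rw [add_sub_cancel] at this; linarith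
      have hz3 : ‖z‖ + 1 ≤ |t| + 3 := by linarith
      refine (norm_G_le χ (by linarith)).trans ?_
      gcongr) (G_ne_zero χ hre.le) (fun z hz h => by
        by_contra hc
        exact G_ne_zero χ (by linarith) h)
    (fun ρ hρ => ⟨(hS ρ hρ).1.trans (by norm_num), (hS ρ hρ).2⟩)
  have hM := log_ratio_le χ h0 hη4 t
  rw [← hs] at hM
  rw [DL_eq χ hre, Complex.add_re, Complex.neg_re]
  have hp : ((if χ = 1 then 1 / (s - 1) else 0 : ℂ)).re
      = if χ = 1 then (1 / ((η : ℂ) + t * I)).re else 0 := by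
    split_ifs
    · congr 2; rw [hs]; push_cast; ring
    · simp
  rw [hp]
  have hlog := log_inv_le h0
  have hfin : 252 * Real.log (4 * q * (|t| + 3) ^ 2 / ‖G χ s‖) / (1 / 2) ≤ 1 / 100 / η := by
    rw [le_div_iff₀ h0]
    have h5 : η * Real.log (1 / η) ≤ 2 * √η := by
      calc η * Real.log (1 / η) ≤ η * (2 / √η) := by gcongr
        _ = 2 * (√η * √η / √η) := by rw [Real.mul_self_sqrt h0.le]; ring
        _ = 2 * √η := by field_simp
    have h6 : √η ≤ 1 / 10 ^ 6 := by
      rw [Real.sqrt_le_iff]; constructor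
      · norm_num
      · refine hη.trans (by norm_num)
    nlinarith
  linarith

lemma MI_conj {E : ℝ → ℂ} (hE : ∀ t, (starRingEnd ℂ) (E t) = E t) (s : ℂ) :
    MI E ((starRingEnd ℂ) s) = (starRingEnd ℂ) (MI E s) := by
  rw [MI, MI, ← integral_conj]
  refine setIntegral_congr_fun measurableSet_Ioi fun t ht => ?_
  have ht0 : (0 : ℝ) < t := zero_lt_one.trans ht
  have h := Complex.cpow_conj (t : ℂ) (-(s + 1))
    (by rw [Complex.arg_ofReal_of_nonneg ht0.le]; exact Real.pi_pos.ne)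
  rw [Complex.conj_ofReal] at h
  rw [map_mul, hE, ← h]
  simp

omit [NeZero q] in
lemma quad_conj {χ : DirichletCharacter ℂ q} (h2 : χ ^ 2 = 1) (a : ZMod q) :
    (starRingEnd ℂ) (χ a) = χ a := by
  have hq : χ.IsQuadratic := MulChar.isQuadratic_iff_sq_eq_one.mpr h2
  rcases hq a with h | h | h <;> simp [h]

lemma LFunction_conj {χ : DirichletCharacter ℂ q} (h2 : χ ^ 2 = 1) (hχ : χ ≠ 1) {s : ℂ}
    (hs : 0 < s.re) :
    LFunction χ ((starRingEnd ℂ) s) = (starRingEnd ℂ) (LFunction χ s) := by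
  rw [LFunction_eq_MI hχ hs, LFunction_eq_MI hχ (by simpa), map_mul, MI_conj]
  intro t
  rw [PS, map_sum]
  exact Finset.sum_congr rfl fun k _ => quad_conj h2 _


lemma Z1_ne_zero_near {s : ℂ} (h : ‖s - 1‖ ≤ 1 / 8) : LFunctionTrivChar₁ 1 s ≠ 0 := by
  have h1 := (abs_le.mp ((Complex.abs_re_le_norm (s - 1)).trans h)).1
  rw [Complex.sub_re, Complex.one_re] at h1
  rw [Z1_eq (by linarith)]
  intro h0
  have hM : ‖MI EZ s‖ ≤ 2 := by
    refine (norm_MI_le norm_EZ (by linarith)).trans ?_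
    rw [div_le_iff₀ (by linarith)]; linarith
  have hs : ‖s‖ ≤ 9 / 8 := by
    have := norm_add_le 1 (s - 1)
    rw [add_sub_cancel, norm_one] at this; linarith
  have : (-1 : ℂ) = (s - 1) + (s - 1) * s * MI EZ s := by linear_combination -h0
  have h3 := congrArg norm this
  rw [norm_neg, norm_one] at h3
  have h4 := norm_add_le (s - 1) ((s - 1) * s * MI EZ s)
  rw [norm_mul, norm_mul, ← h3] at h4
  have : ‖s - 1‖ * ‖s‖ * ‖MI EZ s‖ ≤ 1 / 8 * (9 / 8) * 2 := by gcongr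
  linarith

lemma G_one_ne_zero_near {s : ℂ} (h : ‖s - 1‖ ≤ 1 / 8) : G (1 : DirichletCharacter ℂ q) s ≠ 0 := by
  have h1 := (abs_le.mp ((Complex.abs_re_le_norm (s - 1)).trans h)).1
  rw [Complex.sub_re, Complex.one_re] at h1
  rw [G_one_eq]
  exact mul_ne_zero (euler_ne_zero (by linarith)) (Z1_ne_zero_near h)

lemma pole_re (η t : ℝ) : (1 / ((η : ℂ) + t * I)).re = η / (η ^ 2 + t ^ 2) := by
  rw [one_div, Complex.inv_re, Complex.normSq_apply]; simp; ring

set_option maxHeartbeats 1000000 in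
/-- Classical zero-free region. -/
theorem zfr (χ : DirichletCharacter ℂ q) {ρ : ℂ} (hρ : G χ ρ = 0)
    (hre : 1 - 1 / 10 ^ 12 / 40 / LL q ρ.im ≤ ρ.re) : χ ^ 2 = 1 ∧ χ ≠ 1 ∧ ρ.im = 0 := by
  obtain ⟨β, γ⟩ := ρ
  simp only at hre
  have hβ1 : β < 1 := by
    by_contra hc
    exact G_ne_zero χ (s := ⟨β, γ⟩) (not_lt.mp hc) hρ
  have hL := one_le_LL (q := q) γ
  set η : ℝ := 1 / 10 ^ 12 / 2 / LL q γ with hη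
  have hη0 : 0 < η := by positivity
  have hηL : η * LL q γ = 1 / 10 ^ 12 / 2 := by rw [hη]; field_simp
  have hη1 : η ≤ 1 / 10 ^ 12 := by nlinarith
  have hβ : 1 - η / 20 ≤ β := by
    refine le_trans (le_of_eq ?_) hre
    rw [hη]; ring
  have l1 : η * LL q γ ≤ 1 / 10 ^ 12 := by rw [hηL]; norm_num
  have l0 : η * LL q 0 ≤ 1 / 10 ^ 12 := le_trans (by gcongr; exact LL_zero γ) l1
  have l2 : η * LL q (2 * γ) ≤ 1 / 10 ^ 12 := by
    calc η * LL q (2 * γ) ≤ η * (2 * LL q γ) := by gcongr; exact LL_two γ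
      _ = _ := by linear_combination 2 * hηL
  have hη1 : η ≤ 1 / 1000 := hη1.trans (by norm_num)
  clear hre hηL
  clear_value η
  clear hη hL
  have D0 := re_DL_le (1 : DirichletCharacter ℂ q) hη0 l0 ∅ (by simp)
  rw [if_pos rfl, pole_re, Finset.sum_empty] at D0
  have e0 : η / (η ^ 2 + 0 ^ 2) = 1 / η := by field_simp; simp
  rw [e0] at D0
  have hcent : ((⟨β, γ⟩ : ℂ) - ((1 + η : ℝ) + γ * I)) = ((β - (1 + η) : ℝ) : ℂ) := by
    apply Complex.ext <;> simp
  have D1 := re_DL_le χ hη0 l1 {⟨β, γ⟩} (fun ρ hρ' => by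
    rw [Finset.mem_singleton] at hρ'
    subst hρ'
    refine ⟨?_, hρ⟩
    rw [hcent, Complex.norm_real, Real.norm_eq_abs, abs_le]
    constructor <;> linarith)
  have hz : 19 / 20 / η ≤ zc (1 / 2) ((1 + η : ℝ) + γ * I) ⟨β, γ⟩ := by
    rw [zc, hcent, Complex.norm_real, Real.norm_eq_abs, sq_abs]
    have e : (((1 + η : ℝ) : ℂ) + γ * I).re = 1 + η := by simp
    rw [e]
    set d := 1 + η - β with hd
    have hd0 : η < d := by linarith
    have hd1 : d ≤ 21 / 20 * η := by linarith
    have hdp : 0 ≤ d := by linarith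
    have : β - (1 + η) = -d := by rw [hd]; ring
    rw [this, neg_sq]
    have hd2 : d / d ^ 2 * (1 - d ^ 2 / (1 / 2) ^ 2) = (1 - 4 * d ^ 2) / d := by
      have : d ≠ 0 := by linarith
      field_simp; ring
    rw [hd2, div_le_div_iff₀ hη0 (by linarith)]
    have a3 : d ^ 2 ≤ (21 / 20 * η) ^ 2 := by gcongr
    have a4 : η ^ 2 ≤ (1 / 1000) ^ 2 := by gcongr
    have a5 : 1 / 1000 * η ≤ η := by linarith
    have : 4 * d ^ 2 ≤ 1 / 1000 := by linarith
    have : (4 * d ^ 2) * η ≤ 1 / 1000 * η := by gcongr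
    linarith
  rw [Finset.sum_singleton] at D1
  have h341 := three_four_one χ (σ := 1 + η) (by linarith) γ
  have D2 := re_DL_le (χ ^ 2) hη0 l2 ∅ (by simp)
  rw [Finset.sum_empty, pole_re] at D2
  rw [pole_re] at D1
  clear l1 l2
  have e1 : 19 / 20 / η = 19 / 20 * (1 / η) := by ring
  have e2 : 1 / 100 / η = 1 / 100 * (1 / η) := by ring
  rw [e1] at hz
  rw [e2] at D0 D1 D2
  have hpos : 0 < 1 / η := by positivity
  have h2 : χ ^ 2 = 1 := by
    by_contra h2
    have h1 : χ ≠ 1 := by rintro rfl; simp at h2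
    rw [if_neg h2] at D2
    rw [if_neg h1] at D1
    linarith
  rw [if_pos h2] at D2
  have hχ : χ ≠ 1 := by
    rintro rfl
    by_cases hγ : 4 * η ≤ |γ|
    · rw [if_pos rfl] at D1
      have hg2 : (4 * η) ^ 2 ≤ γ ^ 2 := by
        rw [← sq_abs γ]; gcongr
      have p1 : η / (η ^ 2 + γ ^ 2) ≤ 1 / 17 * (1 / η) := by
        rw [← div_eq_mul_one_div, div_le_div_iff₀ (by positivity) hη0]
        linarith [mul_pos hη0 hη0, sq_nonneg γ]
      have p2 : η / (η ^ 2 + (2 * γ) ^ 2) ≤ 1 / 17 * (1 / η) := by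
        rw [← div_eq_mul_one_div, div_le_div_iff₀ (by positivity) hη0]
        linarith [mul_pos hη0 hη0, sq_nonneg γ]
      linarith
    · refine G_one_ne_zero_near ?_ hρ
      have := Complex.norm_le_abs_re_add_abs_im ((⟨β, γ⟩ : ℂ) - 1)
      simp only [Complex.sub_re, Complex.one_re, Complex.sub_im, Complex.one_im, sub_zero] at this
      rw [abs_of_neg (by linarith : β - 1 < 0)] at this
      linarith
  refine ⟨h2, hχ, ?_⟩
  rw [if_neg hχ] at D1
  by_contra hγ0
  simp only at hγ0
  by_cases hγ : η / 2 ≤ |γ|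
  · have hg2 : (η / 2) ^ 2 ≤ γ ^ 2 := by
      rw [← sq_abs γ]; gcongr
    have p2 : η / (η ^ 2 + (2 * γ) ^ 2) ≤ 1 / 2 * (1 / η) := by
      rw [← div_eq_mul_one_div, div_le_div_iff₀ (by positivity) hη0]
      linarith
    linarith
  · push Not at hγ
    have hg2 : γ ^ 2 ≤ (η / 2) ^ 2 := by
      rw [← sq_abs γ]; gcongr
    have hρ' : G χ ⟨β, -γ⟩ = 0 := by
      have := LFunction_conj h2 hχ (s := ⟨β, γ⟩) (by simp only; linarith)
      rw [G_of_ne hχ] at hρ ⊢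
      rw [hρ, map_zero] at this
      exact this
    have hnorm : ∀ g : ℝ, ‖(⟨β, g⟩ : ℂ) - ((1 + η : ℝ) + (0 : ℝ) * I)‖ ^ 2
        = (1 + η - β) ^ 2 + g ^ 2 := by
      intro g
      rw [← Complex.normSq_eq_norm_sq, Complex.normSq_apply]; simp; ring
    have hnle : ∀ g : ℝ, g ^ 2 = γ ^ 2 → ‖(⟨β, g⟩ : ℂ) - ((1 + η : ℝ) + (0 : ℝ) * I)‖ ≤ 1 / 4 := by
      intro g hg
      refine abs_le_of_sq_le_sq' ?_ (by norm_num) |>.2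
      rw [hnorm, hg]
      have : (1 + η - β) ^ 2 ≤ (21 / 20 * η) ^ 2 := by
        gcongr <;> linarith
      have a3 : η ^ 2 ≤ (1 / 1000) ^ 2 := by gcongr
      linarith
    have hzc : ∀ g : ℝ, g ^ 2 = γ ^ 2 →
        3 / 4 * (1 / η) ≤ zc (1 / 2) ((1 + η : ℝ) + (0 : ℝ) * I) ⟨β, g⟩ := by
      intro g hg
      rw [zc, hnorm, hg]
      have e : (((1 + η : ℝ) : ℂ) + (0 : ℝ) * I).re = 1 + η := by simp
      rw [e]
      set d := 1 + η - β with hd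
      have hd0 : η < d := by linarith
      have hd1 : d ≤ 21 / 20 * η := by linarith
      have hdp : 0 ≤ d := by linarith
      have hd2 : d ^ 2 ≤ (21 / 20 * η) ^ 2 := by gcongr
      have h3 : (3 / 4 + 1 / 100) * (1 / η) ≤ d / (d ^ 2 + γ ^ 2) := by
        rw [← div_eq_mul_one_div, div_le_div_iff₀ hη0 (by positivity)]
        have a1 : d * d ≤ d * (21 / 20 * η) := by gcongr
        have a2 : η * η ≤ d * η := by gcongr
        linarith
      have h4 : 99 / 100 ≤ 1 - (d ^ 2 + γ ^ 2) / (1 / 2) ^ 2 := by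
        have a3 : η ^ 2 ≤ (1 / 1000) ^ 2 := by gcongr
        have a4 : (d ^ 2 + γ ^ 2) / (1 / 2) ^ 2 = 4 * (d ^ 2 + γ ^ 2) := by ring
        rw [a4]
        linarith
      calc 3 / 4 * (1 / η) ≤ (3 / 4 + 1 / 100) * (1 / η) * (99 / 100) := by linarith
        _ ≤ _ := by gcongr
    have hne : (⟨β, γ⟩ : ℂ) ≠ ⟨β, -γ⟩ := by
      intro h
      have := congrArg Complex.im h
      simp only at this
      exact hγ0 (by linarith)
    have D3 := re_DL_le χ hη0 l0 {⟨β, γ⟩, ⟨β, -γ⟩} (fun ρ hρ'' => by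
      rw [Finset.mem_insert, Finset.mem_singleton] at hρ''
      rcases hρ'' with rfl | rfl
      · exact ⟨hnle γ rfl, hρ⟩
      · exact ⟨hnle (-γ) (by ring), hρ'⟩)
    rw [if_neg hχ, Finset.sum_pair hne, e2] at D3
    have z1 := hzc γ rfl
    have z2 := hzc (-γ) (by ring)
    have h11 := one_one χ (σ := 1 + η) (by linarith) 0
    linarith

end SW

namespace SW
open Complex Metric Set MeasureTheory Filter Topology DirichletCharacter
open scoped ComplexOrder

lemma estermann_aux {E : ℂ → ℂ} (hE : Differentiable ℂ E) {Q b0 : ℝ}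
    (hQ : ∀ s : ℂ, ‖s - 2‖ ≤ 3 / 2 → ‖E s‖ ≤ Q)
    (hpos : ∀ m, 0 ≤ (-1) ^ m * iteratedDeriv m (fun s => E s / (s - 1)) 2)
    (h0 : b0 ≤ (E 2).re) {β : ℝ} (hβ : 7 / 8 ≤ β) (hβ1 : β < 1) (hz : E β = 0) (M : ℕ) :
    (b0 - 16 * Q * (3 / 4) ^ M) * (1 - β) ≤ (E 1).re * (2 - β) ^ M := by
  set g := dslope E 1 with hg
  have hgd : Differentiable ℂ g := by
    rw [← differentiableOn_univ] at hE ⊢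
    exact (Complex.differentiableOn_dslope univ_mem).mpr hE
  have hgs : ∀ s, s ≠ 1 → g s = (E s - E 1) / (s - 1) := by
    intro s hs
    rw [hg, dslope_of_ne _ hs, slope_def_field]
  have hQ0 : 0 ≤ Q := (norm_nonneg _).trans (hQ 2 (by norm_num))
  set lam := (E 1).re with hlam
  set c : ℕ → ℝ := fun m => ((-1) ^ m * iteratedDeriv m g 2 / (m.factorial : ℂ)).re with hc
  have hsph : ∀ z ∈ sphere (2 : ℂ) (3 / 2), ‖g z‖ ≤ 4 * Q := by
    intro z hz'
    rw [mem_sphere, dist_eq_norm] at hz'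
    have h1 : 1 / 2 ≤ ‖z - 1‖ := by
      have := norm_sub_norm_le (z - 2) (-1)
      rw [norm_neg, norm_one, hz', show z - 2 - -1 = z - 1 by ring] at this
      linarith
    have hz1 : z ≠ 1 := by rintro rfl; simp at h1; linarith
    rw [hgs z hz1, norm_div, div_le_iff₀ (by linarith)]
    have a1 := hQ z hz'.le
    have a2 := hQ 1 (by norm_num)
    have := norm_sub_le (E z) (E 1)
    nlinarith
  have hcb : ∀ m, |c m| ≤ 4 * Q * (2 / 3) ^ m := by
    intro m
    refine (Complex.abs_re_le_norm _).trans ?_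
    have := Complex.norm_iteratedDeriv_le_of_forall_mem_sphere_norm_le m (by norm_num)
      hgd.diffContOnCl hsph
    rw [norm_div, norm_mul, norm_pow, norm_neg, norm_one, one_pow, one_mul, Complex.norm_natCast,
      div_le_iff₀ (by positivity)]
    refine this.trans (le_of_eq ?_)
    rw [show (2 / 3 : ℝ) = (3 / 2)⁻¹ by norm_num, inv_pow]; ring
  have hcl : ∀ m, (-1) ^ m * iteratedDeriv m (fun s => E s / (s - 1)) 2
      = (-1) ^ m * iteratedDeriv m g 2 + m.factorial * E 1 := by
    intro m
    have hev : (fun s => E s / (s - 1)) =ᶠ[𝓝 2] g + fun s => E 1 * (1 * s - 1)⁻¹ := by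
      filter_upwards [isOpen_ne.mem_nhds (show (2 : ℂ) ≠ 1 by norm_num)] with s hs
      rw [Pi.add_apply, hgs s hs, one_mul]; ring
    have hcd : ContDiffAt ℂ m (fun s : ℂ => E 1 * (1 * s - 1)⁻¹) 2 := by
      refine contDiffAt_const.mul (ContDiffAt.inv (by fun_prop) (by norm_num))
    rw [hev.iteratedDeriv_eq m, iteratedDeriv_add hgd.contDiff.contDiffAt hcd,
      iteratedDeriv_const_mul_field, iteratedDeriv_eq_iterate (f := fun s : ℂ => (1 * s - 1)⁻¹),
      iter_deriv_inv_linear_sub]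
    norm_num
    rw [show (-1 : ℂ) ^ m * (iteratedDeriv m g 2 + E 1 * ((-1) ^ m * m.factorial))
      = (-1) ^ m * iteratedDeriv m g 2 + ((-1) ^ m * (-1) ^ m) * m.factorial * E 1 by ring,
      ← mul_pow]
    norm_num
  have hb : ∀ m, 0 ≤ c m + lam := by
    intro m
    have h1 := hpos m
    rw [hcl] at h1
    have h2 := (Complex.nonneg_iff.mp h1).1
    have h3 : (-1) ^ m * iteratedDeriv m g 2 + m.factorial * E 1
        = (m.factorial : ℝ) * ((-1) ^ m * iteratedDeriv m g 2 / (m.factorial : ℂ) + E 1) := by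
      have : (m.factorial : ℂ) ≠ 0 := by exact_mod_cast m.factorial_ne_zero
      push_cast
      field_simp
    rw [h3, Complex.re_ofReal_mul, Complex.add_re] at h2
    exact nonneg_of_mul_nonneg_right h2 (by positivity)
  have hb0 : b0 ≤ c 0 + lam := by
    have : c 0 + lam = (E 2).re := by
      simp only [hc, hlam]
      simp only [pow_zero, iteratedDeriv_zero, one_mul, Nat.factorial_zero, Nat.cast_one, div_one]
      rw [hgs 2 (by norm_num), ← Complex.add_re]; norm_num
    linarith
  have hβc : (β : ℂ) ≠ 1 := by exact_mod_cast hβ1.ne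
  have hgβ : (g β).re = lam / (1 - β) := by
    rw [hgs _ hβc, hz, zero_sub, ← neg_sub, neg_div_neg_eq]
    rw [show (1 : ℂ) - β = ((1 - β : ℝ) : ℂ) by push_cast; ring, Complex.div_ofReal_re]
  have hsum : HasSum (fun m => c m * (2 - β) ^ m) (lam / (1 - β)) := by
    rw [← hgβ]
    have := Complex.reCLM.hasSum (Complex.hasSum_taylorSeries_of_entire hgd 2 β)
    refine this.congr_fun ?_
    intro m
    simp only [Function.comp, Complex.reCLM_apply, hc, smul_eq_mul]
    rw [← Complex.re_mul_ofReal]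
    congr 1
    push_cast
    rw [show (β : ℂ) - 2 = (-1) * (2 - β) by ring, mul_pow]
    field_simp
  set x := 2 - β with hx
  have hx1 : 1 < x := by linarith
  have hx2 : x ≤ 9 / 8 := by linarith
  have hsplit := hsum.summable.sum_add_tsum_nat_add M
  rw [hsum.tsum_eq] at hsplit
  have htail : |∑' i, c (i + M) * x ^ (i + M)| ≤ 16 * Q * (3 / 4) ^ M := by
    have hgeo : HasSum (fun i : ℕ => 4 * Q * (3 / 4 : ℝ) ^ M * (3 / 4) ^ i)
        (4 * Q * (3 / 4 : ℝ) ^ M * (1 - 3 / 4)⁻¹) :=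
      (hasSum_geometric_of_lt_one (by norm_num) (by norm_num)).mul_left _
    have := tsum_of_norm_bounded hgeo (f := fun i => c (i + M) * x ^ (i + M)) (fun i => by
      rw [Real.norm_eq_abs, abs_mul, abs_of_pos (by positivity : 0 < x ^ (i + M))]
      calc _ ≤ 4 * Q * (2 / 3) ^ (i + M) * (9 / 8) ^ (i + M) := by gcongr; exact hcb _
        _ = 4 * Q * ((2 / 3) * (9 / 8)) ^ (i + M) := by rw [mul_pow]; ring
        _ = _ := by rw [pow_add]; norm_num; ring)
    rw [Real.norm_eq_abs] at this
    refine this.trans (le_of_eq (by norm_num; ring))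
  have hhead : b0 - lam * ((x ^ M - 1) / (x - 1)) ≤ (∑ i ∈ Finset.range M, c i * x ^ i) ∨ M = 0 := by
    rcases Nat.eq_zero_or_pos M with hM | hM
    · exact Or.inr hM
    left
    rw [← geom_sum_eq hx1.ne', Finset.mul_sum, sub_le_iff_le_add, ← Finset.sum_add_distrib]
    calc b0 ≤ c 0 * x ^ 0 + lam * x ^ 0 := by simpa using hb0
      _ ≤ _ := Finset.single_le_sum (f := fun i => c i * x ^ i + lam * x ^ i) (fun i _ => by
          rw [← add_mul]; exact mul_nonneg (hb i) (by positivity)) (Finset.mem_range.mpr hM)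
  have hxb : x - 1 = 1 - β := by rw [hx]; ring
  have h1β : 0 < 1 - β := by linarith
  have ht := (abs_le.mp htail).1
  rcases hhead with hh | hM
  · rw [hxb] at hh
    have : b0 - 16 * Q * (3 / 4) ^ M ≤ lam * x ^ M / (1 - β) := by
      have e : lam * x ^ M / (1 - β) = lam * ((x ^ M - 1) / (1 - β)) + lam / (1 - β) := by ring
      rw [e]; linarith
    rwa [le_div_iff₀ h1β] at this
  · subst hM
    have h2 : lam ≤ Q := (Complex.re_le_norm _).trans (hQ 1 (by norm_num))
    have h3 : b0 ≤ Q := h0.trans ((Complex.re_le_norm _).trans (hQ 2 (by norm_num)))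
    have h4 : 0 ≤ lam := by
      have : Tendsto (fun m => c m + lam) atTop (𝓝 (0 + lam)) := by
        refine Tendsto.add_const _ (squeeze_zero_norm (a := fun m => 4 * Q * (2 / 3) ^ m) hcb ?_)
        simpa using (tendsto_pow_atTop_nhds_zero_of_lt_one (r := (2 / 3 : ℝ)) (by norm_num)
          (by norm_num)).const_mul (4 * Q)
      rw [zero_add] at this
      exact ge_of_tendsto' this hb
    simp only [pow_zero, mul_one]
    nlinarith

lemma estermann {E : ℂ → ℂ} (hE : Differentiable ℂ E) {Q b0 : ℝ}
    (hQ : ∀ s : ℂ, ‖s - 2‖ ≤ 3 / 2 → ‖E s‖ ≤ Q)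
    (hpos : ∀ m, 0 ≤ (-1) ^ m * iteratedDeriv m (fun s => E s / (s - 1)) 2)
    (hb : 0 < b0) (h0 : b0 ≤ (E 2).re) {β : ℝ} (hβ : 7 / 8 ≤ β) (hβ1 : β < 1) (hz : E β = 0) :
    b0 / 16 * (1 - β) ≤ ‖E 1‖ * (32 * Q / b0) ^ (4 * (1 - β)) := by
  have hbQ : b0 ≤ Q := h0.trans ((Complex.re_le_norm _).trans (hQ 2 (by norm_num)))
  have hQ0 : 0 < Q := by linarith
  set Y := 32 * Q / b0 with hY
  have hY1 : 1 ≤ Y := by rw [hY, le_div_iff₀ hb]; linarith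
  have hlY : 0 ≤ Real.log Y := Real.log_nonneg hY1
  set M := ⌈4 * Real.log Y⌉₊ with hM
  have hM1 : 4 * Real.log Y ≤ M := Nat.le_ceil _
  have hM2 : (M : ℝ) < 4 * Real.log Y + 1 := Nat.ceil_lt_add_one (by positivity)
  have h := estermann_aux hE hQ hpos h0 hβ hβ1 hz M
  have h34 : (3 / 4 : ℝ) ^ M ≤ b0 / (32 * Q) := by
    calc (3 / 4 : ℝ) ^ M ≤ (Real.exp (-(1 / 4))) ^ M := by
          gcongr; linarith [Real.add_one_le_exp (-(1 / 4))]
      _ = Real.exp (-(M / 4)) := by rw [← Real.exp_nat_mul]; congr 1; ring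
      _ ≤ Real.exp (-Real.log Y) := by gcongr; linarith
      _ = b0 / (32 * Q) := by
          rw [Real.exp_neg, Real.exp_log (by linarith), hY, inv_div]
  have h5 : 16 * Q * (3 / 4) ^ M ≤ b0 / 2 := by
    calc 16 * Q * (3 / 4) ^ M ≤ 16 * Q * (b0 / (32 * Q)) := by gcongr
      _ = b0 / 2 := by field_simp; norm_num
  have h6 : (2 - β) ^ M ≤ Y ^ (4 * (1 - β)) * 8 := by
    calc (2 - β) ^ M ≤ (Real.exp (1 - β)) ^ M := by
          gcongr
          · linarith
          · linarith [Real.add_one_le_exp (1 - β)]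
      _ = Real.exp (M * (1 - β)) := by rw [← Real.exp_nat_mul]
      _ ≤ Real.exp ((4 * Real.log Y + 1) * (1 - β)) := by
          gcongr
      _ = Y ^ (4 * (1 - β)) * Real.exp (1 - β) := by
          rw [Real.rpow_def_of_pos (by linarith), ← Real.exp_add]; congr 1; ring
      _ ≤ _ := by
          gcongr
          have : Real.exp (1 - β) ≤ Real.exp 1 := by gcongr; linarith
          linarith [Real.exp_one_lt_d9]
  have h7 : (E 1).re * (2 - β) ^ M ≤ ‖E 1‖ * (2 - β) ^ M := by
    gcongr
    · exact pow_nonneg (by linarith) _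
    · exact Complex.re_le_norm _
  have h8 : ‖E 1‖ * (2 - β) ^ M ≤ ‖E 1‖ * (Y ^ (4 * (1 - β)) * 8) := by gcongr
  have h9 : b0 / 2 * (1 - β) ≤ (b0 - 16 * Q * (3 / 4) ^ M) * (1 - β) := by
    gcongr
    linarith
  linarith

lemma alt_of_ode {F D : ℂ → ℂ} (hF : DifferentiableOn ℂ F {s | 1 < s.re})
    (hD : DifferentiableOn ℂ D {s | 1 < s.re})
    (h : ∀ s : ℂ, 1 < s.re → deriv F s = -(D s * F s))
    (hDp : ∀ n : ℕ, 0 ≤ (-1) ^ n * iteratedDeriv n D 2) (hF2 : 0 ≤ F 2) (n : ℕ) :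
    0 ≤ (-1) ^ n * iteratedDeriv n F 2 := by
  have hU : IsOpen {s : ℂ | 1 < s.re} := isOpen_lt continuous_const continuous_re
  have h2 : (2 : ℂ) ∈ {s : ℂ | 1 < s.re} := by simp
  induction n using Nat.strong_induction_on with
  | _ n ih =>
    rcases n with _ | n
    · simpa using hF2
    have hev : deriv F =ᶠ[𝓝 2] fun s => -(D s * F s) := by
      filter_upwards [hU.mem_nhds h2] with s hs
      exact h s hs
    rw [iteratedDeriv_succ', hev.iteratedDeriv_eq n, iteratedDeriv_fun_neg, iteratedDeriv_fun_mul
      ((hD.analyticAt (hU.mem_nhds h2)).contDiffAt) ((hF.analyticAt (hU.mem_nhds h2)).contDiffAt),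
      pow_succ, mul_assoc, neg_one_mul, neg_neg, Finset.mul_sum]
    refine Finset.sum_nonneg fun i hi => ?_
    have hi' : i ≤ n := by simpa [Nat.lt_succ_iff] using hi
    have e : (-1 : ℂ) ^ n = (-1) ^ i * (-1) ^ (n - i) := by rw [← pow_add]; congr 1; omega
    rw [e, show (-1 : ℂ) ^ i * (-1) ^ (n - i) * (↑(n.choose i) * iteratedDeriv i D 2 *
      iteratedDeriv (n - i) F 2) = ↑(n.choose i) * (((-1) ^ i * iteratedDeriv i D 2) *
      ((-1) ^ (n - i) * iteratedDeriv (n - i) F 2)) by ring]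
    exact mul_nonneg (by positivity) (mul_nonneg (hDp i) (ih (n - i) (by omega)))

end SW

namespace SW
open Complex Metric Set MeasureTheory Filter Topology DirichletCharacter
open scoped ComplexOrder
variable {q : ℕ} [NeZero q]

lemma norm_L_near {χ : DirichletCharacter ℂ q} (hχ : χ ≠ 1) {δ : ℝ} (h0 : 0 < δ) (h1 : δ ≤ 1 / 4)
    {s : ℂ} (hs : ‖s - 1‖ ≤ δ) : ‖LFunction χ s‖ ≤ 2 * (q : ℝ) ^ (2 * δ) / δ := by
  have hre : 1 - δ ≤ s.re := by
    have := (abs_le.mp ((Complex.abs_re_le_norm (s - 1)).trans hs)).1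
    simp at this; linarith
  have hq : (0 : ℝ) < q := by exact_mod_cast NeZero.pos q
  have hns : ‖s‖ ≤ 2 := by
    calc ‖s‖ = ‖(s - 1) + 1‖ := by ring_nf
      _ ≤ ‖s - 1‖ + ‖(1 : ℂ)‖ := norm_add_le _ _
      _ ≤ 2 := by rw [norm_one]; linarith
  have hps : ∀ t : ℝ, 1 < t → ‖PS (fun n => χ n) t‖ ≤ (q : ℝ) ^ (2 * δ) * t ^ (1 - 2 * δ) := by
    intro t ht
    have a1 := norm_PS_char_le hχ t
    have a2 := norm_PS_char_le' χ (t := t) (by linarith)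
    rcases (norm_nonneg (PS (fun n => χ n) t)).eq_or_lt with h | h
    · rw [← h]; positivity
    calc _ = ‖PS (fun n => χ n) t‖ ^ (2 * δ) * ‖PS (fun n => χ n) t‖ ^ (1 - 2 * δ) := by
          rw [← Real.rpow_add h]; simp
      _ ≤ _ := by
          gcongr
          linarith
  have hm : ‖MI (PS (fun n => χ n)) s‖ ≤ (q : ℝ) ^ (2 * δ) / δ := by
    have i1 : IntegrableOn (fun t : ℝ => (q : ℝ) ^ (2 * δ) * t ^ (-s.re - 2 * δ)) (Ioi 1) :=
      (integrableOn_Ioi_rpow_of_lt (by linarith) one_pos).const_mul _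
    have h2 : ‖MI (PS (fun n => χ n)) s‖ ≤
        ∫ t in Ioi (1 : ℝ), (q : ℝ) ^ (2 * δ) * t ^ (-s.re - 2 * δ) := by
      refine MeasureTheory.norm_integral_le_of_norm_le i1
        ((ae_restrict_iff' measurableSet_Ioi).mpr (ae_of_all _ fun t ht => ?_))
      have ht0 : (0 : ℝ) < t := zero_lt_one.trans ht
      rw [norm_mul, Complex.norm_cpow_eq_rpow_re_of_pos ht0]
      calc _ ≤ ((q : ℝ) ^ (2 * δ) * t ^ (1 - 2 * δ)) * t ^ (-(s + 1)).re := by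
            gcongr; exact hps t ht
        _ = _ := by
            rw [mul_assoc, ← Real.rpow_add ht0]; congr 2; simp; ring
    rw [integral_const_mul, integral_Ioi_rpow_of_lt (by linarith) one_pos, Real.one_rpow] at h2
    refine h2.trans ?_
    rw [div_eq_mul_one_div _ δ]
    refine mul_le_mul_of_nonneg_left ?_ (by positivity)
    rw [show -1 / (-s.re - 2 * δ + 1) = 1 / (s.re + 2 * δ - 1) by
      rw [← neg_div_neg_eq]; congr 1 <;> ring]
    gcongr
    linarith
  rw [LFunction_eq_MI hχ (by linarith), norm_mul, mul_div_assoc]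
  gcongr

lemma L_two_nonneg {χ : DirichletCharacter ℂ q} (h2 : χ ^ 2 = 1) : 0 ≤ LFunction χ 2 := by
  have hs : 1 < (2 : ℂ).re := by simp
  have hL := (LSeriesSummable_of_one_lt_re χ hs).LSeriesHasSum
  rw [LSeriesHasSum, ← LFunction_eq_LSeries χ hs] at hL
  have ht : ∀ n, LSeries.term (fun n : ℕ => χ n) 2 n = ((χ (n : ZMod q)).re * (1 / (n : ℝ) ^ 2) : ℝ) := by
    intro n
    have : (((χ (n : ZMod q)).re : ℝ) : ℂ) = χ (n : ZMod q) := Complex.conj_eq_iff_re.mp (quad_conj h2 _)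
    rcases eq_or_ne n 0 with rfl | hn
    · simp
    rw [LSeries.term_of_ne_zero hn]
    push_cast
    rw [this]
    simp [div_eq_mul_inv]
  have hq : χ.IsQuadratic := MulChar.isQuadratic_iff_sq_eq_one.mpr h2
  have hre := Complex.reCLM.hasSum hL
  have him := Complex.imCLM.hasSum hL
  simp only [ht, Complex.imCLM_apply, Complex.reCLM_apply, Complex.ofReal_re, Complex.ofReal_im] at hre him
  have h3 := hre.add hasSum_zeta_two
  have h4 := le_hasSum h3 1 (fun n _ => by
    rcases hq n with h | h | h <;> rw [h] <;> simp)
  simp at h4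
  rw [Complex.le_def]
  refine ⟨?_, ?_⟩
  · simp
    have : Real.pi ^ 2 / 6 < 2 := by nlinarith [Real.pi_lt_d2, Real.pi_gt_three]
    linarith
  · simpa using (him.unique hasSum_zero).symm

lemma deriv_LF (χ : DirichletCharacter ℂ q) {s : ℂ} (hs : 1 < s.re) :
    deriv (LFunction χ) s = -(DL χ s * LFunction χ s) := by
  have h := LSeries_twist_vonMangoldt_eq χ hs
  have hd : DL χ s = -(deriv (LFunction χ) s / LFunction χ s) := by
    rw [deriv_LFunction_eq_deriv_LSeries χ hs, LFunction_eq_LSeries χ hs, ← neg_div, ← h]; rfl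
  have h0 : LFunction χ s ≠ 0 := LFunction_ne_zero_of_one_le_re χ
    (Or.inr (by rintro rfl; simp at hs)) hs.le
  rw [hd]
  field_simp

lemma G_one_div {s : ℂ} (hs : s ≠ 1) :
    G (1 : DirichletCharacter ℂ q) s / (s - 1) = LFunction (1 : DirichletCharacter ℂ q) s := by
  have := sub_ne_zero.mpr hs
  rw [G_one, LFunctionTrivChar₁, Function.update_of_ne hs, LFunctionTrivChar]
  field_simp

lemma norm_G_one_one : ‖G (1 : DirichletCharacter ℂ q) 1‖ ≤ 1 := by
  rw [G_one, LFunctionTrivChar₁, Function.update_self, norm_prod]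
  refine Finset.prod_le_one (fun _ _ => norm_nonneg _) fun p hp => ?_
  have hp2 := (Nat.prime_of_mem_primeFactors hp).pos
  have h1 : (1 : ℝ) ≤ p := by exact_mod_cast hp2
  rw [show (1 - (p : ℂ)⁻¹) = ((1 - (p : ℝ)⁻¹ : ℝ) : ℂ) by push_cast; rfl, Complex.norm_real,
    Real.norm_eq_abs, abs_le]
  have := inv_le_one_of_one_le₀ h1
  have : 0 < (p : ℝ)⁻¹ := by positivity
  constructor <;> linarith

lemma siegel_pos {χ₁ χ₂ : DirichletCharacter ℂ q} (h1 : χ₁ ^ 2 = 1) (h2 : χ₂ ^ 2 = 1) (n : ℕ) :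
    0 ≤ (-1) ^ n * iteratedDeriv n (fun s => LFunction (1 : DirichletCharacter ℂ q) s *
      LFunction χ₁ s * LFunction χ₂ s * LFunction (χ₁ * χ₂) s) 2 := by
  set f : ℕ → ℂ := (fun n : ℕ => (1 : DirichletCharacter ℂ q) n * (ArithmeticFunction.vonMangoldt n : ℂ)) +
    (fun n : ℕ => χ₁ n * (ArithmeticFunction.vonMangoldt n : ℂ)) +
    (fun n : ℕ => χ₂ n * (ArithmeticFunction.vonMangoldt n : ℂ)) +
    (fun n : ℕ => (χ₁ * χ₂) n * (ArithmeticFunction.vonMangoldt n : ℂ)) with hf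
  have hsm : ∀ (χ : DirichletCharacter ℂ q) {s : ℂ}, 1 < s.re → LSeriesSummable
      (fun n : ℕ => χ n * (ArithmeticFunction.vonMangoldt n : ℂ)) s :=
    fun χ s hs => LSeriesSummable_twist_vonMangoldt χ hs
  have hfs : ∀ s : ℂ, 1 < s.re → LSeriesSummable f s := fun s hs =>
    (((hsm _ hs).add (hsm _ hs)).add (hsm _ hs)).add (hsm _ hs)
  have hfD : ∀ s : ℂ, 1 < s.re → LSeries f s = DL (1 : DirichletCharacter ℂ q) s + DL χ₁ s + DL χ₂ s + DL (χ₁ * χ₂) s := by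
    intro s hs
    rw [hf, LSeries_add (((hsm _ hs).add (hsm _ hs)).add (hsm _ hs)) (hsm _ hs),
      LSeries_add ((hsm _ hs).add (hsm _ hs)) (hsm _ hs), LSeries_add (hsm _ hs) (hsm _ hs)]
    rfl
  have hab : LSeries.abscissaOfAbsConv f ≤ (1 : ℝ) :=
    LSeries.abscissaOfAbsConv_le_of_forall_lt_LSeriesSummable fun y hy => hfs _ (by simpa using hy)
  have hf0 : 0 ≤ f := by
    intro n
    have hL : (0 : ℂ) ≤ (ArithmeticFunction.vonMangoldt n : ℂ) := by
      exact_mod_cast ArithmeticFunction.vonMangoldt_nonneg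
    have hq1 : χ₁.IsQuadratic := MulChar.isQuadratic_iff_sq_eq_one.mpr h1
    have hq2 : χ₂.IsQuadratic := MulChar.isQuadratic_iff_sq_eq_one.mpr h2
    simp only [hf, Pi.add_apply, Pi.zero_apply, MulChar.mul_apply, ← add_mul]
    refine mul_nonneg ?_ hL
    by_cases hu : IsUnit (n : ZMod q)
    · rw [MulChar.one_apply hu]
      rcases hq1 n with h | h | h <;> rcases hq2 n with h' | h' | h' <;> rw [h, h'] <;> norm_num
    · simp [MulChar.map_nonunit _ hu]
  have hne : ∀ s : ℂ, 1 < s.re → s ≠ 1 := by rintro s hs rfl; simp at hs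
  have hdf : ∀ (χ : DirichletCharacter ℂ q) (s : ℂ), 1 < s.re → DifferentiableAt ℂ (LFunction χ) s :=
    fun χ s hs => differentiableAt_LFunction χ s (Or.inl (hne s hs))
  refine alt_of_ode (D := LSeries f) ?_ ?_ ?_ ?_ ?_ n
  · intro s hs
    exact ((((hdf _ s hs).mul (hdf _ s hs)).mul (hdf _ s hs)).mul
      (hdf _ s hs)).differentiableWithinAt
  · refine (LSeries_differentiableOn f).mono fun s hs => ?_
    exact hab.trans_lt (by exact_mod_cast hs)
  · intro s hs
    have e := ((((hdf 1 s hs).hasDerivAt.mul (hdf χ₁ s hs).hasDerivAt).mul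
      (hdf χ₂ s hs).hasDerivAt).mul (hdf (χ₁ * χ₂) s hs).hasDerivAt).deriv
    rw [hfD s hs]
    refine Eq.trans e ?_
    simp only [deriv_LF _ hs, Pi.mul_apply]
    ring
  · intro n
    have := LSeries.iteratedDeriv_alternating (x := 2) hf0 (hab.trans_lt
      (EReal.coe_lt_coe_iff.mpr one_lt_two)) n
    simpa using this
  · exact mul_nonneg (mul_nonneg (mul_nonneg (L_two_nonneg (one_pow 2)) (L_two_nonneg h1))
      (L_two_nonneg h2)) (L_two_nonneg (by rw [mul_pow, h1, h2, one_mul]))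

lemma siegel_core {χ₁ χ₂ : DirichletCharacter ℂ q} (h1 : χ₁ ^ 2 = 1) (h2 : χ₂ ^ 2 = 1)
    (n1 : χ₁ ≠ 1) (n2 : χ₂ ≠ 1) (n12 : χ₁ * χ₂ ≠ 1) {β : ℝ} (hβ : 7 / 8 ≤ β) (hβ1 : β < 1)
    (hz : LFunction χ₁ β = 0) :
    1 / 81 / 16 * (1 - β) ≤ ‖LFunction χ₁ 1‖ * ‖LFunction χ₂ 1‖ * ‖LFunction (χ₁ * χ₂) 1‖ *
      (32 * (81 * q) ^ 4 / (1 / 81)) ^ (4 * (1 - β)) := by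
  have hq : (0 : ℝ) < q := by exact_mod_cast NeZero.pos q
  set E : ℂ → ℂ := fun s => G (1 : DirichletCharacter ℂ q) s * G χ₁ s * G χ₂ s * G (χ₁ * χ₂) s with hE
  have hE' : ∀ s, E s = G (1 : DirichletCharacter ℂ q) s * LFunction χ₁ s * LFunction χ₂ s *
      LFunction (χ₁ * χ₂) s := by
    intro s; simp only [hE, G_of_ne n1, G_of_ne n2, G_of_ne n12]
  have hF : ∀ s, s ≠ 1 → E s / (s - 1) = LFunction (1 : DirichletCharacter ℂ q) s *
      LFunction χ₁ s * LFunction χ₂ s * LFunction (χ₁ * χ₂) s := by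
    intro s hs
    rw [hE', ← G_one_div hs]; ring
  have hE2 : 1 / 81 ≤ (E 2).re := by
    have a := hF 2 (by norm_num)
    rw [show (2 : ℂ) - 1 = 1 by norm_num, div_one] at a
    have hnn : 0 ≤ E 2 := by
      rw [a]
      exact mul_nonneg (mul_nonneg (mul_nonneg (L_two_nonneg (one_pow 2)) (L_two_nonneg h1))
        (L_two_nonneg h2)) (L_two_nonneg (by rw [mul_pow, h1, h2, one_mul]))
    have hge : ∀ χ : DirichletCharacter ℂ q, 1 / 3 ≤ ‖LFunction χ 2‖ := by
      intro χ
      have := norm_LFunction_ge χ (s := 2) (by simp) (by simp)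
      norm_num at this ⊢
      exact this
    have hre : (E 2).re = ‖E 2‖ := by
      have := Complex.eq_coe_norm_of_nonneg hnn
      conv_lhs => rw [this]
      simp
    rw [hre, a, norm_mul, norm_mul, norm_mul]
    calc (1 / 81 : ℝ) = 1 / 3 * (1 / 3) * (1 / 3) * (1 / 3) := by norm_num
      _ ≤ _ := by gcongr <;> exact hge _
  have hest := estermann (E := E) (Q := (81 * q) ^ 4) (b0 := 1 / 81) (β := β)
    ((((G_diff _).mul (G_diff _)).mul (G_diff _)).mul (G_diff _)) ?_ ?_ (by norm_num) hE2 hβ hβ1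
    (by rw [hE', hz]; ring)
  · refine hest.trans ?_
    rw [hE', norm_mul, norm_mul, norm_mul]
    gcongr
    calc _ ≤ 1 * ‖LFunction χ₁ 1‖ := by gcongr; exact norm_G_one_one
      _ = _ := one_mul _
  · intro s hs
    have b : ∀ χ : DirichletCharacter ℂ q, ‖G χ s‖ ≤ 81 * q := by
      intro χ
      have hre : 1 / 2 ≤ s.re := by
        have := (abs_le.mp ((Complex.abs_re_le_norm (s - 2)).trans hs)).1
        simp at this; linarith
      have hns : ‖s‖ ≤ 7 / 2 := by
        calc ‖s‖ = ‖(s - 2) + 2‖ := by ring_nf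
          _ ≤ ‖s - 2‖ + ‖(2 : ℂ)‖ := norm_add_le _ _
          _ ≤ _ := by rw [show ‖(2 : ℂ)‖ = 2 by simp]; linarith
      calc _ ≤ 4 * q * (‖s‖ + 1) ^ 2 := norm_G_le χ hre
        _ ≤ 4 * q * (7 / 2 + 1) ^ 2 := by gcongr
        _ = _ := by ring
    simp only [hE, norm_mul]
    calc _ ≤ (81 * q : ℝ) * (81 * q) * (81 * q) * (81 * q) := by gcongr <;> exact b _
      _ = _ := by ring
  · intro n
    have hev : (fun s => E s / (s - 1)) =ᶠ[𝓝 2] (fun s => LFunction (1 : DirichletCharacter ℂ q) s *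
      LFunction χ₁ s * LFunction χ₂ s * LFunction (χ₁ * χ₂) s) := by
      filter_upwards [isOpen_ne.mem_nhds (by norm_num : (2 : ℂ) ≠ 1)] with s hs
      exact hF s hs
    rw [hev.iteratedDeriv_eq n]
    exact siegel_pos h1 h2 n

end SW

namespace SW
open Complex Metric Set MeasureTheory Filter Topology DirichletCharacter
variable {q : ℕ} [NeZero q]

lemma siegel_two {χ₁ χ₂ : DirichletCharacter ℂ q} (h1 : χ₁ ^ 2 = 1) (h2 : χ₂ ^ 2 = 1)
    (n1 : χ₁ ≠ 1) (n2 : χ₂ ≠ 1) (n12 : χ₁ * χ₂ ≠ 1) {ε : ℝ} (he0 : 0 < ε) (he1 : ε ≤ 1)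
    {β₁ β₂ : ℝ} (hβ : 1 - ε / 32 ≤ β₁) (hβ1 : β₁ < 1)
    (hz : LFunction χ₁ β₁ = 0) (hβ2 : β₂ < 1) (hz2 : LFunction χ₂ β₂ = 0) :
    (1 - β₁) * (ε / 12) ^ 4 / (1296 * 16 * (32 * 81 ^ 5)) * (q : ℝ) ^ (-ε) ≤ 1 - β₂ := by
  have hq1 : (1 : ℝ) ≤ q := by exact_mod_cast NeZero.pos q
  have hq : (0 : ℝ) < q := by linarith
  set δ := ε / 12 with hδ
  have hd0 : 0 < δ := by positivity
  have hd1 : δ ≤ 1 / 4 := by rw [hδ]; linarith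
  have hqe : (q : ℝ) ^ (-ε) ≤ 1 := Real.rpow_le_one_of_one_le_of_nonpos hq1 (by linarith)
  by_cases hb : β₂ ≤ 1 - δ
  · calc (1 - β₁) * δ ^ 4 / (1296 * 16 * (32 * 81 ^ 5)) * (q : ℝ) ^ (-ε)
        ≤ 1 * δ ^ 4 / 1 * 1 := by
          gcongr
          · linarith
          · norm_num
      _ ≤ δ := by nlinarith [pow_le_one₀ hd0.le (by linarith : δ ≤ 1) (n := 3)]
      _ ≤ _ := by linarith
  push Not at hb
  have c := siegel_core h1 h2 n1 n2 n12 (by linarith) hβ1 hz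
  have b1 := norm_L_near n1 hd0 hd1 (s := 1) (by simp [hd0.le])
  have b3 := norm_L_near n12 hd0 hd1 (s := 1) (by simp [hd0.le])
  have b2 : ‖LFunction χ₂ 1‖ ≤ (4 * (q : ℝ) ^ (2 * δ) / δ) / δ * (1 - β₂) := by
    have hmem : (β₂ : ℂ) ∈ ball (1 : ℂ) δ := by
      rw [mem_ball, dist_eq_norm, ← Complex.ofReal_one, ← Complex.ofReal_sub, Complex.norm_real,
        Real.norm_eq_abs, abs_lt]
      constructor <;> linarith
    have := Complex.dist_le_div_mul_dist_of_mapsTo_ball (f := LFunction χ₂) (c := 1) (R₁ := δ)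
      (R₂ := 4 * (q : ℝ) ^ (2 * δ) / δ) (z := β₂)
      (differentiable_LFunction n2).differentiableOn ?_ hmem
    · rw [hz2, dist_zero_left] at this
      refine this.trans (le_of_eq ?_)
      rw [dist_eq_norm, ← Complex.ofReal_one, ← Complex.ofReal_sub, Complex.norm_real,
        Real.norm_eq_abs, abs_sub_comm, abs_of_nonneg (by linarith)]
    · intro s hs
      rw [mem_ball, dist_eq_norm] at hs
      rw [mem_closedBall, dist_eq_norm]
      calc _ ≤ ‖LFunction χ₂ s‖ + ‖LFunction χ₂ 1‖ := norm_sub_le _ _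
        _ ≤ 2 * (q : ℝ) ^ (2 * δ) / δ + 2 * (q : ℝ) ^ (2 * δ) / δ := by
            gcongr
            · exact norm_L_near n2 hd0 hd1 hs.le
            · exact norm_L_near n2 hd0 hd1 (by simp [hd0.le])
        _ = _ := by ring
  have b4 : (32 * (81 * (q : ℝ)) ^ 4 / (1 / 81)) ^ (4 * (1 - β₁)) ≤ (32 * 81 ^ 5) * (q : ℝ) ^ (ε / 2) := by
    rw [show (32 * (81 * (q : ℝ)) ^ 4 / (1 / 81)) = (32 * 81 ^ 5) * (q : ℝ) ^ 4 by ring,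
      Real.mul_rpow (by positivity) (by positivity)]
    gcongr
    · calc ((32 * 81 ^ 5 : ℝ)) ^ (4 * (1 - β₁)) ≤ (32 * 81 ^ 5 : ℝ) ^ (1 : ℝ) :=
          Real.rpow_le_rpow_of_exponent_le (by norm_num) (by linarith)
        _ = _ := Real.rpow_one _
    · rw [← Real.rpow_natCast, ← Real.rpow_mul hq.le]
      refine Real.rpow_le_rpow_of_exponent_le hq1 ?_
      push_cast
      linarith
  have hb2 : 0 < 1 - β₂ := by linarith
  have key : 1 / 81 / 16 * (1 - β₁) ≤ (16 * (32 * 81 ^ 5)) / δ ^ 4 * (q : ℝ) ^ ε * (1 - β₂) := by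
    calc _ ≤ _ := c
      _ ≤ (2 * (q : ℝ) ^ (2 * δ) / δ) * ((4 * (q : ℝ) ^ (2 * δ) / δ) / δ * (1 - β₂)) *
          (2 * (q : ℝ) ^ (2 * δ) / δ) * ((32 * 81 ^ 5) * (q : ℝ) ^ (ε / 2)) := by
          gcongr
      _ = (16 * (32 * 81 ^ 5)) / δ ^ 4 * ((q : ℝ) ^ (2 * δ) * (q : ℝ) ^ (2 * δ) *
          (q : ℝ) ^ (2 * δ) * (q : ℝ) ^ (ε / 2)) * (1 - β₂) := by
          field_simp; ring
      _ = _ := by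
          rw [← Real.rpow_add hq, ← Real.rpow_add hq, ← Real.rpow_add hq]
          congr 3
          rw [hδ]; ring
  have hqq : (q : ℝ) ^ ε * (q : ℝ) ^ (-ε) = 1 := by rw [← Real.rpow_add hq]; simp
  calc (1 - β₁) * δ ^ 4 / (1296 * 16 * (32 * 81 ^ 5)) * (q : ℝ) ^ (-ε)
      = (1 / 81 / 16 * (1 - β₁)) * (δ ^ 4 / (16 * (32 * 81 ^ 5)) * (q : ℝ) ^ (-ε)) := by ring
    _ ≤ ((16 * (32 * 81 ^ 5)) / δ ^ 4 * (q : ℝ) ^ ε * (1 - β₂)) *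
        (δ ^ 4 / (16 * (32 * 81 ^ 5)) * (q : ℝ) ^ (-ε)) := by gcongr
    _ = ((q : ℝ) ^ ε * (q : ℝ) ^ (-ε)) * (1 - β₂) := by
        field_simp
    _ = 1 - β₂ := by rw [hqq, one_mul]

lemma real_zero_lt_one {χ : DirichletCharacter ℂ q} (hχ : χ ≠ 1) {β : ℝ}
    (hz : LFunction χ β = 0) : β < 1 := by
  by_contra! h
  exact LFunction_ne_zero_of_one_le_re χ (Or.inl hχ) (by simpa using h) hz

lemma siegel_aux {ε : ℝ} (he0 : 0 < ε) (he1 : ε ≤ 1) : ∃ c : ℝ, 0 < c ∧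
    ∀ (q : ℕ) [NeZero q] (χ : DirichletCharacter ℂ q), χ ^ 2 = 1 → χ ≠ 1 → ∀ β : ℝ,
      LFunction χ β = 0 → c * (q : ℝ) ^ (-ε) ≤ 1 - β := by
  by_cases hex : ∃ (q : ℕ) (_ : NeZero q) (χ : DirichletCharacter ℂ q) (β : ℝ), χ ^ 2 = 1 ∧ χ ≠ 1 ∧
      LFunction χ β = 0 ∧ 1 - ε / 32 ≤ β
  swap
  · refine ⟨ε / 32, by positivity, fun q _ χ h2 hχ β hz => ?_⟩
    have hq1 : (1 : ℝ) ≤ q := by exact_mod_cast NeZero.pos q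
    have hqe : (q : ℝ) ^ (-ε) ≤ 1 := Real.rpow_le_one_of_one_le_of_nonpos hq1 (by linarith)
    have : β < 1 - ε / 32 := by
      by_contra! h
      exact hex ⟨q, inferInstance, χ, β, h2, hχ, hz, h⟩
    nlinarith
  obtain ⟨q₁, _, χ₁, β₁, h1, n1, hz1, hβ1⟩ := hex
  have hlt1 := real_zero_lt_one n1 hz1
  have hq11 : (1 : ℝ) ≤ q₁ := by exact_mod_cast NeZero.pos q₁
  -- zero-free neighbourhood for χ₁
  obtain ⟨c₁, hc1, hc1'⟩ : ∃ c₁ : ℝ, 0 < c₁ ∧ ∀ β : ℝ, LFunction χ₁ β = 0 → c₁ ≤ 1 - β := by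
    have h0 : LFunction χ₁ 1 ≠ 0 := LFunction_apply_one_ne_zero n1
    have hc : ContinuousAt (LFunction χ₁) 1 := (differentiable_LFunction n1).continuous.continuousAt
    obtain ⟨r, hr, hr'⟩ := Metric.eventually_nhds_iff_ball.mp (hc.eventually_ne h0)
    refine ⟨r, hr, fun β hz => ?_⟩
    by_contra! h
    refine hr' β ?_ hz
    have := real_zero_lt_one n1 hz
    rw [mem_ball, dist_eq_norm, ← Complex.ofReal_one, ← Complex.ofReal_sub, Complex.norm_real,
      Real.norm_eq_abs, abs_lt]
    constructor <;> linarith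
  set c₂ := (1 - β₁) * (ε / 12) ^ 4 / (1296 * 16 * (32 * 81 ^ 5)) * (q₁ : ℝ) ^ (-ε) with hc2
  have hb1 : 0 < 1 - β₁ := by linarith
  have hc20 : 0 < c₂ := by positivity
  refine ⟨min 1 (min c₁ c₂), by positivity, fun q _ χ h2 hχ β hz => ?_⟩
  have hq1 : (1 : ℝ) ≤ q := by exact_mod_cast NeZero.pos q
  have hqe : (q : ℝ) ^ (-ε) ≤ 1 := Real.rpow_le_one_of_one_le_of_nonpos hq1 (by linarith)
  have hlt := real_zero_lt_one hχ hz
  have hq0 : 0 < (q : ℝ) ^ (-ε) := by positivity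
  have m1 := min_le_left 1 (min c₁ c₂)
  have m2 := (min_le_right 1 (min c₁ c₂)).trans (min_le_left c₁ c₂)
  have m3 := (min_le_right 1 (min c₁ c₂)).trans (min_le_right c₁ c₂)
  rcases le_or_gt β 0 with hb0 | hb0
  · nlinarith
  set ψ₁ := changeLevel (Dvd.intro q rfl : q₁ ∣ q₁ * q) χ₁ with hψ1
  set ψ₂ := changeLevel (Dvd.intro_left q₁ rfl : q ∣ q₁ * q) χ with hψ2
  have e1 : ψ₁ ^ 2 = 1 := by rw [hψ1, ← map_pow, h1, map_one]
  have e2 : ψ₂ ^ 2 = 1 := by rw [hψ2, ← map_pow, h2, map_one]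
  have f1 : ψ₁ ≠ 1 := fun h => n1 ((changeLevel_eq_one_iff _).mp h)
  have f2 : ψ₂ ≠ 1 := fun h => hχ ((changeLevel_eq_one_iff _).mp h)
  have z1 : LFunction ψ₁ β₁ = 0 := by
    rw [hψ1, LFunction_changeLevel _ _ (Or.inl n1), hz1, zero_mul]
  have z2 : LFunction ψ₂ β = 0 := by
    rw [hψ2, LFunction_changeLevel _ _ (Or.inl hχ), hz, zero_mul]
  by_cases f12 : ψ₁ * ψ₂ = 1
  · have heq : ψ₂ = ψ₁ := by
      have : ψ₁ * ψ₂ = ψ₁ * ψ₁ := by rw [f12, ← pow_two, e1]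
      exact mul_left_cancel this
    rw [heq, hψ1, LFunction_changeLevel _ _ (Or.inl n1)] at z2
    rcases mul_eq_zero.mp z2 with h | h
    · have := hc1' β h
      nlinarith
    · exfalso
      obtain ⟨p, hp, hp'⟩ := Finset.prod_eq_zero_iff.mp h
      have hp2 := (Nat.prime_of_mem_primeFactors hp).two_le
      have hn : ‖χ₁ p * (p : ℂ) ^ (-(β : ℂ))‖ < 1 := by
        rw [norm_mul, Complex.norm_natCast_cpow_of_pos (by omega)]
        have a1 : (p : ℝ) ^ (-(β : ℂ)).re < 1 :=
          Real.rpow_lt_one_of_one_lt_of_neg (by exact_mod_cast (by omega : 1 < p)) (by simpa)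
        have a2 := χ₁.norm_le_one (p : ZMod q₁)
        have a3 : 0 ≤ (p : ℝ) ^ (-(β : ℂ)).re := by positivity
        nlinarith
      rw [← sub_eq_zero.mp hp', norm_one] at hn
      exact lt_irrefl _ hn
  · have := siegel_two e1 e2 f1 f2 f12 he0 he1 hβ1 hlt1 z1 hlt z2
    push_cast at this
    rw [Real.mul_rpow (by linarith) (by linarith), ← mul_assoc, ← hc2] at this
    nlinarith

theorem siegel {ε : ℝ} (he0 : 0 < ε) : ∃ c : ℝ, 0 < c ∧
    ∀ (q : ℕ) [NeZero q] (χ : DirichletCharacter ℂ q), χ ^ 2 = 1 → χ ≠ 1 → ∀ β : ℝ,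
      LFunction χ β = 0 → c * (q : ℝ) ^ (-ε) ≤ 1 - β := by
  obtain ⟨c, hc, h⟩ := siegel_aux (ε := min ε 1) (by positivity) (min_le_right _ _)
  refine ⟨c, hc, fun q _ χ h2 hχ β hz => le_trans ?_ (h q χ h2 hχ β hz)⟩
  have hq1 : (1 : ℝ) ≤ q := by exact_mod_cast NeZero.pos q
  gcongr
  exact min_le_left _ _

end SW

namespace SW
open Complex Metric Set MeasureTheory Filter Topology DirichletCharacter

/-- the smoothing kernel -/
noncomputable def f0 (t : ℝ) : ℂ := ((max 0 (1 - t) : ℝ) : ℂ)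

lemma hasMellin_f0 {s : ℂ} (hs : 0 < s.re) : HasMellin f0 s (1 / (s * (s + 1))) := by
  have h1 := hasMellin_one_Ioc hs
  have h2 := hasMellin_cpow_Ioc (1 : ℂ) (s := s) (by simp; linarith)
  have h := hasMellin_sub h1.1 h2.1
  rw [h1.2, h2.2] at h
  have hs0 : s ≠ 0 := by rintro rfl; simp at hs
  have hs1 : s + 1 ≠ 0 := by
    intro h; have := congrArg Complex.re h; simp at this; linarith
  have e : 1 / s - 1 / (s + 1) = 1 / (s * (s + 1)) := by field_simp; ring
  rw [e] at h
  have hc : ∀ t ∈ Ioi (0 : ℝ), (t : ℂ) ^ (s - 1) • (indicator (Ioc 0 1) (fun _ => 1 : ℝ → ℂ) t -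
      indicator (Ioc 0 1) (fun t => (t : ℂ) ^ (1 : ℂ) : ℝ → ℂ) t) = (t : ℂ) ^ (s - 1) • f0 t := by
    intro t ht
    congr 1
    by_cases h1 : t ≤ 1
    · have hm : t ∈ Ioc (0 : ℝ) 1 := ⟨ht, h1⟩
      rw [indicator_of_mem hm, indicator_of_mem hm, f0, max_eq_right (by linarith)]
      simp
    · rw [indicator_of_notMem (fun h => h1 h.2), indicator_of_notMem (fun h => h1 h.2), f0,
        max_eq_left (by linarith)]
      simp
  refine ⟨(integrableOn_congr_fun hc measurableSet_Ioi).mp h.1, ?_⟩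
  rw [← h.2]
  exact (setIntegral_congr_fun measurableSet_Ioi hc).symm

lemma ker_bound {s : ℂ} (hs : 1 / 2 ≤ s.re) : ‖1 / (s * (s + 1))‖ ≤ 4 * (1 + s.im ^ 2)⁻¹ := by
  have a1 : ‖s‖ ^ 2 = s.re ^ 2 + s.im ^ 2 := by
    rw [← Complex.normSq_eq_norm_sq, Complex.normSq_apply]; ring
  have a2 : ‖s‖ ≤ ‖s + 1‖ := by
    have b : ‖s + 1‖ ^ 2 = (s.re + 1) ^ 2 + s.im ^ 2 := by
      rw [← Complex.normSq_eq_norm_sq, Complex.normSq_apply]; simp; ring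
    refine le_of_sq_le_sq ?_ (norm_nonneg _)
    nlinarith
  have a3 : (1 + s.im ^ 2) / 4 ≤ ‖s * (s + 1)‖ := by
    rw [norm_mul]
    nlinarith [norm_nonneg s]
  rw [norm_div, norm_one]
  calc 1 / ‖s * (s + 1)‖ ≤ 1 / ((1 + s.im ^ 2) / 4) := by gcongr
    _ = _ := by field_simp

/-- the integrand kernel on a vertical line -/
noncomputable def kf (X : ℝ) (s : ℂ) : ℂ := (X : ℂ) ^ s * (1 / (s * (s + 1)))

lemma norm_kf_le {X : ℝ} (hX : 0 < X) {s : ℂ} (hs : 1 / 2 ≤ s.re) :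
    ‖kf X s‖ ≤ X ^ s.re * (4 * (1 + s.im ^ 2)⁻¹) := by
  rw [kf, norm_mul, Complex.norm_cpow_eq_rpow_re_of_pos hX]
  gcongr
  exact ker_bound hs

lemma kf_cont {X κ : ℝ} (hX : 0 < X) (hκ : 1 / 2 ≤ κ) :
    Continuous fun y : ℝ => kf X (κ + y * I) := by
  have hX' : (X : ℂ) ≠ 0 := by exact_mod_cast hX.ne'
  unfold kf
  refine Continuous.mul ?_ (Continuous.div continuous_const (by fun_prop) ?_)
  · exact Continuous.const_cpow (by fun_prop) (Or.inl hX')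
  · intro y h
    rcases mul_eq_zero.mp h with h | h
    · have := congrArg Complex.re h; simp at this; linarith
    · have := congrArg Complex.re h; simp at this; linarith

lemma perron {a : ℕ → ℂ} {κ X : ℝ} (hκ : 1 < κ) (hX : 0 < X) (hs : LSeriesSummable a κ) :
    ∑ n ∈ Finset.Icc 1 ⌊X⌋₊, a n * (1 - n / X) =
      (1 / (2 * Real.pi) : ℝ) * ∫ y : ℝ, LSeries a (κ + y * I) * kf X (κ + y * I) := by
  set F : ℕ → ℝ → ℂ := fun n y => LSeries.term a (κ + y * I) n * kf X (κ + y * I) with hF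
  have hnt : ∀ n (y : ℝ), ‖LSeries.term a (κ + y * I) n‖ = ‖LSeries.term a κ n‖ := by
    intro n y
    rw [LSeries.norm_term_eq, LSeries.norm_term_eq]; simp
  have hkb : ∀ y : ℝ, ‖kf X (κ + y * I)‖ ≤ X ^ κ * (4 * (1 + y ^ 2)⁻¹) := by
    intro y
    have := norm_kf_le hX (s := κ + y * I) (by simp; linarith)
    simpa using this
  have hki : Integrable fun y : ℝ => kf X (κ + y * I) := by
    refine Integrable.mono' ((integrable_inv_one_add_sq.const_mul 4).const_mul (X ^ κ))
      (kf_cont hX (by linarith)).aestronglyMeasurable (ae_of_all _ hkb)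
  have hts : ∀ n : ℕ, Continuous fun y : ℝ => LSeries.term a (κ + y * I) n := by
    intro n
    rcases eq_or_ne n 0 with rfl | hn
    · simp; exact continuous_const
    simp only [LSeries.term_of_ne_zero hn]
    have hn' : (n : ℂ) ≠ 0 := by exact_mod_cast hn
    refine Continuous.div continuous_const ?_ ?_
    · exact Continuous.const_cpow (by fun_prop) (Or.inl hn')
    · intro y; simp [Complex.cpow_eq_zero_iff, hn']
  have hFn : ∀ n y, ‖F n y‖ = ‖LSeries.term a κ n‖ * ‖kf X (κ + y * I)‖ := by
    intro n y; rw [hF, norm_mul, hnt]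
  have hFi : ∀ n, Integrable (F n) := by
    intro n
    refine Integrable.mono' (hki.norm.const_mul ‖LSeries.term a κ n‖)
      ((hts n).mul (kf_cont hX (by linarith))).aestronglyMeasurable
      (ae_of_all _ fun y => (hFn n y).le)
  have hsum := hasSum_integral_of_summable_integral_norm hFi (by
    simp only [hFn, integral_const_mul]
    exact (hs.norm).mul_right _)
  have e1 : ∀ y : ℝ, ∑' n, F n y = LSeries a (κ + y * I) * kf X (κ + y * I) := by
    intro y; rw [hF, tsum_mul_right]; rfl
  simp only [e1] at hsum
  have e2 : ∀ n : ℕ, ∫ y, F n y = (2 * Real.pi : ℝ) *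
      (if n ∈ Finset.Icc 1 ⌊X⌋₊ then a n * (1 - n / X) else 0) := by
    intro n
    rcases eq_or_ne n 0 with rfl | hn
    · simp [hF]
    have hn0 : (0 : ℝ) < n := by exact_mod_cast Nat.pos_of_ne_zero hn
    have hx0 : 0 < (n : ℝ) / X := by positivity
    have hcont : ContinuousAt f0 ((n : ℝ) / X) := by
      unfold f0; fun_prop
    have hm : ∀ y : ℝ, mellin f0 (κ + y * I) =
        1 / (((κ : ℂ) + y * I) * ((κ + y * I) + 1)) :=
      fun y => (hasMellin_f0 (by simp; linarith)).2
    have hv : VerticalIntegrable (mellin f0) κ := by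
      rw [VerticalIntegrable]
      simp only [hm]
      refine Integrable.mono' (integrable_inv_one_add_sq.const_mul 4) ?_ (ae_of_all _ fun y => ?_)
      · have := kf_cont (X := 1) (κ := κ) one_pos (by linarith)
        simp only [kf, Complex.ofReal_one, Complex.one_cpow, one_mul] at this
        exact this.aestronglyMeasurable
      · have := ker_bound (s := κ + y * I) (by simp; linarith)
        simpa using this
    have hinv := mellinInv_mellin_eq κ f0 hx0 (hasMellin_f0 (by simpa using by linarith)).1 hv hcont
    rw [mellinInv] at hinv
    have e3 : ∀ y : ℝ, F n y = a n * (((((n : ℝ) / X : ℝ) : ℂ)) ^ (-((κ : ℂ) + y * I)) •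
        mellin f0 (κ + y * I)) := by
      intro y
      have hXa : (X : ℂ).arg ≠ Real.pi := by
        rw [Complex.arg_ofReal_of_nonneg hX.le]; exact Real.pi_pos.ne
      rw [hF, hm, smul_eq_mul]
      simp only [kf]
      rw [LSeries.term_of_ne_zero hn, div_eq_mul_inv (n : ℝ) X,
        Complex.ofReal_mul, Complex.mul_cpow_ofReal_nonneg hn0.le (by positivity), Complex.ofReal_inv,
        Complex.inv_cpow _ _ hXa, Complex.cpow_neg, Complex.cpow_neg, inv_inv, Complex.ofReal_natCast]
      ring
    simp only [e3, integral_const_mul]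
    have hpi : (Real.pi : ℂ) ≠ 0 := by exact_mod_cast Real.pi_ne_zero
    have hinv2 : ∫ y : ℝ, ((((n : ℝ) / X : ℝ) : ℂ)) ^ (-((κ : ℂ) + y * I)) •
        mellin f0 (κ + y * I) = (2 * Real.pi : ℝ) * f0 ((n : ℝ) / X) := by
      rw [← hinv, Complex.real_smul, ← mul_assoc, ← Complex.ofReal_mul, show
        2 * Real.pi * (1 / (2 * Real.pi)) = 1 by have := Real.pi_pos; field_simp, Complex.ofReal_one,
        one_mul]
    rw [hinv2]
    split_ifs with hmem
    · have : (n : ℝ) ≤ X := by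
        have := (Finset.mem_Icc.mp hmem).2
        exact (Nat.le_floor_iff hX.le).mp this
      have h1 : (n : ℝ) / X ≤ 1 := (div_le_one hX).mpr this
      rw [f0, max_eq_right (by linarith)]
      push_cast; ring
    · have : X < n := by
        by_contra! h
        exact hmem (Finset.mem_Icc.mpr ⟨Nat.pos_of_ne_zero hn, Nat.le_floor h⟩)
      have h1 : 1 ≤ (n : ℝ) / X := (one_le_div hX).mpr this.le
      rw [f0, max_eq_left (by linarith)]
      simp
  have e4 : HasSum (fun n : ℕ => ∫ y, F n y) ((2 * Real.pi : ℝ) *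
      ∑ n ∈ Finset.Icc 1 ⌊X⌋₊, a n * (1 - n / X)) := by
    simp only [e2]
    refine HasSum.mul_left _ ?_
    have : HasSum (fun n : ℕ => if n ∈ Finset.Icc 1 ⌊X⌋₊ then a n * (1 - (n : ℂ) / X) else 0)
        (∑ n ∈ Finset.Icc 1 ⌊X⌋₊, if n ∈ Finset.Icc 1 ⌊X⌋₊ then a n * (1 - (n : ℂ) / X) else 0) :=
      hasSum_sum_of_ne_finset_zero (fun n hn => if_neg hn)
    rwa [Finset.sum_congr rfl (fun n hn => if_pos hn)] at this
  rw [← e4.unique hsum, ← mul_assoc, ← Complex.ofReal_mul]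
  have : (1 / (2 * Real.pi) * (2 * Real.pi) : ℝ) = 1 := by
    have := Real.pi_pos; field_simp
  rw [this]; simp

lemma shift {H : ℂ → ℂ} {κ σ X T K K' : ℝ} (hκ : σ ≤ κ) (hκ2 : κ ≤ 2) (hσ : 1 / 2 ≤ σ) (hX : 0 < X)
    (hT : 1 ≤ T) (hint : AEStronglyMeasurable (fun y : ℝ => H (κ + y * I)) volume)
    (hK' : ∀ y : ℝ, ‖H (κ + y * I)‖ ≤ K')
    (hd : DifferentiableOn ℂ H (Icc σ κ ×ℂ Icc (-T) T))
    (hK : ∀ s ∈ (Icc σ κ ×ℂ Icc (-T) T), ‖H s‖ ≤ K) (hXX : 1 ≤ X) :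
    ‖∫ y : ℝ, H (κ + y * I) * kf X (κ + y * I)‖ ≤
      8 * X ^ κ * K' / T + 12 * X ^ κ * K / T ^ 2 + 4 * Real.pi * X ^ σ * K := by
  have hT0 : 0 < T := by linarith
  have hK0 : 0 ≤ K := (norm_nonneg _).trans (hK κ (by
    rw [mem_reProdIm]; simp [hT0.le, hκ]))
  have hK0' : 0 ≤ K' := (norm_nonneg _).trans (hK' 0)
  set g : ℂ → ℂ := fun s => H s * kf X s with hg
  have hgb : ∀ y : ℝ, ‖g (κ + y * I)‖ ≤ K' * (X ^ κ * (4 * (1 + y ^ 2)⁻¹)) := by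
    intro y
    have := norm_kf_le hX (s := κ + y * I) (by simp; linarith)
    rw [hg, norm_mul]
    gcongr
    · exact hK' y
    · simpa using this
  have hgi : Integrable fun y : ℝ => g (κ + y * I) :=
    Integrable.mono' (((integrable_inv_one_add_sq.const_mul 4).const_mul (X ^ κ)).const_mul K')
      (hint.mul (kf_cont hX (by linarith)).aestronglyMeasurable) (ae_of_all _ hgb)
  -- tails
  have tail : ∀ S : ℝ → ℝ, (∀ y, S y = y ∨ S y = -y) → ‖∫ y in Ioi T, g (κ + S y * I)‖ ≤ 4 * X ^ κ * K' / T := by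
    intro S hS
    have hi : IntegrableOn (fun y : ℝ => 4 * X ^ κ * K' * y ^ (-2 : ℝ)) (Ioi T) :=
      (integrableOn_Ioi_rpow_of_lt (by norm_num) hT0).const_mul _
    have := MeasureTheory.norm_integral_le_of_norm_le (f := fun y => g (κ + S y * I)) hi
      ((ae_restrict_iff' measurableSet_Ioi).mpr (ae_of_all _ fun y hy => ?_))
    · refine this.trans (le_of_eq ?_)
      rw [integral_const_mul, integral_Ioi_rpow_of_lt (by norm_num) hT0]
      norm_num
      rw [Real.rpow_neg_one]; rfl
    · have hy0 : 0 < y := hT0.trans hy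
      have e : S y ^ 2 = y ^ 2 := by rcases hS y with h | h <;> rw [h]; ring
      refine (hgb (S y)).trans ?_
      rw [e, Real.rpow_neg hy0.le]
      calc _ ≤ K' * (X ^ κ * (4 * (y ^ 2)⁻¹)) := by gcongr; linarith
        _ = _ := by norm_num; ring
  have split : ∫ y : ℝ, g (κ + y * I) = (∫ y in Ioi T, g (κ + (-y : ℝ) * I)) +
      (∫ y in (-T)..T, g (κ + y * I)) + ∫ y in Ioi T, g (κ + y * I) := by
    have h1 := intervalIntegral.integral_Iic_add_Ioi (b := T) hgi.integrableOn hgi.integrableOn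
    have h2 := intervalIntegral.integral_Iic_sub_Iic (a := -T) (b := T) (μ := volume)
      (f := fun y : ℝ => g (κ + y * I)) hgi.integrableOn hgi.integrableOn
    have h3 := integral_comp_neg_Ioi (c := T) (f := fun y : ℝ => g (κ + y * I))
    rw [h3, ← h1, ← h2]; ring
  -- rectangle
  have hkd : ∀ s : ℂ, 1 / 2 ≤ s.re → DifferentiableAt ℂ (kf X) s := by
    intro s hs
    have hX' : (X : ℂ) ≠ 0 := by exact_mod_cast hX.ne'
    unfold kf
    refine DifferentiableAt.mul (DifferentiableAt.const_cpow differentiableAt_id (Or.inl hX'))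
      (DifferentiableAt.div (by fun_prop) (by fun_prop) ?_)
    intro h
    rcases mul_eq_zero.mp h with h | h
    · have := congrArg Complex.re h; simp at this; linarith
    · have := congrArg Complex.re h; simp at this; linarith
  have hre : ∀ s ∈ (Icc σ κ ×ℂ Icc (-T) T), 1 / 2 ≤ s.re := by
    intro s hs
    rw [mem_reProdIm] at hs
    linarith [hs.1.1]
  have hgd : DifferentiableOn ℂ g (Icc σ κ ×ℂ Icc (-T) T) := fun s hs =>
    (hd s hs).mul (hkd s (hre s hs)).differentiableWithinAt
  have rect := Complex.integral_boundary_rect_eq_zero_of_differentiableOn g (σ + (-T : ℝ) * I) (κ + (T : ℝ) * I)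
    (by simpa [uIcc_of_le hκ, uIcc_of_le (by linarith : -T ≤ T)] using hgd)
  simp only [add_re, mul_re, ofReal_re, I_re, mul_zero, ofReal_im, I_im, mul_one, sub_self, add_zero,
    add_im, mul_im, zero_add] at rect
  have horiz : ∀ τ : ℝ, τ = T ∨ τ = -T → ‖∫ x in σ..κ, g (x + τ * I)‖ ≤ 6 * X ^ κ * K / T ^ 2 := by
    intro τ hτ
    have := intervalIntegral.norm_integral_le_of_norm_le_const (a := σ) (b := κ)
      (f := fun x : ℝ => g (x + τ * I)) (C := 4 * X ^ κ * K / T ^ 2) ?_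
    · refine this.trans ?_
      rw [abs_of_nonneg (by linarith)]
      calc _ ≤ 4 * X ^ κ * K / T ^ 2 * (3 / 2) := by gcongr; linarith
        _ = _ := by ring
    · intro x hx
      rw [uIoc_of_le hκ] at hx
      have e : τ ^ 2 = T ^ 2 := by rcases hτ with h | h <;> rw [h]; ring
      have hmem : (x + τ * I : ℂ) ∈ (Icc σ κ ×ℂ Icc (-T) T) := by
        rw [mem_reProdIm]
        simp only [add_re, mul_re, ofReal_re, I_re, mul_zero, ofReal_im, I_im, mul_one, sub_self, add_zero,
          add_im, mul_im, zero_add]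
        refine ⟨⟨hx.1.le, hx.2⟩, ?_⟩
        rcases hτ with h | h <;> rw [h] <;> constructor <;> linarith
      have b1 := norm_kf_le hX (hre _ hmem)
      have b2 := hK _ hmem
      simp only [add_re, mul_re, ofReal_re, I_re, mul_zero, ofReal_im, I_im, mul_one, sub_self, add_zero,
        add_im, mul_im, zero_add] at b1
      rw [hg, norm_mul]
      calc _ ≤ K * (X ^ x * (4 * (1 + τ ^ 2)⁻¹)) := by gcongr
        _ ≤ K * (X ^ κ * (4 * (T ^ 2)⁻¹)) := by
            rw [e]
            gcongr
            · exact hx.2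
            · linarith
        _ = _ := by ring
  have left : ‖∫ y in (-T)..T, g (σ + y * I)‖ ≤ 4 * Real.pi * X ^ σ * K := by
    have hi : Integrable fun y : ℝ => 4 * X ^ σ * K * (1 + y ^ 2)⁻¹ :=
      integrable_inv_one_add_sq.const_mul _
    have := intervalIntegral.norm_integral_le_of_norm_le (a := -T) (b := T) (μ := volume)
      (f := fun y : ℝ => g (σ + y * I)) (g := fun y : ℝ => 4 * X ^ σ * K * (1 + y ^ 2)⁻¹) (by linarith)
      (ae_of_all _ fun y hy => ?_) hi.intervalIntegrable
    · refine this.trans ?_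
      rw [intervalIntegral.integral_of_le (by linarith)]
      calc _ ≤ ∫ y : ℝ, 4 * X ^ σ * K * (1 + y ^ 2)⁻¹ :=
            setIntegral_le_integral hi (ae_of_all _ fun y => by positivity)
        _ = _ := by rw [integral_const_mul, integral_univ_inv_one_add_sq]; ring
    · have hmem : (σ + y * I : ℂ) ∈ (Icc σ κ ×ℂ Icc (-T) T) := by
        rw [mem_reProdIm]
        simp only [add_re, mul_re, ofReal_re, I_re, mul_zero, ofReal_im, I_im, mul_one, sub_self, add_zero,
          add_im, mul_im, zero_add]
        exact ⟨⟨le_rfl, hκ⟩, ⟨hy.1.le, hy.2⟩⟩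
      have b1 := norm_kf_le hX (hre _ hmem)
      have b2 := hK _ hmem
      simp only [add_re, mul_re, ofReal_re, I_re, mul_zero, ofReal_im, I_im, mul_one, sub_self, add_zero,
        add_im, mul_im, zero_add] at b1
      rw [hg, norm_mul]
      calc _ ≤ K * (X ^ σ * (4 * (1 + y ^ 2)⁻¹)) := by gcongr
        _ = _ := by ring
  have mid : ‖∫ y in (-T)..T, g (κ + y * I)‖ ≤ 12 * X ^ κ * K / T ^ 2 + 4 * Real.pi * X ^ σ * K := by
    have e : I • (∫ y in (-T)..T, g (κ + y * I)) = I • (∫ y in (-T)..T, g (σ + y * I)) -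
        (∫ x in σ..κ, g (x + (-T : ℝ) * I)) + ∫ x in σ..κ, g (x + (T : ℝ) * I) := by
      linear_combination rect
    have n1 : ‖I • (∫ y in (-T)..T, g (κ + y * I))‖ = ‖∫ y in (-T)..T, g (κ + y * I)‖ := by
      rw [norm_smul, Complex.norm_I, one_mul]
    rw [← n1, e]
    calc _ ≤ ‖I • (∫ y in (-T)..T, g (σ + y * I))‖ + ‖∫ x in σ..κ, g (x + (-T : ℝ) * I)‖ +
          ‖∫ x in σ..κ, g (x + (T : ℝ) * I)‖ :=
          (norm_add_le _ _).trans (by gcongr; exact norm_sub_le _ _)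
      _ ≤ 4 * Real.pi * X ^ σ * K + 6 * X ^ κ * K / T ^ 2 + 6 * X ^ κ * K / T ^ 2 := by
          rw [norm_smul, Complex.norm_I, one_mul]
          gcongr
          · exact horiz (-T) (Or.inr rfl)
          · exact horiz T (Or.inl rfl)
      _ = _ := by ring
  rw [show (∫ y : ℝ, H (κ + y * I) * kf X (κ + y * I)) = ∫ y : ℝ, g (κ + y * I) from rfl, split]
  calc _ ≤ ‖∫ y in Ioi T, g (κ + (-y : ℝ) * I)‖ + ‖∫ y in (-T)..T, g (κ + y * I)‖ +
        ‖∫ y in Ioi T, g (κ + y * I)‖ := norm_add₃_le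
    _ ≤ 4 * X ^ κ * K' / T + (12 * X ^ κ * K / T ^ 2 + 4 * Real.pi * X ^ σ * K) +
        4 * X ^ κ * K' / T := by
        gcongr
        · exact tail (fun y => -y) fun y => Or.inr rfl
        · exact tail (fun y => y) fun y => Or.inl rfl
    _ = _ := by ring

end SW

namespace SW
open Complex Metric Set MeasureTheory Filter Topology DirichletCharacter

lemma log_le_two_sqrt {L : ℝ} (hL : 1 ≤ L) : Real.log L ≤ 2 * √L := by
  have h := Real.log_le_sub_one_of_pos (Real.sqrt_pos.mpr (by linarith : 0 < L))
  rw [Real.log_sqrt (by linarith)] at h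
  linarith

lemma LL_le {M B L : ℝ} (hM : 1 ≤ M) (hB : 0 < B) (hL : 1 ≤ L) {N : ℕ} [NeZero N]
    (hN : (N : ℝ) ≤ M * L ^ B) {t : ℝ} (ht : |t| ≤ Real.exp √L + 1) :
    LL N t ≤ (Real.log M + 2 * B + 5) * √L := by
  have hs1 : 1 ≤ √L := Real.one_le_sqrt.mpr hL
  have hN0 : (0 : ℝ) < N := by exact_mod_cast NeZero.pos N
  have h0 : (N : ℝ) * (|t| + 3) ≤ (M * L ^ B) * (5 * Real.exp √L) := by
    have := Real.one_le_exp (Real.sqrt_nonneg L)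
    gcongr
    linarith
  have h1 : LL N t ≤ Real.log ((M * L ^ B) * (5 * Real.exp √L)) := by
    unfold LL
    exact Real.log_le_log (by positivity) h0
  have hLB : 0 < L ^ B := by positivity
  rw [Real.log_mul (by positivity) (by positivity), Real.log_mul (by positivity) (by positivity),
    Real.log_mul (by positivity) (by positivity), Real.log_exp, Real.log_rpow (by linarith)] at h1
  have h2 := log_le_two_sqrt hL
  have h3 : Real.log 5 ≤ 4 := by
    have := Real.log_le_sub_one_of_pos (by norm_num : (0:ℝ) < 5); linarith
  have h4 : 0 ≤ Real.log M := Real.log_nonneg hM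
  nlinarith

lemma region {M B : ℝ} (hM : 1 ≤ M) (hB : 0 < B) : ∃ c : ℝ, 0 < c ∧ c ≤ 1 / 100 ∧
    ∀ L : ℝ, 1 ≤ L → ∀ (N : ℕ) [NeZero N], (N : ℝ) ≤ M * L ^ B →
    ∀ (χ : DirichletCharacter ℂ N) (ρ : ℂ), G χ ρ = 0 → |ρ.im| ≤ Real.exp √L + 1 →
      ρ.re < 1 - c / √L := by
  obtain ⟨cs, hcs, hsie⟩ := siegel (ε := 1 / (2 * B)) (by positivity)
  have hlM : 0 ≤ Real.log M := Real.log_nonneg hM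
  set D := Real.log M + 2 * B + 5 with hD
  have hD0 : 0 < D := by positivity
  set c1 : ℝ := 1 / 10 ^ 12 / 40 / D with hc1
  have hc10 : 0 < c1 := by positivity
  set c2 : ℝ := cs * M ^ (-(1 / (2 * B))) / 2 with hc2
  have hc20 : 0 < c2 := by positivity
  refine ⟨min (1 / 100) (min c1 c2), by positivity, min_le_left _ _, ?_⟩
  intro L hL N _ hN χ ρ hρ hT
  set c := min (1 / 100) (min c1 c2) with hc
  have hcc1 : c ≤ c1 := (min_le_right _ _).trans (min_le_left _ _)
  have hcc2 : c ≤ c2 := (min_le_right _ _).trans (min_le_right _ _)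
  have hs1 : 1 ≤ √L := Real.one_le_sqrt.mpr hL
  have hN0 : (0 : ℝ) < N := by exact_mod_cast NeZero.pos N
  by_contra! hcon
  have hLL := LL_le hM hB hL hN hT
  have hLL1 := one_le_LL (q := N) ρ.im
  have h1 : c / √L ≤ 1 / 10 ^ 12 / 40 / LL N ρ.im := by
    calc c / √L ≤ c1 / √L := by gcongr
      _ = 1 / 10 ^ 12 / 40 / (D * √L) := by rw [hc1, div_div]
      _ ≤ _ := by gcongr
  obtain ⟨hq, hne, him⟩ := zfr χ hρ (by linarith)
  have hρ' : (ρ.re : ℂ) = ρ := by apply Complex.ext <;> simp [him]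
  rw [G_of_ne hne, ← hρ'] at hρ
  have h2 := hsie N χ hq hne ρ.re hρ
  have h3 : M ^ (-(1 / (2 * B))) / √L ≤ (N : ℝ) ^ (-(1 / (2 * B))) := by
    calc M ^ (-(1 / (2 * B))) / √L = (M * L ^ B) ^ (-(1 / (2 * B))) := by
          rw [Real.mul_rpow (by linarith) (by positivity), ← Real.rpow_mul (by linarith),
            show B * -(1 / (2 * B)) = -(1 / 2) by field_simp, Real.rpow_neg (show 0 ≤ L by linarith),
            ← Real.sqrt_eq_rpow]
          rfl
      _ ≤ _ := Real.rpow_le_rpow_of_nonpos hN0 hN (by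
          have : 0 < 1 / (2 * B) := by positivity
          linarith)
  have h4 : 2 * c2 / √L ≤ 1 - ρ.re := by
    calc 2 * c2 / √L = cs * (M ^ (-(1 / (2 * B))) / √L) := by rw [hc2]; ring
      _ ≤ cs * (N : ℝ) ^ (-(1 / (2 * B))) := by gcongr
      _ ≤ _ := h2
  have h5 : c / √L ≤ c2 / √L := by gcongr
  have h6 : 0 < c2 / √L := by positivity
  have h7 : 2 * c2 / √L = c2 / √L + c2 / √L := by ring
  linarith

end SW

namespace SW
open Complex Metric Set MeasureTheory Filter Topology DirichletCharacter

variable {q : ℕ} [NeZero q]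

open Classical in
/-- Coefficients `χ(n)Λ(n)`, minus one for the trivial character. -/
noncomputable def ea (χ : DirichletCharacter ℂ q) (n : ℕ) : ℂ :=
  χ n * (ArithmeticFunction.vonMangoldt n : ℂ) - if χ = 1 then 1 else 0

open Classical in
/-- Continuation of the Dirichlet series of `ea`. -/
noncomputable def Hf (χ : DirichletCharacter ℂ q) (s : ℂ) : ℂ :=
  -(deriv (G χ) s / G χ s) - if χ = 1 then 1 + s * MI EZ s else 0

lemma ea_summable (χ : DirichletCharacter ℂ q) {s : ℂ} (hs : 1 < s.re) :
    LSeriesSummable (ea χ) s := by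
  have h1 := LSeriesSummable_twist_vonMangoldt χ hs
  by_cases hc : χ = 1
  · have h2 := h1.sub (LSeriesSummable_one_iff.mpr hs)
    convert h2 using 1
    ext n; simp [ea, hc]
  · convert h1 using 1
    ext n; simp [ea, hc]

lemma LSeries_ea (χ : DirichletCharacter ℂ q) {s : ℂ} (hs : 1 < s.re) :
    LSeries (ea χ) s = Hf χ s := by
  have h1 := LSeriesSummable_twist_vonMangoldt χ hs
  have h3 := DL_eq χ hs
  by_cases hc : χ = 1
  · have h2 := LSeries_sub h1 (LSeriesSummable_one_iff.mpr hs)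
    have e : ea χ = ((fun n : ℕ => χ n) * fun n : ℕ => (ArithmeticFunction.vonMangoldt n : ℂ)) - 1 := by
      ext n; simp [ea, hc]
    rw [e, h2, LSeries_one_eq_riemannZeta hs, zeta_eq_aux hs]
    change DL χ s - _ = _
    have hs1 : s - 1 ≠ 0 := sub_ne_zero.mpr (by rintro rfl; simp at hs)
    rw [h3, Hf, if_pos hc, if_pos hc]
    field_simp
    ring
  · have e : ea χ = ((fun n : ℕ => χ n) * fun n : ℕ => (ArithmeticFunction.vonMangoldt n : ℂ)) := by
      ext n; simp [ea, hc]
    rw [e]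
    change DL χ s = _
    rw [h3, Hf, if_neg hc, if_neg hc]; simp

lemma norm_ea_le (χ : DirichletCharacter ℂ q) (n : ℕ) : ‖ea χ n‖ ≤ 1 + Real.log n := by
  have h1 : ‖χ n * (ArithmeticFunction.vonMangoldt n : ℂ)‖ ≤ Real.log n := by
    rw [norm_mul, Complex.norm_real, Real.norm_of_nonneg ArithmeticFunction.vonMangoldt_nonneg]
    have := χ.norm_le_one (n : ZMod q)
    have h2 := ArithmeticFunction.vonMangoldt_le_log (n := n)
    have h3 := ArithmeticFunction.vonMangoldt_nonneg (n := n)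
    nlinarith
  unfold ea
  refine (norm_sub_le _ _).trans ?_
  have : ‖(if χ = 1 then (1 : ℂ) else 0)‖ ≤ 1 := by split_ifs <;> simp
  linarith

lemma norm_Hf_line (χ : DirichletCharacter ℂ q) {θ : ℝ} (h0 : 0 < θ) (h1 : θ ≤ 1 / 2) (y : ℝ) :
    ‖Hf χ ((1 + 2 * θ : ℝ) + y * I)‖ ≤ 3 / θ ^ 2 := by
  set s : ℂ := (1 + 2 * θ : ℝ) + y * I with hs
  have hre : s.re = 1 + 2 * θ := by simp [hs]
  rw [← LSeries_ea χ (by rw [hre]; linarith)]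
  have hsum : Summable fun n : ℕ => 1 / (n : ℝ) ^ (1 + θ) :=
    Real.summable_one_div_nat_rpow.mpr (by linarith)
  have hb : ‖LSeries (ea χ) s‖ ≤ (1 / θ) * ∑' n : ℕ, 1 / (n : ℝ) ^ (1 + θ) := by
    refine tsum_of_norm_bounded (hsum.hasSum.mul_left _) fun n => ?_
    rw [LSeries.norm_term_eq]
    split_ifs with hn
    · positivity
    · have hn0 : (0 : ℝ) < n := by exact_mod_cast Nat.pos_of_ne_zero hn
      have h2 := Real.log_le_sub_one_of_pos (Real.rpow_pos_of_pos hn0 θ)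
      rw [Real.log_rpow hn0] at h2
      have h3 := norm_ea_le χ n
      have h4 : ‖ea χ n‖ ≤ (n : ℝ) ^ θ / θ := by
        rw [le_div_iff₀ h0]
        nlinarith
      rw [hre]
      calc ‖ea χ n‖ / (n : ℝ) ^ (1 + 2 * θ) ≤ ((n : ℝ) ^ θ / θ) / (n : ℝ) ^ (1 + 2 * θ) := by gcongr
        _ = _ := by
          rw [show 1 + 2 * θ = (1 + θ) + θ by ring, Real.rpow_add hn0]
          have := Real.rpow_pos_of_pos hn0 θ
          have := Real.rpow_pos_of_pos hn0 (1 + θ)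
          field_simp
  have h5 := tsum_rpow_le (σ := 1 + θ) (by linarith) (by linarith)
  calc _ ≤ _ := hb
    _ ≤ (1 / θ) * (3 / (1 + θ - 1)) := by gcongr
    _ = _ := by rw [show 1 + θ - 1 = θ by ring]; field_simp

lemma Hf_diffAt (χ : DirichletCharacter ℂ q) {s : ℂ} (hs : 0 < s.re) (h : G χ s ≠ 0) :
    DifferentiableAt ℂ (Hf χ) s := by
  have h1 : DifferentiableAt ℂ (deriv (G χ)) s :=
    ((G_diff χ).differentiableOn.deriv isOpen_univ).differentiableAt (by simp)
  have h2 := differentiableAt_MI measurable_EZ norm_EZ hs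
  unfold Hf
  refine ((h1.div (G_diff χ s) h).neg).sub ?_
  split_ifs <;> fun_prop

lemma norm_Hf_le (χ : DirichletCharacter ℂ q) {η T : ℝ} (h0 : 0 < η) (h1 : η ≤ 1 / 8) (hT : 1 ≤ T)
    (hz : ∀ ρ, G χ ρ = 0 → |ρ.im| ≤ T + 1 → ρ.re < 1 - η) {s : ℂ} (hs1 : 1 - η / 2 ≤ s.re)
    (hs2 : s.re ≤ 1 + η) (hs3 : |s.im| ≤ T) :
    ‖Hf χ s‖ ≤ 63 * Real.log (12 * q * (T + 4) ^ 2 / η ^ 2) / η + 7 * T := by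
  set c : ℂ := ⟨1 + η, s.im⟩ with hc
  have hq : (0 : ℝ) < q := by exact_mod_cast NeZero.pos q
  have hball : ∀ z ∈ ball c (2 * η), 1 - η < z.re ∧ z.re < 2 ∧ |z.im| ≤ T + 1 := by
    intro z hz
    rw [mem_ball, dist_eq_norm] at hz
    have a1 := (Complex.abs_re_le_norm (z - c)).trans_lt hz
    have a2 := (Complex.abs_im_le_norm (z - c)).trans_lt hz
    simp only [hc, Complex.sub_re, Complex.sub_im] at a1 a2
    rw [abs_lt] at a1 a2
    rw [abs_le] at hs3 ⊢
    refine ⟨by linarith, by linarith, by linarith, by linarith⟩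
  have hG := logDeriv_bound (f := G χ) (G_diff χ) (c := c) (R := 2 * η)
    (A := 4 * q * (T + 4) ^ 2) (by positivity) (fun z hz => by
      obtain ⟨b1, b2, b3⟩ := hball z hz
      refine (norm_G_le χ (by linarith)).trans ?_
      have := Complex.norm_le_abs_re_add_abs_im z
      rw [abs_of_pos (show 0 < z.re by linarith)] at this
      exact mul_le_mul_of_nonneg_left (pow_le_pow_left₀ (by positivity)
        (show ‖z‖ + 1 ≤ T + 4 by linarith) 2) (by positivity)) (fun z hzb h => by
      obtain ⟨b1, b2, b3⟩ := hball z hzb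
      have := hz z h b3
      linarith) s (by
      have : s - c = ((s.re - (1 + η) : ℝ) : ℂ) := by
        apply Complex.ext <;> simp [hc]
      rw [this, Complex.norm_real, Real.norm_eq_abs, abs_le]
      constructor <;> linarith)
  have hcre : c.re = 1 + η := rfl
  have hGc := norm_G_ge χ (s := c) (by rw [hcre]; linarith) (by rw [hcre]; linarith)
  rw [hcre, add_sub_cancel_left] at hGc
  have hlog : Real.log (4 * q * (T + 4) ^ 2 / ‖G χ c‖) ≤
      Real.log (12 * q * (T + 4) ^ 2 / η ^ 2) := by
    have : 0 < ‖G χ c‖ := lt_of_lt_of_le (by positivity) hGc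
    refine Real.log_le_log (by positivity) ?_
    calc 4 * q * (T + 4) ^ 2 / ‖G χ c‖ ≤ 4 * q * (T + 4) ^ 2 / (η ^ 2 / 3) := by gcongr
      _ = _ := by field_simp; ring
  have hG2 : ‖deriv (G χ) s / G χ s‖ ≤ 63 * Real.log (12 * q * (T + 4) ^ 2 / η ^ 2) / η := by
    refine hG.trans ?_
    calc _ ≤ 126 * Real.log (12 * q * (T + 4) ^ 2 / η ^ 2) / (2 * η) := by gcongr
      _ = _ := by field_simp; ring
  have hE : ‖(if χ = 1 then 1 + s * MI EZ s else 0)‖ ≤ 7 * T := by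
    split_ifs
    · have hsr : 1 / 2 ≤ s.re := by linarith
      have m1 := norm_MI_le norm_EZ (s := s) (by linarith)
      have m2 : 1 / s.re ≤ 2 := by rw [div_le_iff₀ (by linarith)]; linarith
      have m3 := Complex.norm_le_abs_re_add_abs_im s
      rw [abs_of_pos (show 0 < s.re by linarith)] at m3
      calc ‖1 + s * MI EZ s‖ ≤ 1 + ‖s‖ * ‖MI EZ s‖ := by
            refine (norm_add_le _ _).trans ?_
            rw [norm_one, norm_mul]
        _ ≤ 1 + (2 + T) * 2 := by
            gcongr
            · linarith
            · linarith
        _ ≤ 7 * T := by linarith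
    · rw [norm_zero]; positivity
  unfold Hf
  refine (norm_sub_le _ _).trans ?_
  rw [norm_neg]
  linarith

end SW

namespace SW
open Complex Metric Set MeasureTheory Filter Topology DirichletCharacter

lemma log_bound {M B c u : ℝ} (hM : 1 ≤ M) (hB : 0 < B) (hc : 0 < c) (hc1 : c ≤ 1 / 100)
    (hu : 1 ≤ u) {N : ℝ} (hN0 : 0 < N) (hN : N ≤ M * (u ^ 2) ^ B) :
    Real.log (12 * N * (Real.exp (c * u / 8) + 4) ^ 2 / (c / u) ^ 2) ≤
      (Real.log M + 2 * B + 38 - 2 * Real.log c) * u := by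
  have hu0 : 0 < u := by linarith
  set T := Real.exp (c * u / 8) with hT
  have hT1 : 1 ≤ T := Real.one_le_exp (by positivity)
  have hle : 12 * N * (T + 4) ^ 2 / (c / u) ^ 2 ≤
      12 * (M * (u ^ 2) ^ B) * (5 * T) ^ 2 / (c / u) ^ 2 := by
    gcongr; linarith
  have h1 := Real.log_le_log (by positivity) hle
  have h2 : Real.log (12 * (M * (u ^ 2) ^ B) * (5 * T) ^ 2 / (c / u) ^ 2) =
      Real.log 12 + Real.log M + 2 * B * Real.log u + 2 * Real.log 5 + c * u / 4
       - 2 * Real.log c + 2 * Real.log u := by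
    rw [Real.log_div (by positivity) (by positivity), Real.log_mul (by positivity) (by positivity),
      Real.log_mul (by positivity) (by positivity), Real.log_mul (by positivity) (by positivity),
      Real.log_rpow (by positivity), Real.log_pow, Real.log_pow, Real.log_pow,
      Real.log_mul (by positivity) (by positivity), Real.log_div (by positivity) (by positivity),
      hT, Real.log_exp]
    push_cast; ring
  have h3 := Real.log_le_sub_one_of_pos hu0
  have h4 := Real.log_le_sub_one_of_pos (by norm_num : (0:ℝ) < 12)
  have h5 := Real.log_le_sub_one_of_pos (by norm_num : (0:ℝ) < 5)
  have h6 := Real.log_nonneg hM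
  have h7 : Real.log c ≤ 0 := Real.log_nonpos hc.le (by linarith)
  have h8 : 2 * B * Real.log u ≤ 2 * B * u := by gcongr; linarith
  nlinarith

lemma sq_le_exp {c u : ℝ} (hc : 0 < c) (hu : 0 ≤ u) :
    u ^ 2 * Real.exp (-(c * u)) ≤ (4 / c) ^ 2 * Real.exp (-(c / 2 * u)) := by
  have h1 : c * u / 4 ≤ Real.exp (c * u / 4) := by
    have := Real.add_one_le_exp (c * u / 4); linarith
  have h2 : (c * u / 4) ^ 2 ≤ Real.exp (c * u / 4) ^ 2 := by gcongr
  rw [← Real.exp_nat_mul] at h2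
  have h3 : u ^ 2 ≤ (4 / c) ^ 2 * Real.exp (c / 2 * u) := by
    calc u ^ 2 = (4 / c) ^ 2 * (c * u / 4) ^ 2 := by field_simp
      _ ≤ (4 / c) ^ 2 * Real.exp ((2 : ℕ) * (c * u / 4)) := by gcongr
      _ = _ := by congr 2; push_cast; ring
  calc _ ≤ (4 / c) ^ 2 * Real.exp (c / 2 * u) * Real.exp (-(c * u)) := by gcongr
    _ = _ := by rw [mul_assoc, ← Real.exp_add]; congr 2; ring

lemma char_sum {M B : ℝ} (hM : 1 ≤ M) (hB : 0 < B) : ∃ c : ℝ, 0 < c ∧ c ≤ 1 ∧ ∃ C : ℝ, 0 < C ∧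
    ∀ X : ℝ, 0 < X → 1 ≤ Real.log X → ∀ (N : ℕ) [NeZero N], (N : ℝ) ≤ M * Real.log X ^ B →
    ∀ (χ : DirichletCharacter ℂ N),
      ‖∑ n ∈ Finset.Icc 1 ⌊X⌋₊, ea χ n * (1 - n / X)‖ ≤ C * X * Real.exp (-(c * √(Real.log X))) := by
  obtain ⟨c, hc, hc1, hreg⟩ := region hM hB
  have h7 : Real.log c ≤ 0 := Real.log_nonpos hc.le (by linarith)
  have h6 := Real.log_nonneg hM
  set D := Real.log M + 2 * B + 38 - 2 * Real.log c with hD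
  have hD0 : 0 < D := by rw [hD]; linarith
  set K1 := 63 * D / c + 7 with hK1
  have hK10 : 0 < K1 := by positivity
  set C1 := 24 * 1024 / c ^ 2 + 12 * K1 + 4 * Real.pi * K1 with hC1
  have hpi := Real.pi_pos
  have hC10 : 0 < C1 := by positivity
  refine ⟨c / 16 / 2, by positivity, by linarith, C1 * (4 / (c / 16)) ^ 2, by positivity, ?_⟩
  intro X hX0 hL N _ hN χ
  set L := Real.log X with hLdef
  set u := √L with hu
  have hu1 : 1 ≤ u := Real.one_le_sqrt.mpr hL
  have hu0 : 0 < u := by linarith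
  have hLu : L = u ^ 2 := (Real.sq_sqrt (by linarith)).symm
  have hN0 : (0 : ℝ) < N := by exact_mod_cast NeZero.pos N
  have hX1 : 1 ≤ X := by
    rw [← Real.log_nonneg_iff hX0]; linarith
  set η := c / u with hη
  have hη0 : 0 < η := by positivity
  have hηc : η ≤ c := div_le_self hc.le hu1
  set T := Real.exp (c * u / 8) with hT
  have hT1 : 1 ≤ T := Real.one_le_exp (by positivity)
  have hTu : T ≤ Real.exp u := Real.exp_le_exp.mpr (by nlinarith)
  set θ := η / 32 with hθ
  have hθ0 : 0 < θ := by positivity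
  set κ := 1 + 2 * θ with hκ
  set σ := 1 - η / 2 with hσ
  have hz : ∀ ρ, G χ ρ = 0 → |ρ.im| ≤ T + 1 → ρ.re < 1 - η := fun ρ h1 h2 =>
    hreg L hL N hN χ ρ h1 (by linarith)
  set K := K1 * L * T with hK
  have hKb : ∀ s ∈ (Icc σ κ ×ℂ Icc (-T) T), ‖Hf χ s‖ ≤ K := by
    intro s hs
    rw [mem_reProdIm] at hs
    have b := norm_Hf_le χ hη0 (by linarith) hT1 hz hs.1.1 (hs.1.2.trans (by linarith))
      (abs_le.mpr hs.2)
    have lb := log_bound hM hB hc hc1 hu1 hN0 (by rwa [← hLu])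
    rw [← hD] at lb
    calc _ ≤ _ := b
      _ ≤ 63 * (D * u) / η + 7 * T := by gcongr
      _ = 63 * D / c * L * 1 + 7 * 1 * T := by rw [hη, hLu]; field_simp
      _ ≤ 63 * D / c * L * T + 7 * L * T := by gcongr
      _ = K := by rw [hK, hK1]; ring
  have hd : DifferentiableOn ℂ (Hf χ) (Icc σ κ ×ℂ Icc (-T) T) := by
    intro s hs
    rw [mem_reProdIm] at hs
    have hs1 := hs.1.1
    refine (Hf_diffAt χ (by linarith) fun h0 => ?_).differentiableWithinAt
    have := hz s h0 ((abs_le.mpr hs.2).trans (by linarith))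
    linarith
  have hline : ∀ y : ℝ, ((κ : ℂ) + y * I).re = κ := by intro y; simp
  have hmeas : AEStronglyMeasurable (fun y : ℝ => Hf χ (κ + y * I)) volume := by
    refine Continuous.aestronglyMeasurable ?_
    rw [continuous_iff_continuousAt]
    intro y
    have hd1 : ContinuousAt (Hf χ) ((κ : ℂ) + y * I) :=
      (Hf_diffAt χ (by rw [hline]; linarith) (G_ne_zero χ (by rw [hline]; linarith))).continuousAt
    exact ContinuousAt.comp (f := fun y : ℝ => (κ : ℂ) + y * I) hd1 (by fun_prop)
  have hsh := shift (H := Hf χ) (κ := κ) (σ := σ) (X := X) (T := T) (K := K) (K' := 3 / θ ^ 2)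
    (by linarith) (by linarith) (by linarith) hX0 hT1 hmeas
    (fun y => norm_Hf_line χ hθ0 (by linarith) y) hd hKb hX1
  have hper := perron (a := ea χ) (κ := κ) (X := X) (by linarith) hX0
    (ea_summable χ (by simp; linarith))
  rw [hper]
  have hcongr : (∫ y : ℝ, LSeries (ea χ) (κ + y * I) * kf X (κ + y * I)) =
      ∫ y : ℝ, Hf χ (κ + y * I) * kf X (κ + y * I) := by
    congr 1; ext y
    rw [LSeries_ea χ (by rw [hline]; linarith)]
  rw [hcongr, norm_mul, Complex.norm_real, Real.norm_of_nonneg (by positivity)]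
  have hpi2 : 1 / (2 * Real.pi) ≤ 1 := by
    rw [div_le_one (by positivity)]; linarith [Real.pi_gt_three]
  set E := Real.exp (-(c / 16 * u)) with hE
  have hEpos : 0 < E := Real.exp_pos _
  have hXX : X = Real.exp (u ^ 2) := by rw [← hLu, hLdef, Real.exp_log hX0]
  have hXκ : X ^ κ = X * E * T := by
    rw [Real.rpow_def_of_pos hX0, ← hLdef, hLu, hXX, hE, hT, ← Real.exp_add, ← Real.exp_add]
    congr 1
    rw [hκ, hθ, hη]; field_simp; ring
  have hXσ : X ^ σ * T ≤ X * E := by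
    rw [Real.rpow_def_of_pos hX0, ← hLdef, hLu, hXX, hE, hT, ← Real.exp_add, ← Real.exp_add]
    refine Real.exp_le_exp.mpr ?_
    have : u ^ 2 * σ = u ^ 2 - c * u / 2 := by
      rw [hσ, hη]; field_simp
    rw [this]
    have : 0 < c * u := by positivity
    linarith
  have hfin : 8 * X ^ κ * (3 / θ ^ 2) / T + 12 * X ^ κ * K / T ^ 2 + 4 * Real.pi * X ^ σ * K ≤
      C1 * X * (u ^ 2 * E) := by
    have hT0 : 0 < T := by linarith
    have e1 : 8 * X ^ κ * (3 / θ ^ 2) / T = 24 * 1024 / c ^ 2 * X * (u ^ 2 * E) := by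
      rw [hXκ, hθ, hη]; field_simp; ring
    have e2 : 12 * X ^ κ * K / T ^ 2 = 12 * K1 * X * (u ^ 2 * E) := by
      rw [hXκ, hK, hLu]; field_simp
    have e3 : 4 * Real.pi * X ^ σ * K ≤ 4 * Real.pi * K1 * X * (u ^ 2 * E) := by
      calc _ = 4 * Real.pi * K1 * u ^ 2 * (X ^ σ * T) := by rw [hK, hLu]; ring
        _ ≤ 4 * Real.pi * K1 * u ^ 2 * (X * E) := by gcongr
        _ = _ := by ring
    rw [e1, e2, hC1]
    linarith
  have hsq := sq_le_exp (c := c / 16) (u := u) (by positivity) hu0.le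
  calc _ ≤ 1 * (C1 * X * (u ^ 2 * E)) := by
        refine mul_le_mul hpi2 (hsh.trans hfin) (norm_nonneg _) zero_le_one
    _ ≤ 1 * (C1 * X * ((4 / (c / 16)) ^ 2 * Real.exp (-(c / 16 / 2 * u)))) := by gcongr
    _ = _ := by ring

end SW

namespace SW
open Complex Metric Set MeasureTheory Filter Topology DirichletCharacter

/-- von Mangoldt function restricted to a residue class. -/
noncomputable def FL {N : ℕ} (a : ZMod N) (n : ℕ) : ℝ :=
  if (n : ZMod N) = a then ArithmeticFunction.vonMangoldt n else 0

lemma FL_nonneg {N : ℕ} (a : ZMod N) (n : ℕ) : 0 ≤ FL a n := by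
  unfold FL; split_ifs
  · exact ArithmeticFunction.vonMangoldt_nonneg
  · exact le_rfl

lemma sum_Icc_lin (X : ℝ) (k : ℕ) (hX : X ≠ 0) :
    ∑ n ∈ Finset.Icc 1 k, (1 - (n : ℝ) / X) = k - k * (k + 1) / (2 * X) := by
  induction k with
  | zero => simp
  | succ k ih =>
    rw [Finset.sum_Icc_succ_top (by omega), ih]
    push_cast; field_simp; ring

lemma sum_lin_approx {X : ℝ} (hX : 0 < X) :
    |∑ n ∈ Finset.Icc 1 ⌊X⌋₊, (1 - (n : ℝ) / X) - X / 2| ≤ 1 := by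
  rw [sum_Icc_lin X _ hX.ne']
  set k : ℝ := (⌊X⌋₊ : ℝ) with hk
  have h1 : k ≤ X := Nat.floor_le hX.le
  have h2 : X < k + 1 := Nat.lt_floor_add_one X
  have h3 : 0 ≤ k := by positivity
  have e : k - k * (k + 1) / (2 * X) - X / 2 = -(k + (X - k) ^ 2) / (2 * X) := by
    field_simp; ring
  rw [e, abs_div, abs_neg, abs_of_nonneg (by positivity), abs_of_pos (by positivity),
    div_le_one (by positivity)]
  nlinarith

lemma orth {N : ℕ} [NeZero N] {a : ZMod N} (ha : IsUnit a) (X : ℝ) (k : ℕ) :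
    (N.totient : ℂ) * ((∑ n ∈ Finset.Icc 1 k, FL a n * (1 - n / X) : ℝ) : ℂ) -
      ((∑ n ∈ Finset.Icc 1 k, (1 - (n : ℝ) / X) : ℝ) : ℂ) =
    ∑ χ : DirichletCharacter ℂ N, χ a⁻¹ * ∑ n ∈ Finset.Icc 1 k, ea χ n * (1 - n / X) := by
  have h1 : ∀ n : ℕ, ∑ χ : DirichletCharacter ℂ N, χ a⁻¹ * ea χ n =
      N.totient * (FL a n : ℂ) - 1 := by
    intro n
    have ho := sum_char_inv_mul_char_eq ℂ ha (n : ZMod N)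
    have e1 : ∑ χ : DirichletCharacter ℂ N, χ a⁻¹ * ea χ n =
        (∑ χ : DirichletCharacter ℂ N, χ a⁻¹ * χ n) * (ArithmeticFunction.vonMangoldt n : ℂ) -
        ∑ χ : DirichletCharacter ℂ N, if χ = 1 then χ a⁻¹ else 0 := by
      rw [Finset.sum_mul, ← Finset.sum_sub_distrib]
      refine Finset.sum_congr rfl fun χ _ => ?_
      unfold ea
      split_ifs <;> ring
    have hu : IsUnit (a⁻¹ : ZMod N) := by
      rw [← ha.unit_spec, ZMod.inv_coe_unit]
      exact Units.isUnit _
    rw [e1, ho, Finset.sum_ite_eq' Finset.univ (1 : DirichletCharacter ℂ N), if_pos (Finset.mem_univ _), MulChar.one_apply hu, FL]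
    by_cases h : a = n
    · rw [if_pos h, if_pos h.symm]
    · rw [if_neg h, if_neg (Ne.symm h)]; simp
  simp only [Finset.mul_sum]
  rw [Finset.sum_comm]
  push_cast
  rw [Finset.mul_sum, ← Finset.sum_sub_distrib]
  refine Finset.sum_congr rfl fun n _ => ?_
  have := h1 n
  calc _ = (N.totient * (FL a n : ℂ) - 1) * (1 - n / X) := by ring
    _ = _ := by
      rw [← this, Finset.sum_mul]
      exact Finset.sum_congr rfl fun χ _ => by ring

lemma one_le_X_exp {X c : ℝ} (hX : 0 < X) (hL : 1 ≤ Real.log X) (hc : c ≤ 1) :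
    1 ≤ X * Real.exp (-(c * √(Real.log X))) := by
  have h1 : 1 ≤ √(Real.log X) := Real.one_le_sqrt.mpr hL
  have h2 : √(Real.log X) ^ 2 = Real.log X := Real.sq_sqrt (by linarith)
  nth_rw 1 [← Real.exp_log hX]
  rw [← Real.exp_add]
  refine Real.one_le_exp ?_
  nlinarith

lemma weighted {M B : ℝ} (hM : 1 ≤ M) (hB : 0 < B) : ∃ c : ℝ, 0 < c ∧ c ≤ 1 ∧ ∃ C : ℝ, 0 < C ∧
    ∀ X : ℝ, 0 < X → 1 ≤ Real.log X → ∀ (N : ℕ) [NeZero N], (N : ℝ) ≤ M * Real.log X ^ B →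
    ∀ a : ZMod N, IsUnit a →
      |∑ n ∈ Finset.Icc 1 ⌊X⌋₊, FL a n * (1 - n / X) - X / (2 * N.totient)| ≤
        C * X * Real.exp (-(c * √(Real.log X))) := by
  obtain ⟨c, hc, hc1, C, hC, H⟩ := char_sum hM hB
  refine ⟨c, hc, hc1, C + 1, by positivity, ?_⟩
  intro X hX hL N _ hN a ha
  set E := Real.exp (-(c * √(Real.log X))) with hE
  have hone := one_le_X_exp hX hL hc1
  rw [← hE] at hone
  set S := ∑ n ∈ Finset.Icc 1 ⌊X⌋₊, FL a n * (1 - n / X) with hS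
  set R := ∑ n ∈ Finset.Icc 1 ⌊X⌋₊, (1 - (n : ℝ) / X) with hR
  have hφ : 1 ≤ (N.totient : ℝ) := by exact_mod_cast Nat.totient_pos.mpr (NeZero.pos N)
  have hR1 : |R - X / 2| ≤ 1 := sum_lin_approx hX
  have h1 : |(N.totient : ℝ) * S - R| ≤ N.totient * (C * X * E) := by
    have ho := orth ha X ⌊X⌋₊
    rw [← hS, ← hR] at ho
    have e : (N.totient : ℂ) * (S : ℂ) - (R : ℂ) = (((N.totient : ℝ) * S - R : ℝ) : ℂ) := by
      push_cast; rfl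
    rw [e] at ho
    rw [← Real.norm_eq_abs, ← Complex.norm_real, ho]
    have hcard : (Finset.univ : Finset (DirichletCharacter ℂ N)).card = N.totient := by
      rw [Finset.card_univ, ← Nat.card_eq_fintype_card]
      exact card_eq_totient_of_hasEnoughRootsOfUnity ℂ N
    refine (norm_sum_le _ _).trans ?_
    rw [← hcard, ← nsmul_eq_mul]
    refine Finset.sum_le_card_nsmul _ _ _ fun χ _ => ?_
    rw [norm_mul]
    have := H X hX hL N hN χ
    have h3 := χ.norm_le_one (a⁻¹ : ZMod N)
    calc _ ≤ 1 * (C * X * E) := by gcongr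
      _ = _ := one_mul _
  have h2 : |(N.totient : ℝ) * S - X / 2| ≤ N.totient * ((C + 1) * X * E) := by
    have : |(N.totient : ℝ) * S - X / 2| ≤ |(N.totient : ℝ) * S - R| + |R - X / 2| := by
      exact abs_sub_le _ _ _
    nlinarith
  have e : S - X / (2 * N.totient) = ((N.totient : ℝ) * S - X / 2) / N.totient := by
    field_simp
  rw [e, abs_div, abs_of_pos (show (0:ℝ) < N.totient by linarith), div_le_iff₀ (by linarith)]
  linarith

lemma W_ge {N : ℕ} (a : ZMod N) {X : ℝ} (hX : 0 ≤ X) (k : ℕ) :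
    ∑ n ∈ Finset.Icc 1 k, FL a n * (X - n) ≤ ∑ n ∈ Finset.Icc 1 ⌊X⌋₊, FL a n * (X - n) := by
  rcases le_total k ⌊X⌋₊ with h | h
  · refine Finset.sum_le_sum_of_subset_of_nonneg (Finset.Icc_subset_Icc_right h) fun n hn _ => ?_
    have : (n : ℝ) ≤ X := (Nat.le_floor_iff hX).mp (Finset.mem_Icc.mp hn).2
    exact mul_nonneg (FL_nonneg a n) (by linarith)
  · have := Finset.sum_le_sum_of_subset_of_nonneg (f := fun n : ℕ => -(FL a n * (X - n)))
      (Finset.Icc_subset_Icc_right (a := 1) h) fun n hn hn2 => by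
        have : X < n := by
          by_contra! hh
          exact hn2 (Finset.mem_Icc.mpr ⟨(Finset.mem_Icc.mp hn).1, Nat.le_floor hh⟩)
        have := mul_nonneg (FL_nonneg a n) (show 0 ≤ n - X by linarith)
        linarith
    simp only [Finset.sum_neg_distrib] at this
    linarith

lemma psi_bound {M B : ℝ} (hM : 1 ≤ M) (hB : 0 < B) : ∃ c : ℝ, 0 < c ∧ c ≤ 1 / 4 ∧ ∃ C : ℝ, 0 < C ∧
    ∀ X : ℝ, 0 < X → 2 ≤ Real.log X → ∀ (N : ℕ) [NeZero N], (N : ℝ) ≤ M * Real.log X ^ B →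
    ∀ a : ZMod N, IsUnit a →
      |∑ n ∈ Finset.Icc 1 ⌊X⌋₊, FL a n - X / N.totient| ≤
        C * X * Real.exp (-(c * √(Real.log X))) := by
  obtain ⟨c, hc, hc1, C, hC, H⟩ := weighted (M := M * 2 ^ B) (B := B)
    (by have : (1 : ℝ) ≤ 2 ^ B := Real.one_le_rpow (by norm_num) hB.le
        nlinarith) hB
  refine ⟨c / 4, by positivity, by linarith, 16 * C + 1, by positivity, ?_⟩
  intro X hX hL N _ hN a ha
  set L := Real.log X with hLd
  set δ := Real.exp (-(c / 4 * √L)) with hδ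
  have hδ0 : 0 < δ := Real.exp_pos _
  have hδ1 : δ ≤ 1 := Real.exp_le_one_iff.mpr (by
    have := Real.sqrt_nonneg L
    have : 0 ≤ c / 4 * √L := by positivity
    linarith)
  have hφ : 1 ≤ (N.totient : ℝ) := by exact_mod_cast Nat.totient_pos.mpr (NeZero.pos N)
  set φ : ℝ := (N.totient : ℝ) with hφd
  set P := ∑ n ∈ Finset.Icc 1 ⌊X⌋₊, FL a n with hP
  set W : ℝ → ℝ := fun Y => ∑ n ∈ Finset.Icc 1 ⌊Y⌋₊, FL a n * (Y - n) with hW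
  have hWb : ∀ Y, X / 2 ≤ Y → Y ≤ 2 * X → |W Y - Y ^ 2 / (2 * φ)| ≤ 4 * C * X ^ 2 * δ ^ 2 := by
    intro Y h1 h2
    have hY : 0 < Y := by linarith
    have hlY : L / 2 ≤ Real.log Y := by
      have a1 := Real.log_le_log (by positivity) h1
      rw [Real.log_div (by positivity) (by norm_num)] at a1
      have := Real.log_two_lt_d9
      linarith
    have hNY : (N : ℝ) ≤ (M * 2 ^ B) * Real.log Y ^ B := by
      rw [mul_assoc, ← Real.mul_rpow (by norm_num) (by linarith)]
      refine hN.trans ?_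
      gcongr
      linarith
    have h3 := H Y hY (by linarith) N hNY a ha
    have e1 : W Y = Y * ∑ n ∈ Finset.Icc 1 ⌊Y⌋₊, FL a n * (1 - n / Y) := by
      rw [Finset.mul_sum]
      refine Finset.sum_congr rfl fun n _ => ?_
      field_simp
    have e2 : W Y - Y ^ 2 / (2 * φ) =
        Y * (∑ n ∈ Finset.Icc 1 ⌊Y⌋₊, FL a n * (1 - n / Y) - Y / (2 * φ)) := by
      rw [e1]; ring
    have hexp : Real.exp (-(c * √(Real.log Y))) ≤ δ ^ 2 := by
      rw [hδ, ← Real.exp_nat_mul]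
      refine Real.exp_le_exp.mpr ?_
      have : √L / 2 ≤ √(Real.log Y) := by
        refine Real.le_sqrt_of_sq_le ?_
        rw [div_pow, Real.sq_sqrt (by linarith)]; linarith
      push_cast
      nlinarith
    rw [e2, abs_mul, abs_of_pos hY]
    calc _ ≤ Y * (C * Y * Real.exp (-(c * √(Real.log Y)))) := by gcongr
      _ ≤ (2 * X) * (C * (2 * X) * δ ^ 2) := by gcongr
      _ = _ := by ring
  set h := δ * X / 2 with hh
  have hh0 : 0 < h := by positivity
  have hhX : h ≤ X / 2 := by rw [hh]; nlinarith
  have u1 : h * P ≤ W (X + h) - W X := by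
    have := W_ge a (X := X + h) (by linarith) ⌊X⌋₊
    have e : h * P = ∑ n ∈ Finset.Icc 1 ⌊X⌋₊, FL a n * (X + h - n) - W X := by
      rw [hP, hW, Finset.mul_sum, ← Finset.sum_sub_distrib]
      exact Finset.sum_congr rfl fun n _ => by ring
    rw [e]; linarith
  have u2 : W X - W (X - h) ≤ h * P := by
    have := W_ge a (X := X - h) (by linarith) ⌊X⌋₊
    have e : h * P = W X - ∑ n ∈ Finset.Icc 1 ⌊X⌋₊, FL a n * (X - h - n) := by
      rw [hP, hW, Finset.mul_sum, ← Finset.sum_sub_distrib]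
      exact Finset.sum_congr rfl fun n _ => by ring
    rw [e]; linarith
  have b1 := abs_le.mp (hWb X (by linarith) (by linarith))
  have b2 := abs_le.mp (hWb (X + h) (by linarith) (by linarith))
  have b3 := abs_le.mp (hWb (X - h) (by linarith) (by linarith))
  have e0 : 8 * C * X ^ 2 * δ ^ 2 = h * (16 * C * X * δ) := by rw [hh]; ring
  have e1 : (X + h) ^ 2 / (2 * φ) - X ^ 2 / (2 * φ) = h * (X / φ + h / (2 * φ)) := by
    field_simp; ring
  have e2 : X ^ 2 / (2 * φ) - (X - h) ^ 2 / (2 * φ) = h * (X / φ - h / (2 * φ)) := by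
    field_simp; ring
  have e3 : h / (2 * φ) ≤ X * δ := by
    rw [div_le_iff₀ (by linarith), hh]
    have : 0 < X * δ := by positivity
    nlinarith
  have v1 : P ≤ X / φ + h / (2 * φ) + 16 * C * X * δ := by
    refine le_of_mul_le_mul_left ?_ hh0
    rw [mul_add]
    linarith [b1.1, b2.2]
  have v2 : X / φ - h / (2 * φ) - 16 * C * X * δ ≤ P := by
    refine le_of_mul_le_mul_left ?_ hh0
    rw [mul_sub]
    linarith [b1.1, b3.2]
  rw [abs_le]
  constructor <;> nlinarith

end SW

namespace SW

/-- primes in a residue class, log-weighted -/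
noncomputable def TH {N : ℕ} (a : ZMod N) (X : ℝ) : ℝ :=
  ∑ n ∈ Finset.Icc 1 ⌊X⌋₊, if n.Prime ∧ (n : ZMod N) = a then Real.log n else 0

lemma TH_nonneg {N : ℕ} (a : ZMod N) (X : ℝ) : 0 ≤ TH a X :=
  Finset.sum_nonneg fun n _ => by
    split_ifs
    · exact Real.log_natCast_nonneg n
    · exact le_rfl

lemma TH_le {N : ℕ} (a : ZMod N) {X : ℝ} (hX : 1 ≤ X) : TH a X ≤ X * Real.log X := by
  have hl : 0 ≤ Real.log X := Real.log_nonneg hX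
  have : TH a X ≤ (Finset.Icc 1 ⌊X⌋₊).card • Real.log X := by
    refine Finset.sum_le_card_nsmul _ _ _ fun n hn => ?_
    have hn := Finset.mem_Icc.mp hn
    have hnX : (n : ℝ) ≤ X := (Nat.le_floor_iff (by linarith)).mp hn.2
    split_ifs
    · exact Real.log_le_log (by exact_mod_cast hn.1) hnX
    · exact hl
  refine this.trans ?_
  rw [nsmul_eq_mul]
  gcongr
  simpa using Nat.floor_le (show 0 ≤ X by linarith)

lemma psi_sub_TH {N : ℕ} (a : ZMod N) {X : ℝ} (hX : 1 ≤ X) :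
    |∑ n ∈ Finset.Icc 1 ⌊X⌋₊, FL a n - TH a X| ≤ 2 * √X * Real.log X := by
  have e : ∑ n ∈ Finset.Icc 1 ⌊X⌋₊, FL a n - TH a X =
      ∑ n ∈ Finset.Icc 1 ⌊X⌋₊, if ¬ n.Prime then FL a n else 0 := by
    rw [TH, ← Finset.sum_sub_distrib]
    refine Finset.sum_congr rfl fun n _ => ?_
    by_cases hp : n.Prime <;> by_cases ha : (n : ZMod N) = a <;>
      simp [FL, hp, ha]
    rw [ArithmeticFunction.vonMangoldt_apply_prime hp, sub_self]
  have h0 : 0 ≤ ∑ n ∈ Finset.Icc 1 ⌊X⌋₊, if ¬ n.Prime then FL a n else 0 :=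
    Finset.sum_nonneg fun n _ => by
      split_ifs
      · exact le_rfl
      · exact FL_nonneg a n
  rw [e, abs_of_nonneg h0]
  refine le_trans ?_ (Chebyshev.psi_sub_theta_le hX)
  rw [Chebyshev.psi_sub_theta_eq_sum_not_prime, Finset.sum_filter]
  have : Finset.Icc 1 ⌊X⌋₊ = Finset.Ioc 0 ⌊X⌋₊ := rfl
  rw [this]
  refine Finset.sum_le_sum fun n _ => ?_
  split_ifs
  · exact le_rfl
  · unfold FL; split_ifs
    · exact le_rfl
    · exact ArithmeticFunction.vonMangoldt_nonneg

lemma theta_bound {M B : ℝ} (hM : 1 ≤ M) (hB : 0 < B) : ∃ c : ℝ, 0 < c ∧ ∃ C : ℝ, 0 < C ∧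
    ∀ X : ℝ, 0 < X → 1 ≤ Real.log X → ∀ (N : ℕ) [NeZero N], (N : ℝ) ≤ M * Real.log X ^ B →
    ∀ a : ZMod N, IsUnit a →
      |TH a X - X / N.totient| ≤ C * X * Real.exp (-(c * √(Real.log X))) := by
  obtain ⟨c, hc, hc1, C, hC, H⟩ := psi_bound hM hB
  refine ⟨c, hc, C + 1000, by positivity, ?_⟩
  intro X hX hL N _ hN a ha
  set L := Real.log X with hLd
  set u := √L with hu
  have hu1 : 1 ≤ u := Real.one_le_sqrt.mpr hL
  have hLu : L = u ^ 2 := (Real.sq_sqrt (by linarith)).symm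
  have hX1 : 1 ≤ X := by
    rw [← Real.log_nonneg_iff hX]; linarith
  have hφ : 1 ≤ (N.totient : ℝ) := by exact_mod_cast Nat.totient_pos.mpr (NeZero.pos N)
  rcases le_or_gt 2 L with h2 | h2
  · have h3 := H X hX h2 N hN a ha
    rw [← hLd, ← hu] at h3
    have h4 := psi_sub_TH a hX1
    rw [← hLd] at h4
    have h5 : 2 * √X * L ≤ 1000 * X * Real.exp (-(c * u)) := by
      have hs := sq_le_exp (c := 1 / 2) (u := u) (by norm_num) (by linarith)
      have hsX : √X = X * Real.exp (-(u ^ 2 / 2)) := by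
        rw [← hLu]
        nth_rw 2 [← Real.exp_log hX]
        rw [← hLd, ← Real.exp_add, Real.sqrt_eq_rpow, Real.rpow_def_of_pos hX, ← hLd]
        congr 1; ring
      have e1 : Real.exp (-(u ^ 2 / 2)) ≤ Real.exp (-(1 / 2 * u)) :=
        Real.exp_le_exp.mpr (by nlinarith)
      have e2 : Real.exp (-(1 / 2 / 2 * u)) ≤ Real.exp (-(c * u)) :=
        Real.exp_le_exp.mpr (by nlinarith)
      calc 2 * √X * L = 2 * X * (u ^ 2 * Real.exp (-(u ^ 2 / 2))) := by rw [hsX, hLu]; ring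
        _ ≤ 2 * X * (u ^ 2 * Real.exp (-(1 / 2 * u))) := by gcongr
        _ ≤ 2 * X * ((4 / (1 / 2)) ^ 2 * Real.exp (-(1 / 2 / 2 * u))) := by gcongr
        _ ≤ 2 * X * ((4 / (1 / 2)) ^ 2 * Real.exp (-(c * u))) := by gcongr
        _ = 128 * X * Real.exp (-(c * u)) := by ring
        _ ≤ _ := by gcongr; norm_num
    have h6 := abs_sub_le (TH a X) (∑ n ∈ Finset.Icc 1 ⌊X⌋₊, FL a n) (X / N.totient)
    rw [abs_sub_comm] at h4
    calc _ ≤ _ := h6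
      _ ≤ 1000 * X * Real.exp (-(c * u)) + C * X * Real.exp (-(c * u)) := by linarith
      _ = _ := by ring
  · have t1 := TH_le a hX1
    have t0 := TH_nonneg a X
    have t2 : X / N.totient ≤ X := div_le_self hX.le hφ
    have t3 : 0 ≤ X / N.totient := by positivity
    have t4 : TH a X ≤ 2 * X := by rw [← hLd] at t1; nlinarith
    have hu2 : u ≤ 2 := by nlinarith
    have t5 : (1 / 2 : ℝ) ≤ Real.exp (-(c * u)) := by
      have := Real.add_one_le_exp (-(c * u))
      nlinarith
    have t6 : 2 * X ≤ (C + 1000) * X * Real.exp (-(c * u)) := by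
      calc 2 * X ≤ 1000 * X * (1 / 2) := by linarith
        _ ≤ (C + 1000) * X * Real.exp (-(c * u)) := by gcongr; linarith
    rw [abs_le]
    constructor <;> linarith

lemma thetaSum_eq {m : ℕ} {s : ℤ} {x : ℝ} {q : ℕ} {r z : ℤ} (hzr : z ≡ r [ZMOD (q : ℤ)])
    (hzs : z ≡ s [ZMOD (m : ℤ)]) :
    thetaSum m s x q r = TH (z : ZMod (Nat.lcm q m)) x := by
  unfold thetaSum TH
  have key : ∀ p : ℕ, ((p : ℤ) ≡ r [ZMOD (q : ℤ)] ∧ (p : ℤ) ≡ s [ZMOD (m : ℤ)]) ↔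
      (p : ZMod (Nat.lcm q m)) = (z : ZMod (Nat.lcm q m)) := by
    intro p
    have e1 : (p : ZMod (Nat.lcm q m)) = ((p : ℤ) : ZMod (Nat.lcm q m)) := by simp
    have e2 : (p : ℤ) ≡ z [ZMOD ((Nat.lcm q m : ℕ) : ℤ)] ↔
        ((p : ℤ) ≡ z [ZMOD (q : ℤ)] ∧ (p : ℤ) ≡ z [ZMOD (m : ℤ)]) := by
      rw [Int.modEq_iff_dvd, Int.natCast_dvd, Nat.lcm_dvd_iff,
        ← Int.natCast_dvd, ← Int.natCast_dvd, ← Int.modEq_iff_dvd, ← Int.modEq_iff_dvd]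
    rw [e1, ZMod.intCast_eq_intCast_iff, e2]
    exact ⟨fun h => ⟨h.1.trans hzr.symm, h.2.trans hzs.symm⟩,
      fun h => ⟨h.1.trans hzr, h.2.trans hzs⟩⟩
  simp only [key]
  rw [Finset.sum_filter, Finset.range_eq_Ico, Finset.sum_eq_sum_Ico_succ_bot (by omega)]
  simp only [Nat.not_prime_zero, false_and, if_false, zero_add]
  rfl

lemma lcm_eq (q m : ℕ) : q / Nat.gcd q m * m = Nat.lcm q m := by
  rw [Nat.lcm, Nat.div_mul_right_comm (Nat.gcd_dvd_left q m)]

lemma crt {m q : ℕ} {r s : ℤ} (h : r ≡ s [ZMOD (Nat.gcd q m : ℤ)]) :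
    ∃ z : ℤ, z ≡ r [ZMOD (q : ℤ)] ∧ z ≡ s [ZMOD (m : ℤ)] := by
  obtain ⟨k, hk⟩ := h.dvd
  have hb := Nat.gcd_eq_gcd_ab q m
  refine ⟨r + q * (Nat.gcdA q m) * k, ?_, ?_⟩
  · exact (Int.modEq_iff_dvd.mpr ⟨-(Nat.gcdA q m * k), by ring⟩)
  · refine (Int.modEq_iff_dvd.mpr ⟨Nat.gcdB q m * k, ?_⟩)
    rw [hb] at hk
    linear_combination hk

lemma coprime_of_modEq {z r : ℤ} {q : ℕ} (h : z ≡ r [ZMOD (q : ℤ)]) (hr : IsCoprime r (q : ℤ)) :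
    IsCoprime z (q : ℤ) := by
  obtain ⟨k, hk⟩ := h.dvd
  have : z = r + q * (-k) := by linear_combination -hk
  rw [this]
  exact IsCoprime.add_mul_left_left hr (-k)

end SW

/-- Siegel–Walfisz with the extra congruence mod `m`: for `q ≤ (log x)^B`, `gcd(r,q) = 1`,
`d = gcd(q,m)`, `q₀ = q/d`:
`ϑ_s(x;q,r) = δ·x/φ(q₀m) + O(x·exp(-C√(log x)))` where `δ = [r ≡ s (mod d)]`. -/
theorem siegel_walfisz_with_congruence (m : ℕ) (hm : 0 < m) (s : ℤ)
    (hs : IsCoprime s (m : ℤ)) (B : ℝ) (hB : 0 < B) :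
    ∃ C : ℝ, 0 < C ∧ ∃ C' : ℝ, 0 < C' ∧ ∀ x : ℝ, 2 ≤ x →
      ∀ q : ℕ, 0 < q → (q : ℝ) ≤ Real.log x ^ B →
      ∀ r : ℤ, IsCoprime r (q : ℤ) →
        |thetaSum m s x q r -
          (if r ≡ s [ZMOD (Nat.gcd q m : ℤ)] then
            x / (Nat.totient ((q / Nat.gcd q m) * m) : ℝ) else 0)|
        ≤ C' * x * Real.exp (-C * Real.log x ^ ((1 : ℝ) / 2)) := by
  have hM : (1 : ℝ) ≤ m := by exact_mod_cast hm
  obtain ⟨c, hc, C, hC, H⟩ := SW.theta_bound hM hB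
  refine ⟨c, hc, C, hC, ?_⟩
  intro x hx q hq hqx r hr
  have hx0 : 0 < x := by linarith
  split_ifs with hrs
  · have hlog0 : 0 ≤ Real.log x := Real.log_nonneg (by linarith)
    have hL : 1 ≤ Real.log x := by
      by_contra! hlt
      have h1 := Real.rpow_lt_one hlog0 hlt hB
      have h2 : (1 : ℝ) ≤ q := by exact_mod_cast hq
      linarith
    obtain ⟨z, hzr, hzs⟩ := SW.crt hrs
    rw [SW.thetaSum_eq hzr hzs, SW.lcm_eq]
    have : NeZero (Nat.lcm q m) := ⟨Nat.lcm_ne_zero hq.ne' hm.ne'⟩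
    have hN : ((Nat.lcm q m : ℕ) : ℝ) ≤ m * Real.log x ^ B := by
      have h1 : Nat.lcm q m ≤ m * q := by
        rw [mul_comm]; exact Nat.le_of_dvd (by positivity) (Nat.lcm_dvd_mul q m)
      calc ((Nat.lcm q m : ℕ) : ℝ) ≤ ((m * q : ℕ) : ℝ) := by exact_mod_cast h1
        _ = m * (q : ℝ) := by push_cast; ring
        _ ≤ _ := by gcongr
    have hu : IsUnit ((z : ℤ) : ZMod (Nat.lcm q m)) := by
      rw [ZMod.coe_int_isUnit_iff_isCoprime]
      have h1 := SW.coprime_of_modEq hzr hr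
      have h2 := SW.coprime_of_modEq hzs hs
      refine ((h1.mul_right h2).of_isCoprime_of_dvd_right ?_).symm
      exact_mod_cast Nat.lcm_dvd_mul q m
    have := H x hx0 hL (Nat.lcm q m) hN _ hu
    rw [Real.sqrt_eq_rpow] at this
    rwa [neg_mul]
  · have h0 : thetaSum m s x q r = 0 := by
      unfold thetaSum
      rw [Finset.filter_false_of_mem, Finset.sum_empty]
      rintro p _ ⟨_, h1, h2⟩
      refine hrs ?_
      have g1 : ((Nat.gcd q m : ℕ) : ℤ) ∣ (q : ℤ) := by exact_mod_cast Nat.gcd_dvd_left q m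
      have g2 : ((Nat.gcd q m : ℕ) : ℤ) ∣ (m : ℤ) := by exact_mod_cast Nat.gcd_dvd_right q m
      exact (h1.of_dvd g1).symm.trans (h2.of_dvd g2)
    rw [h0, sub_zero, abs_zero]
    positivity
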